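/- arXiv:1305.4719 — 3 statements merged into one kernel-verified Lean document; each statement's English description precedes it below -/
import Mathlib

section
/- Step-1 limit in the proof of Theorem 3.1 (display (ConclStep1)): set ϑ := −C·Γ(−Y)·(M^Y + (G+1)^Y) and d₃₂ := −(1/2)·E[(Z⁺+Ũ)²·1_{Z⁺+Ũ≤0}] − ∫₀^∞ w·(P(Z⁺+Ũ ≥ w) − C·M^Y/(Y·w^Y) − C·(G+1)^Y/(Y·w^Y)) dw. Then lim_{t→0⁺} t^{1−2/Y}·( t^{−1}·E[1 − exp(−t^{1/Y}·(Ũ + (Z+γ̃_t)⁺)) − t^{1/Y}·(Ũ + (Z+γ̃_t)⁺)] − ϑ ) = d₃₂. -/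
open MeasureTheory ProbabilityTheory Filter Topology Asymptotics Set

/-- Gamma integral for complex rate. -/
lemma gamma_int_complex {a : ℝ} (ha : 0 < a) {r : ℂ} (hr : 0 < r.re) :
    ∫ x in Ioi (0:ℝ), Complex.exp (-(r * x)) * ((x ^ (a - 1) : ℝ) : ℂ)
      = (Real.Gamma a : ℂ) * r ^ (-(a:ℂ)) := by
  let μ : Measure ℝ := (volume.restrict (Ioi (0:ℝ))).withDensity
    (fun x => ENNReal.ofReal (x ^ (a - 1)))
  have hmeas : Measurable (fun x : ℝ => ENNReal.ofReal (x ^ (a - 1))) := by fun_prop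
  have hcm : ∀ z : ℂ, complexMGF id μ z
      = ∫ x in Ioi (0:ℝ), Complex.exp (z * x) * ((x ^ (a - 1) : ℝ) : ℂ) := by
    intro z
    rw [complexMGF, integral_withDensity_eq_integral_toReal_smul hmeas (by simp)]
    refine setIntegral_congr_fun measurableSet_Ioi fun x hx => ?_
    have hx' : (0:ℝ) < x := hx
    simp only [id]
    rw [ENNReal.toReal_ofReal (by positivity), Complex.real_smul, mul_comm]
  have hmem : ∀ t : ℝ, t < 0 → t ∈ integrableExpSet (id : ℝ → ℝ) μ := by
    intro t ht
    show Integrable _ _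
    rw [integrable_withDensity_iff_integrable_smul₀' hmeas.aemeasurable (by simp)]
    have h := Real.integral_rpow_mul_exp_neg_mul_Ioi ha (r := -t) (by linarith)
    have hi : IntegrableOn (fun x : ℝ => x ^ (a - 1) * Real.exp (-(-t * x))) (Ioi 0) := by
      by_contra hc
      rw [integral_undef hc] at h
      have : 0 < (1 / -t) ^ a * Real.Gamma a := by
        have := Real.Gamma_pos_of_pos ha
        have : 0 < 1 / -t := by apply one_div_pos.2; linarith
        positivity
      linarith
    refine hi.congr ?_
    filter_upwards [self_mem_ae_restrict measurableSet_Ioi] with x hx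
    have hx' : (0:ℝ) < x := hx
    rw [ENNReal.toReal_ofReal (by positivity)]
    simp
  have hIntg : ∀ z : ℂ, 0 < z.re → (-z).re ∈ interior (integrableExpSet (id : ℝ → ℝ) μ) := by
    intro z hz
    apply interior_mono (s := Iio 0) (fun t ht => hmem t ht)
    rw [interior_Iio]
    simpa using hz
  have hopen : IsOpen {z : ℂ | 0 < z.re} := isOpen_lt continuous_const Complex.continuous_re
  have hconn : IsPreconnected {z : ℂ | 0 < z.re} := (convex_halfSpace_re_gt 0).isPreconnected
  have hf : AnalyticOnNhd ℂ (fun z => complexMGF id μ (-z)) {z : ℂ | 0 < z.re} := by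
    apply DifferentiableOn.analyticOnNhd _ hopen
    intro z hz
    have h1 := (hasDerivAt_complexMGF (hIntg z hz)).differentiableAt
    have h2 : DifferentiableAt ℂ (fun z => complexMGF id μ (-z)) z :=
      DifferentiableAt.comp (g := complexMGF id μ) (f := fun z => -z) z h1 differentiableAt_id.neg
    exact h2.differentiableWithinAt
  have hg : AnalyticOnNhd ℂ (fun z : ℂ => (Real.Gamma a : ℂ) * z ^ (-(a:ℂ))) {z : ℂ | 0 < z.re} := by
    apply DifferentiableOn.analyticOnNhd _ hopen
    intro z hz
    refine DifferentiableAt.differentiableWithinAt ?_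
    refine DifferentiableAt.const_mul ?_ _
    exact DifferentiableAt.cpow_const differentiableAt_id (Or.inl hz)
  have hreal : ∀ t : ℝ, 0 < t → complexMGF id μ (-(t:ℂ)) = (Real.Gamma a : ℂ) * (t:ℂ) ^ (-(a:ℂ)) := by
    intro t ht
    rw [hcm]
    have h := Real.integral_rpow_mul_exp_neg_mul_Ioi ha ht
    have h2 : (t:ℂ) ^ (-(a:ℂ)) = ((t ^ (-a) : ℝ) : ℂ) := by
      rw [Complex.ofReal_cpow ht.le]; simp
    rw [h2]
    have h3 : (1 / t) ^ a * Real.Gamma a = Real.Gamma a * t ^ (-a) := by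
      rw [one_div, Real.inv_rpow ht.le, Real.rpow_neg ht.le, mul_comm]
    rw [h3] at h
    rw [← Complex.ofReal_mul, ← h, ← integral_complex_ofReal]
    congr 1
    ext x
    push_cast
    rw [mul_comm]
    ring_nf
  have hfreq : ∃ᶠ z in 𝓝[≠] (1:ℂ), complexMGF id μ (-z) = (Real.Gamma a : ℂ) * z ^ (-(a:ℂ)) := by
    have ht : Tendsto (fun n : ℕ => (((1:ℝ) + 1 / ((n:ℝ) + 1) : ℝ) : ℂ)) atTop (𝓝[≠] (1:ℂ)) := by
      rw [tendsto_nhdsWithin_iff]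
      constructor
      · have h1 : Tendsto (fun n : ℕ => ((1:ℝ) + 1 / ((n:ℝ) + 1))) atTop (𝓝 (1 + 0)) :=
          tendsto_const_nhds.add tendsto_one_div_add_atTop_nhds_zero_nat
        have h2 := (Complex.continuous_ofReal.tendsto _).comp h1
        simpa [Function.comp_def] using h2
      · filter_upwards with n
        have : (0:ℝ) < 1 / ((n:ℝ) + 1) := by positivity
        simp only [mem_compl_iff, mem_singleton_iff]
        intro hc
        have : (1:ℝ) + 1 / ((n:ℝ) + 1) = 1 := by exact_mod_cast hc
        linarith
    refine ht.frequently ?_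
    refine Frequently.of_forall fun n => hreal _ (by positivity)
  have := hf.eqOn_of_preconnected_of_frequently_eq hg hconn (show (1:ℂ) ∈ {z : ℂ | 0 < z.re} by simp)
    hfreq
  have h := this hr
  simp only at h
  rw [← h, hcm]
  simp only [neg_mul]


lemma integrableOn_of_pow_bounds {E : Type*} [NormedAddCommGroup E] {f : ℝ → E}
    (hf : AEStronglyMeasurable f (volume.restrict (Ioi (0:ℝ)))) {A B p q c : ℝ} (hc : 0 < c)
    (hp : -1 < p) (hq : q < -1)
    (h1 : ∀ x, 0 < x → x ≤ c → ‖f x‖ ≤ A * x ^ p)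
    (h2 : ∀ x, c < x → ‖f x‖ ≤ B * x ^ q) : IntegrableOn f (Ioi 0) := by
  rw [← Ioc_union_Ioi_eq_Ioi hc.le]
  refine IntegrableOn.union ?_ ?_
  · have hi : IntegrableOn (fun x : ℝ => A * x ^ p) (Ioc 0 c) := by
      have := (intervalIntegral.intervalIntegrable_rpow' (a := 0) (b := c) hp).const_mul A
      rwa [intervalIntegrable_iff_integrableOn_Ioc_of_le hc.le] at this
    refine Integrable.mono' hi (hf.mono_measure (Measure.restrict_mono Ioc_subset_Ioi_self le_rfl)) ?_
    filter_upwards [self_mem_ae_restrict measurableSet_Ioc] with x hx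
    exact h1 x hx.1 hx.2
  · have hi : IntegrableOn (fun x : ℝ => B * x ^ q) (Ioi c) :=
      (integrableOn_Ioi_rpow_of_lt hq hc).const_mul B
    refine Integrable.mono' hi (hf.mono_measure (Measure.restrict_mono (Ioi_subset_Ioi hc.le) le_rfl)) ?_
    filter_upwards [self_mem_ae_restrict measurableSet_Ioi] with x hx
    exact h2 x hx

lemma norm_cexp_sub_one_le {z : ℂ} (hz : z.re ≤ 0) : ‖Complex.exp z - 1‖ ≤ ‖z‖ := by
  have h := Convex.norm_image_sub_le_of_norm_hasDerivWithin_le (𝕜 := ℂ) (f := Complex.exp)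
    (f' := Complex.exp) (s := {w : ℂ | w.re ≤ 0}) (C := 1) (x := 0) (y := z)
    (fun x _ => (Complex.hasDerivAt_exp x).hasDerivWithinAt)
    (fun x hx => by
      rw [Complex.norm_exp]
      exact Real.exp_le_one_iff.2 hx) (convex_halfSpace_re_le 0) (by simp) hz
  simpa using h

lemma norm_cexp_sub_one_sub_le {z : ℂ} (hz : z.re ≤ 0) : ‖Complex.exp z - 1 - z‖ ≤ ‖z‖ ^ 2 := by
  have h := Convex.norm_image_sub_le_of_norm_hasDerivWithin_le (𝕜 := ℂ)
    (f := fun w => Complex.exp w - 1 - w)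
    (f' := fun w => Complex.exp w - 1) (s := {w : ℂ | w.re ≤ 0} ∩ Metric.closedBall 0 ‖z‖)
    (C := ‖z‖) (x := 0) (y := z)
    (fun x _ => (((Complex.hasDerivAt_exp x).sub_const 1).sub (hasDerivAt_id x)).hasDerivWithinAt)
    (fun x hx => (norm_cexp_sub_one_le hx.1).trans (by simpa using hx.2))
    ((convex_halfSpace_re_le 0).inter (convex_closedBall 0 _)) (by simp) ⟨hz, by simp⟩
  simpa [sq] using h

lemma norm_cexp_sub_one_le_two {z : ℂ} (hz : z.re ≤ 0) : ‖Complex.exp z - 1‖ ≤ 2 := by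
  refine (norm_sub_le _ _).trans ?_
  rw [Complex.norm_exp]
  have := Real.exp_le_one_iff.2 hz
  simp; linarith

lemma norm_cexp_sub_one_sub_le_two {z : ℂ} (hz : z.re ≤ 0) :
    ‖Complex.exp z - 1 - z‖ ≤ 2 * ‖z‖ := by
  refine (norm_sub_le _ _).trans ?_
  have := norm_cexp_sub_one_le hz
  linarith


lemma integrableOn_J {Y : ℝ} (hY : Y ∈ Ioo (1:ℝ) 2) {r : ℂ} (hr : 0 ≤ r.re) :
    IntegrableOn (fun x : ℝ => (Complex.exp (-(r * x)) - 1) * ((x ^ (-Y) : ℝ) : ℂ)) (Ioi 0) := by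
  obtain ⟨h1, h2⟩ := hY
  refine integrableOn_of_pow_bounds (A := ‖r‖) (B := 2) (p := 1 - Y) (q := -Y) (c := 1)
    ?_ one_pos (by linarith) (by linarith) ?_ ?_
  · exact Measurable.aestronglyMeasurable (by fun_prop)
  · intro x hx _
    have hre : (-(r * x)).re ≤ 0 := by simp; positivity
    rw [norm_mul, Complex.norm_real, Real.norm_of_nonneg (by positivity)]
    have := norm_cexp_sub_one_le hre
    rw [norm_neg, norm_mul, Complex.norm_real, Real.norm_of_nonneg hx.le] at this
    calc _ ≤ ‖r‖ * x * x ^ (-Y) := by gcongr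
      _ = _ := by rw [sub_eq_add_neg, Real.rpow_add hx, Real.rpow_one]; ring
  · intro x hx
    have hx0 : 0 < x := by linarith
    have hre : (-(r * x)).re ≤ 0 := by simp; positivity
    rw [norm_mul, Complex.norm_real, Real.norm_of_nonneg (by positivity)]
    have := norm_cexp_sub_one_le_two hre
    gcongr

lemma integrableOn_I {Y : ℝ} (hY : Y ∈ Ioo (1:ℝ) 2) {r : ℂ} (hr : 0 ≤ r.re) :
    IntegrableOn (fun x : ℝ => (Complex.exp (-(r * x)) - 1 + r * x) * ((x ^ (-Y-1) : ℝ) : ℂ))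
      (Ioi 0) := by
  obtain ⟨h1, h2⟩ := hY
  refine integrableOn_of_pow_bounds (A := ‖r‖^2) (B := 2 * ‖r‖) (p := 1 - Y) (q := -Y) (c := 1)
    ?_ one_pos (by linarith) (by linarith) ?_ ?_
  · exact Measurable.aestronglyMeasurable (by fun_prop)
  · intro x hx _
    have hre : (-(r * x)).re ≤ 0 := by simp; positivity
    rw [norm_mul, Complex.norm_real, Real.norm_of_nonneg (by positivity)]
    have := norm_cexp_sub_one_sub_le hre
    rw [norm_neg, norm_mul, Complex.norm_real, Real.norm_of_nonneg hx.le, sub_neg_eq_add] at this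
    calc _ ≤ (‖r‖ * x)^2 * x ^ (-Y-1) := by gcongr
      _ = _ := by
        rw [show 1 - Y = 2 + (-Y - 1) by ring, Real.rpow_add hx (2:ℝ), Real.rpow_two]; ring
  · intro x hx
    have hx0 : 0 < x := by linarith
    have hre : (-(r * x)).re ≤ 0 := by simp; positivity
    rw [norm_mul, Complex.norm_real, Real.norm_of_nonneg (by positivity)]
    have := norm_cexp_sub_one_sub_le_two hre
    rw [norm_neg, norm_mul, Complex.norm_real, Real.norm_of_nonneg hx0.le, sub_neg_eq_add] at this
    calc _ ≤ (2 * (‖r‖ * x)) * x ^ (-Y-1) := by gcongr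
      _ = _ := by
        rw [show - Y = 1 + (-Y - 1) by ring, Real.rpow_add hx0 (1:ℝ), Real.rpow_one]; ring_nf

lemma integral_J {Y : ℝ} (hY : Y ∈ Ioo (1:ℝ) 2) {r : ℂ} (hr : 0 < r.re) :
    ∫ x in Ioi (0:ℝ), (Complex.exp (-(r * x)) - 1) * ((x ^ (-Y) : ℝ) : ℂ)
      = (Real.Gamma (1 - Y) : ℂ) * r ^ ((Y - 1 : ℝ) : ℂ) := by
  have hJ := integrableOn_J hY hr.le
  obtain ⟨h1, h2⟩ := hY
  have hr0 : r ≠ 0 := by rintro rfl; simp at hr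
  have hG := gamma_int_complex (a := 2 - Y) (by linarith) hr
  have hIntg : IntegrableOn (fun x : ℝ => Complex.exp (-(r * x)) * ((x ^ (2 - Y - 1) : ℝ) : ℂ))
      (Ioi 0) := by
    by_contra hc
    rw [integral_undef hc] at hG
    have := Real.Gamma_pos_of_pos (show 0 < 2 - Y by linarith)
    have h3 : r ^ (-((2 - Y : ℝ):ℂ)) ≠ 0 := by
      rw [Ne, Complex.cpow_eq_zero_iff]; tauto
    have h4 : ((Real.Gamma (2 - Y) : ℝ) : ℂ) ≠ 0 := by exact_mod_cast this.ne'
    exact mul_ne_zero h4 h3 hG.symm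
  have hY1 : (1 - Y : ℝ) ≠ 0 := by linarith
  have hY1c : ((1 - Y : ℝ) : ℂ) ≠ 0 := by exact_mod_cast hY1
  have key := integral_Ioi_mul_deriv_eq_deriv_mul (a := 0)
    (u := fun x : ℝ => Complex.exp (-(r * x)) - 1)
    (u' := fun x : ℝ => Complex.exp (-(r * x)) * (-r))
    (v := fun x : ℝ => ((x ^ (1 - Y) / (1 - Y) : ℝ) : ℂ))
    (v' := fun x : ℝ => ((x ^ (-Y) : ℝ) : ℂ)) (a' := 0) (b' := 0)
    ?_ ?_ hJ ?_ ?_ ?_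
  · rw [key]
    have e1 : ∀ x : ℝ, Complex.exp (-(r * x)) * (-r) * ((x ^ (1 - Y) / (1 - Y) : ℝ) : ℂ)
        = (-r / ((1 - Y : ℝ) : ℂ)) * (Complex.exp (-(r * x)) * ((x ^ (2 - Y - 1) : ℝ) : ℂ)) := by
      intro x
      rw [show 2 - Y - 1 = 1 - Y by ring, Complex.ofReal_div]
      field_simp
    simp_rw [e1]
    rw [integral_const_mul, hG]
    have e2 : Real.Gamma (2 - Y) = (1 - Y) * Real.Gamma (1 - Y) := by
      rw [← Real.Gamma_add_one hY1]; ring_nf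
    have e3 : r ^ ((Y - 1 : ℝ) : ℂ) = r * r ^ (-((2 - Y : ℝ):ℂ)) := by
      nth_rewrite 2 [← Complex.cpow_one r]
      rw [← Complex.cpow_add _ _ hr0]
      congr 1; push_cast; ring
    rw [e2, e3, Complex.ofReal_mul]
    field_simp
    ring
  · intro x _
    have h : HasDerivAt (fun x : ℝ => -(r * (x:ℂ))) (-r) x := by
      have := ((hasDerivAt_id x).ofReal_comp.const_mul r).fun_neg
      simp only [id, Complex.ofReal_one, mul_one] at this
      exact this
    exact (h.cexp).sub_const 1
  · intro x hx
    have hx' : (0:ℝ) < x := hx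
    have := (Real.hasDerivAt_rpow_const (x := x) (p := 1 - Y) (Or.inl hx'.ne')).div_const (1 - Y)
    rw [mul_div_cancel_left₀ _ hY1, show 1 - Y - 1 = -Y by ring] at this
    exact this.ofReal_comp
  · refine (hIntg.const_mul (-r / ((1 - Y : ℝ) : ℂ))).congr ?_
    filter_upwards with x
    simp only [Pi.mul_apply]
    rw [show 2 - Y - 1 = 1 - Y by ring, Complex.ofReal_div]
    field_simp
  · have hb : Tendsto (fun x : ℝ => ‖r‖ / |1 - Y| * x ^ (2 - Y)) (𝓝[>] 0) (𝓝 0) := by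
      have : Tendsto (fun x : ℝ => ‖r‖ / |1 - Y| * x ^ (2 - Y)) (𝓝 0) (𝓝 (‖r‖ / |1 - Y| * (0:ℝ) ^ (2 - Y))) :=
        ((Real.continuousAt_rpow_const 0 (2 - Y) (Or.inr (by linarith))).tendsto).const_mul _
      rw [Real.zero_rpow (by linarith), mul_zero] at this
      exact this.mono_left nhdsWithin_le_nhds
    refine squeeze_zero_norm' ?_ hb
    filter_upwards [self_mem_nhdsWithin] with x hx
    have hx' : (0:ℝ) < x := hx
    have hre : (-(r * x)).re ≤ 0 := by simp; positivity
    simp only [Pi.mul_apply]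
    rw [norm_mul, Complex.norm_real, norm_div, Real.norm_of_nonneg (by positivity : 0 ≤ x ^ (1 - Y)),
      Real.norm_eq_abs]
    have := norm_cexp_sub_one_le hre
    rw [norm_neg, norm_mul, Complex.norm_real, Real.norm_of_nonneg hx'.le] at this
    calc _ ≤ (‖r‖ * x) * (x ^ (1 - Y) / |1 - Y|) := by gcongr
      _ = _ := by rw [show 2 - Y = 1 + (1 - Y) by ring, Real.rpow_add hx' 1 , Real.rpow_one]; ring
  · have hb : Tendsto (fun x : ℝ => 2 / |1 - Y| * x ^ (-(Y - 1))) atTop (𝓝 0) := by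
      have := (tendsto_rpow_neg_atTop (show 0 < Y - 1 by linarith)).const_mul (2 / |1 - Y|)
      simpa using this
    refine squeeze_zero_norm' ?_ hb
    filter_upwards [eventually_gt_atTop 0] with x hx'
    have hre : (-(r * x)).re ≤ 0 := by simp; positivity
    simp only [Pi.mul_apply]
    rw [norm_mul, Complex.norm_real, norm_div, Real.norm_of_nonneg (by positivity : 0 ≤ x ^ (1 - Y)),
      Real.norm_eq_abs]
    have := norm_cexp_sub_one_le_two hre
    calc _ ≤ 2 * (x ^ (1 - Y) / |1 - Y|) := by gcongr
      _ = _ := by rw [neg_sub]; ring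

lemma integral_I_pos {Y : ℝ} (hY : Y ∈ Ioo (1:ℝ) 2) {r : ℂ} (hr : 0 < r.re) :
    ∫ x in Ioi (0:ℝ), (Complex.exp (-(r * x)) - 1 + r * x) * ((x ^ (-Y-1) : ℝ) : ℂ)
      = (Real.Gamma (- Y) : ℂ) * r ^ (Y : ℂ) := by
  have hJ := integrableOn_J hY hr.le
  have hJv := integral_J hY hr
  have hI := integrableOn_I hY hr.le
  obtain ⟨h1, h2⟩ := hY
  have hr0 : r ≠ 0 := by rintro rfl; simp at hr
  have hY1 : (-Y : ℝ) ≠ 0 := by linarith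
  have hY1c : ((-Y : ℝ) : ℂ) ≠ 0 := by exact_mod_cast hY1
  have key := integral_Ioi_mul_deriv_eq_deriv_mul (a := 0)
    (u := fun x : ℝ => Complex.exp (-(r * x)) - 1 + r * x)
    (u' := fun x : ℝ => Complex.exp (-(r * x)) * (-r) + r)
    (v := fun x : ℝ => ((x ^ (- Y) / (- Y) : ℝ) : ℂ))
    (v' := fun x : ℝ => ((x ^ (-Y - 1) : ℝ) : ℂ)) (a' := 0) (b' := 0)
    ?_ ?_ hI ?_ ?_ ?_
  · rw [key]
    have e1 : ∀ x : ℝ, (Complex.exp (-(r * x)) * (-r) + r) * ((x ^ (- Y) / (- Y) : ℝ) : ℂ)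
        = (-r / ((- Y : ℝ) : ℂ)) * ((Complex.exp (-(r * x)) - 1) * ((x ^ (- Y) : ℝ) : ℂ)) := by
      intro x
      rw [Complex.ofReal_div]
      field_simp
      ring
    simp_rw [e1]
    rw [integral_const_mul, hJv]
    have e2 : Real.Gamma (1 - Y) = (- Y) * Real.Gamma (- Y) := by
      rw [← Real.Gamma_add_one hY1]; ring_nf
    have e3 : r ^ (Y : ℂ) = r * r ^ ((Y - 1 : ℝ):ℂ) := by
      nth_rewrite 2 [← Complex.cpow_one r]
      rw [← Complex.cpow_add _ _ hr0]
      congr 1; push_cast; ring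
    rw [e2, e3, Complex.ofReal_mul]
    field_simp
    ring
  · intro x _
    have h : HasDerivAt (fun x : ℝ => -(r * (x:ℂ))) (-r) x := by
      have := ((hasDerivAt_id x).ofReal_comp.const_mul r).fun_neg
      simp only [id, Complex.ofReal_one, mul_one] at this
      exact this
    have h' : HasDerivAt (fun x : ℝ => (r * (x:ℂ))) (r) x := by
      have := ((hasDerivAt_id x).ofReal_comp.const_mul r)
      simpa using this
    exact ((h.cexp).sub_const 1).add h'
  · intro x hx
    have hx' : (0:ℝ) < x := hx
    have := (Real.hasDerivAt_rpow_const (x := x) (p := - Y) (Or.inl hx'.ne')).div_const (- Y)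
    rw [mul_div_cancel_left₀ _ hY1] at this
    exact this.ofReal_comp
  · refine (hJ.const_mul (-r / ((- Y : ℝ) : ℂ))).congr ?_
    filter_upwards with x
    simp only [Pi.mul_apply]
    rw [Complex.ofReal_div]
    field_simp
    ring
  · have hb : Tendsto (fun x : ℝ => ‖r‖^2 / |- Y| * x ^ (2 - Y)) (𝓝[>] 0) (𝓝 0) := by
      have : Tendsto (fun x : ℝ => ‖r‖^2 / |- Y| * x ^ (2 - Y)) (𝓝 0) (𝓝 (‖r‖^2 / |- Y| * (0:ℝ) ^ (2 - Y))) :=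
        ((Real.continuousAt_rpow_const 0 (2 - Y) (Or.inr (by linarith))).tendsto).const_mul _
      rw [Real.zero_rpow (by linarith), mul_zero] at this
      exact this.mono_left nhdsWithin_le_nhds
    refine squeeze_zero_norm' ?_ hb
    filter_upwards [self_mem_nhdsWithin] with x hx
    have hx' : (0:ℝ) < x := hx
    have hre : (-(r * x)).re ≤ 0 := by simp; positivity
    simp only [Pi.mul_apply]
    rw [norm_mul, Complex.norm_real, norm_div, Real.norm_of_nonneg (by positivity : 0 ≤ x ^ (- Y)),
      Real.norm_eq_abs]
    have := norm_cexp_sub_one_sub_le hre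
    rw [norm_neg, norm_mul, Complex.norm_real, Real.norm_of_nonneg hx'.le, sub_neg_eq_add] at this
    calc _ ≤ (‖r‖ * x)^2 * (x ^ (- Y) / |- Y|) := by gcongr
      _ = _ := by rw [show 2 - Y = 2 + (- Y) by ring, Real.rpow_add hx' 2 , Real.rpow_two]; ring
  · have hb : Tendsto (fun x : ℝ => (2 * ‖r‖) / |- Y| * x ^ (-(Y - 1))) atTop (𝓝 0) := by
      have := (tendsto_rpow_neg_atTop (show 0 < Y - 1 by linarith)).const_mul ((2 * ‖r‖) / |- Y|)
      simpa using this
    refine squeeze_zero_norm' ?_ hb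
    filter_upwards [eventually_gt_atTop 0] with x hx'
    have hre : (-(r * x)).re ≤ 0 := by simp; positivity
    simp only [Pi.mul_apply]
    rw [norm_mul, Complex.norm_real, norm_div, Real.norm_of_nonneg (by positivity : 0 ≤ x ^ (- Y)),
      Real.norm_eq_abs]
    have := norm_cexp_sub_one_sub_le_two hre
    rw [norm_neg, norm_mul, Complex.norm_real, Real.norm_of_nonneg hx'.le, sub_neg_eq_add] at this
    calc _ ≤ (2 * (‖r‖ * x)) * (x ^ (- Y) / |- Y|) := by gcongr
      _ = _ := by rw [show -(Y-1) = 1 + (- Y) by ring, Real.rpow_add hx' 1 , Real.rpow_one]; ring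


lemma integrableOn_bnd {Y : ℝ} (hY : Y ∈ Ioo (1:ℝ) 2) {R : ℝ} (hR : 0 ≤ R) :
    IntegrableOn (fun x : ℝ => min ((R * x)^2) (2 * (R * x)) * x ^ (-Y-1)) (Ioi 0) := by
  obtain ⟨h1, h2⟩ := hY
  refine integrableOn_of_pow_bounds (A := R^2) (B := 2 * R) (p := 1 - Y) (q := -Y) (c := 1)
    ?_ one_pos (by linarith) (by linarith) ?_ ?_
  · exact Measurable.aestronglyMeasurable (by fun_prop)
  · intro x hx _
    rw [Real.norm_of_nonneg (by positivity)]
    calc _ ≤ (R * x)^2 * x ^ (-Y-1) := by gcongr; exact min_le_left _ _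
      _ = _ := by
        rw [show 1 - Y = 2 + (-Y - 1) by ring, Real.rpow_add hx (2:ℝ), Real.rpow_two]; ring
  · intro x hx
    have hx0 : 0 < x := by linarith
    rw [Real.norm_of_nonneg (by positivity)]
    calc _ ≤ (2 * (R * x)) * x ^ (-Y-1) := by gcongr; exact min_le_right _ _
      _ = _ := by
        rw [show - Y = 1 + (-Y - 1) by ring, Real.rpow_add hx0 (1:ℝ), Real.rpow_one]; ring_nf

lemma norm_I_le_bnd {Y : ℝ} {r : ℂ} (hr : 0 ≤ r.re) {R : ℝ} (hR : ‖r‖ ≤ R) {x : ℝ} (hx : 0 < x) :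
    ‖(Complex.exp (-(r * x)) - 1 + r * x) * ((x ^ (-Y-1) : ℝ) : ℂ)‖ ≤
      min ((R * x)^2) (2 * (R * x)) * x ^ (-Y-1) := by
  have hre : (-(r * x)).re ≤ 0 := by simp; positivity
  rw [norm_mul, Complex.norm_real, Real.norm_of_nonneg (by positivity : 0 ≤ x ^ (-Y-1))]
  have h1 := norm_cexp_sub_one_sub_le_two hre
  have h2 := norm_cexp_sub_one_sub_le hre
  rw [norm_neg, norm_mul, Complex.norm_real, Real.norm_of_nonneg hx.le, sub_neg_eq_add] at h1 h2
  gcongr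
  apply le_min
  · exact h2.trans (by gcongr)
  · exact h1.trans (by gcongr)

lemma cpow_neg_I_mul {Y : ℝ} {u : ℝ} (hu : u ≠ 0) : (-(Complex.I * u)) ^ (Y:ℂ)
    = ((|u| ^ Y : ℝ) : ℂ) * (((Real.cos (Real.pi * Y / 2) : ℝ) : ℂ)
          - Complex.I * ((Real.sign u : ℝ) : ℂ) * ((Real.sin (Real.pi * Y / 2) : ℝ) : ℂ)) := by
  have habs : 0 < |u| := abs_pos.2 hu
  have hne : -(Complex.I * (u:ℂ)) ≠ 0 := by
    simp [hu]
  have hlog : Complex.log (-(Complex.I * u))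
      = ((Real.log |u| : ℝ) : ℂ) + ((-(Real.sign u) * Real.pi / 2 : ℝ) : ℂ) * Complex.I := by
    rcases lt_or_gt_of_ne hu with h | h
    · have : -(Complex.I * (u:ℂ)) = ((|u| : ℝ) : ℂ) * Complex.I := by
        rw [abs_of_neg h]; push_cast; ring
      rw [this, Complex.log_ofReal_mul habs Complex.I_ne_zero, Complex.log_I, Real.sign_of_neg h]
      push_cast; ring
    · have : -(Complex.I * (u:ℂ)) = ((|u| : ℝ) : ℂ) * (-Complex.I) := by
        rw [abs_of_pos h]; push_cast; ring
      rw [this, Complex.log_ofReal_mul habs (by simp), Complex.log_neg_I, Real.sign_of_pos h]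
      push_cast; ring
  rw [Complex.cpow_def_of_ne_zero hne, hlog, add_mul, Complex.exp_add]
  congr 1
  · rw [Real.rpow_def_of_pos habs, Complex.ofReal_exp, Complex.ofReal_mul]
  · have : ((-(Real.sign u) * Real.pi / 2 : ℝ) : ℂ) * Complex.I * Y
      = ((-(Real.sign u) * (Real.pi * Y / 2) : ℝ) : ℂ) * Complex.I := by push_cast; ring
    rw [this, Complex.exp_mul_I, ← Complex.ofReal_cos, ← Complex.ofReal_sin]
    rcases lt_or_gt_of_ne hu with h | h
    · rw [Real.sign_of_neg h]; push_cast; ring_nf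
    · rw [Real.sign_of_pos h, neg_mul, one_mul, Real.cos_neg, Real.sin_neg]; push_cast; ring_nf

lemma integral_I_imag {Y : ℝ} (hY : Y ∈ Ioo (1:ℝ) 2) (u : ℝ) :
    ∫ x in Ioi (0:ℝ), (Complex.exp (Complex.I * u * x) - 1 - Complex.I * u * x)
        * ((x ^ (-Y-1) : ℝ) : ℂ)
      = (Real.Gamma (- Y) : ℂ) * (((|u| ^ Y : ℝ) : ℂ) * (((Real.cos (Real.pi * Y / 2) : ℝ) : ℂ)
          - Complex.I * ((Real.sign u : ℝ) : ℂ) * ((Real.sin (Real.pi * Y / 2) : ℝ) : ℂ))) := by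
  rcases eq_or_ne u 0 with rfl | hu
  · have : Y ≠ 0 := by linarith [hY.1]
    simp [Real.zero_rpow this]
  rw [← cpow_neg_I_mul hu]
  let r : ℕ → ℂ := fun n => ((1 / ((n:ℝ) + 1) : ℝ) : ℂ) + -(Complex.I * u)
  have hrre : ∀ n, 0 < (r n).re := by
    intro n
    have : (r n).re = 1 / ((n:ℝ) + 1) := by
      show (((1 / ((n:ℝ) + 1) : ℝ) : ℂ) + -(Complex.I * u)).re = _
      rw [Complex.add_re, Complex.ofReal_re]
      simp
    rw [this]; positivity
  have hrn : ∀ n, ‖r n‖ ≤ 1 + |u| := by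
    intro n
    refine (norm_add_le _ _).trans ?_
    rw [Complex.norm_real, norm_neg, norm_mul, Complex.norm_I, Complex.norm_real, one_mul,
      Real.norm_eq_abs u, Real.norm_of_nonneg (by positivity)]
    gcongr
    rw [div_le_one (by positivity)]
    have : (0:ℝ) ≤ n := by positivity
    linarith
  have hrt : Tendsto r atTop (𝓝 (-(Complex.I * u))) := by
    have h2 := (Complex.continuous_ofReal.tendsto _).comp
      (tendsto_one_div_add_atTop_nhds_zero_nat (𝕜 := ℝ))
    have h3 := h2.add_const (-(Complex.I * (u:ℂ)))
    simpa [Function.comp_def, r] using h3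
  have hlhs : Tendsto (fun n => ∫ x in Ioi (0:ℝ), (Complex.exp (-(r n * x)) - 1 + r n * x)
      * ((x ^ (-Y-1) : ℝ) : ℂ)) atTop (𝓝 (∫ x in Ioi (0:ℝ),
        (Complex.exp (Complex.I * u * x) - 1 - Complex.I * u * x) * ((x ^ (-Y-1) : ℝ) : ℂ))) := by
    refine tendsto_integral_of_dominated_convergence _ ?_
      (integrableOn_bnd hY (R := 1 + |u|) (by positivity)) ?_ ?_
    · intro n
      exact Measurable.aestronglyMeasurable (by fun_prop)
    · intro n
      filter_upwards [self_mem_ae_restrict measurableSet_Ioi] with x hx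
      exact norm_I_le_bnd (hrre n).le (hrn n) hx
    · filter_upwards with x
      have hc : Continuous (fun r : ℂ => (Complex.exp (-(r * x)) - 1 + r * x)
        * ((x ^ (-Y-1) : ℝ) : ℂ)) := by fun_prop
      have := (hc.tendsto _).comp hrt
      rw [show (Complex.exp (Complex.I * ↑u * ↑x) - 1 - Complex.I * ↑u * ↑x) * ↑(x ^ (-Y - 1))
        = (Complex.exp (-(-(Complex.I * ↑u) * ↑x)) - 1 + -(Complex.I * ↑u) * ↑x) * ↑(x ^ (-Y - 1))
        by rw [show -(-(Complex.I * (u:ℂ)) * (x:ℂ)) = Complex.I * u * x by ring]; ring]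
      exact this
  have hrhs : Tendsto (fun n => (Real.Gamma (- Y) : ℂ) * (r n) ^ (Y : ℂ)) atTop
      (𝓝 ((Real.Gamma (- Y) : ℂ) * (-(Complex.I * u)) ^ (Y:ℂ))) := by
    refine Tendsto.const_mul _ ?_
    have hs : -(Complex.I * (u:ℂ)) ∈ Complex.slitPlane := by
      rw [Complex.mem_slitPlane_iff]; right; simpa using hu
    exact (continuousAt_cpow_const hs).tendsto.comp hrt
  refine tendsto_nhds_unique hlhs (hrhs.congr fun n => (integral_I_pos hY (hrre n)).symm)


lemma rpow_neg_lipschitz {Y c x y : ℝ} (hY : 0 < Y) (hc : 0 < c) (hx : c ≤ x) (hy : c ≤ y) :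
    |x ^ (-Y) - y ^ (-Y)| ≤ Y * c ^ (-Y-1) * |x - y| := by
  have h := Convex.norm_image_sub_le_of_norm_hasDerivWithin_le (𝕜 := ℝ)
    (f := fun x : ℝ => x ^ (-Y)) (f' := fun x => (-Y) * x ^ (-Y-1)) (s := Ici c)
    (C := Y * c ^ (-Y-1)) (x := y) (y := x)
    (fun z hz => by
      have hz' : c ≤ z := hz
      exact (Real.hasDerivAt_rpow_const (Or.inl (by linarith))).hasDerivWithinAt)
    (fun z hz => by
      have hz' : c ≤ z := hz
      rw [norm_mul, norm_neg, Real.norm_of_nonneg hY.le, Real.norm_of_nonneg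
        (Real.rpow_nonneg (by linarith) _)]
      gcongr ?_ * ?_
      exact Real.rpow_le_rpow_of_nonpos hc hz' (by linarith))
    (convex_Ici c) hy hx
  simpa [Real.norm_eq_abs] using h

/-- One big jump lemma. -/
lemma one_big_jump {Ω : Type*} [MeasurableSpace Ω] {P : Measure Ω} [IsProbabilityMeasure P]
    {A B : Ω → ℝ} (hA : Measurable A) (hB : Measurable B) (hAB : IndepFun A B P)
    (hBi : Integrable B P) {Y k K p w : ℝ} (hY : 0 < Y) (hk : 0 ≤ k) (hK : 0 ≤ K) (hp : 0 < p)
    (hp1 : p ≤ 1) (hw : 0 < w)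
    (hT : ∀ y, p * w ≤ y → |P.real {ω | y ≤ A ω} - k * y ^ (-Y)| ≤ K * y ^ (-Y-1)) :
    |P.real {ω | p * w ≤ A ω ∧ w ≤ A ω + B ω} - k * w ^ (-Y)|
      ≤ (k * Y * (∫ ω, |B ω| ∂P) + K) * (p * w) ^ (-Y-1) := by
  have hpw : 0 < p * w := by positivity
  have hprod := (indepFun_iff_map_prod_eq_prod_map_map hA.aemeasurable hB.aemeasurable).1 hAB
  have : IsProbabilityMeasure (P.map A) := Measure.isProbabilityMeasure_map hA.aemeasurable
  have : IsProbabilityMeasure (P.map B) := Measure.isProbabilityMeasure_map hB.aemeasurable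
  let T : ℝ → ℝ := fun y => P.real {ω | y ≤ A ω}
  let h : ℝ → ℝ := fun b => max (p * w) (w - b)
  have hh : ∀ b, p * w ≤ h b := fun b => le_max_left _ _
  have hms : MeasurableSet {q : ℝ × ℝ | h q.2 ≤ q.1} :=
    measurableSet_le (by fun_prop) (by fun_prop)
  have hTanti : Antitone T := by
    intro a b hab
    refine measureReal_mono ?_
    intro ω hω
    exact le_trans hab hω
  have hTm : Measurable T := hTanti.measurable
  have hT01 : ∀ y, ‖T y‖ ≤ 1 := fun y => by
    rw [Real.norm_of_nonneg measureReal_nonneg]; exact measureReal_le_one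
  have e1 : P.real {ω | p * w ≤ A ω ∧ w ≤ A ω + B ω} = ∫ ω, T (h (B ω)) ∂P := by
    have s1 : {ω | p * w ≤ A ω ∧ w ≤ A ω + B ω}
        = (fun ω => (A ω, B ω)) ⁻¹' {q : ℝ × ℝ | h q.2 ≤ q.1} := by
      ext ω
      simp only [Set.mem_ofPred_eq, mem_preimage, h, max_le_iff, sub_le_iff_le_add]
    have s2 : P {ω | p * w ≤ A ω ∧ w ≤ A ω + B ω} = ∫⁻ b, ENNReal.ofReal (T (h b)) ∂(P.map B) := by
      rw [s1, ← Measure.map_apply (hA.prodMk hB) hms, hprod, Measure.prod_apply_symm hms]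
      congr 1
      ext b
      rw [Measure.map_apply hA (measurable_prodMk_right hms)]
      simp only [T, Measure.real]
      rw [ENNReal.ofReal_toReal (measure_ne_top _ _)]
      rfl
    rw [← integral_map (f := fun b => T (h b)) hB.aemeasurable
      (by exact (hTm.comp (by fun_prop)).aestronglyMeasurable)]
    rw [Measure.real, s2, integral_eq_lintegral_of_nonneg_ae]
    · exact Eventually.of_forall fun b => measureReal_nonneg
    · exact (hTm.comp (by fun_prop)).aestronglyMeasurable
  have hTi : Integrable (fun ω => T (h (B ω))) P := by
    refine Integrable.of_bound (C := 1) ?_ (Eventually.of_forall fun ω => hT01 _)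
    exact (hTm.comp (by fun_prop)).aestronglyMeasurable
  have hpt : ∀ b, |T (h b) - k * w ^ (-Y)| ≤ (k * Y * |b| + K) * (p * w) ^ (-Y-1) := by
    intro b
    have a1 := hT (h b) (hh b)
    have hwpw : p * w ≤ w := by nlinarith
    have a2 := rpow_neg_lipschitz hY hpw (hh b) hwpw
    have a3 : |h b - w| ≤ |b| := by
      have := abs_max_sub_max_le_abs (w - b) w (p * w)
      rw [max_eq_left hwpw, max_comm] at this
      simpa using this
    have a4 : (h b) ^ (-Y-1) ≤ (p * w) ^ (-Y-1) :=
      Real.rpow_le_rpow_of_nonpos hpw (hh b) (by linarith)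
    have hpos : 0 ≤ (p * w) ^ (-Y-1) := by positivity
    calc |T (h b) - k * w ^ (-Y)|
        = |(T (h b) - k * (h b) ^ (-Y)) + k * ((h b) ^ (-Y) - w ^ (-Y))| := by ring_nf
      _ ≤ |T (h b) - k * (h b) ^ (-Y)| + |k * ((h b) ^ (-Y) - w ^ (-Y))| := abs_add_le _ _
      _ = |T (h b) - k * (h b) ^ (-Y)| + k * |(h b) ^ (-Y) - w ^ (-Y)| := by
          rw [abs_mul, abs_of_nonneg hk]
      _ ≤ K * (p * w) ^ (-Y-1) + k * (Y * (p * w) ^ (-Y-1) * |b|) := by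
          refine add_le_add (a1.trans (by gcongr)) ?_
          refine mul_le_mul_of_nonneg_left (a2.trans (by gcongr)) hk
      _ = _ := by ring
  rw [e1]
  have e2 : ∫ ω, T (h (B ω)) ∂P - k * w ^ (-Y) = ∫ ω, (T (h (B ω)) - k * w ^ (-Y)) ∂P := by
    rw [integral_sub hTi (integrable_const _)]; simp
  rw [e2]
  have hbi : Integrable (fun ω => (k * Y * |B ω| + K) * (p * w) ^ (-Y-1)) P :=
    ((hBi.abs.const_mul _).add (integrable_const _)).mul_const _
  have := norm_integral_le_of_norm_le hbi (f := fun ω => T (h (B ω)) - k * w ^ (-Y))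
    (Eventually.of_forall fun ω => hpt (B ω))
  rw [Real.norm_eq_abs] at this
  refine this.trans (le_of_eq ?_)
  rw [integral_mul_const, integral_add (hBi.abs.const_mul _) (integrable_const _),
    integral_const_mul]
  simp


/-- Lower cutoff of the jumps. -/
noncomputable def jumpEps (Y C : ℝ) (n : ℕ) : ℝ := (C / (Y * n)) ^ (1/Y)

/-- Law of one jump. -/
noncomputable def jumpM (Y C : ℝ) (n : ℕ) : Measure ℝ :=
  (volume.restrict (Ioi (jumpEps Y C n))).withDensity
    (fun x => ENNReal.ofReal (C / n * x ^ (-Y-1)))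

/-- Mean of one jump. -/
noncomputable def jumpMean (Y C : ℝ) (n : ℕ) : ℝ := ∫ x, x ∂(jumpM Y C n)

lemma jumpEps_pos {Y C : ℝ} (hY : Y ∈ Ioo (1:ℝ) 2) (hC : 0 < C) {n : ℕ} (hn : 0 < n) :
    0 < jumpEps Y C n := by
  have : (0:ℝ) < n := by exact_mod_cast hn
  have : 0 < Y := by linarith [hY.1]
  unfold jumpEps; positivity

lemma jumpEps_pow {Y C : ℝ} (hY : Y ∈ Ioo (1:ℝ) 2) (hC : 0 < C) {n : ℕ} (hn : 0 < n) :
    (jumpEps Y C n) ^ (-Y) = Y * n / C := by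
  have h1 : (0:ℝ) < n := by exact_mod_cast hn
  have h2 : 0 < Y := by linarith [hY.1]
  unfold jumpEps
  rw [← Real.rpow_mul (by positivity), show 1 / Y * -Y = -1 by field_simp, Real.rpow_neg_one, inv_div]

lemma jumpM_meas (Y C : ℝ) (n : ℕ) :
    Measurable (fun x : ℝ => ENNReal.ofReal (C / n * x ^ (-Y-1))) := by fun_prop

lemma integral_jumpM {Y C : ℝ} (hY : Y ∈ Ioo (1:ℝ) 2) (hC : 0 < C) {n : ℕ} (hn : 0 < n)
    {E : Type*} [NormedAddCommGroup E] [NormedSpace ℝ E] (f : ℝ → E) :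
    ∫ x, f x ∂(jumpM Y C n) = ∫ x in Ioi (jumpEps Y C n), (C / n * x ^ (-Y-1)) • f x := by
  rw [jumpM, integral_withDensity_eq_integral_toReal_smul (jumpM_meas Y C n) (by simp)]
  refine setIntegral_congr_fun measurableSet_Ioi fun x hx => ?_
  have hx' : 0 < x := (jumpEps_pos hY hC hn).trans hx
  rw [ENNReal.toReal_ofReal (by positivity)]

lemma integrable_jumpM {Y C : ℝ} (hY : Y ∈ Ioo (1:ℝ) 2) (hC : 0 < C) {n : ℕ} (hn : 0 < n)
    {E : Type*} [NormedAddCommGroup E] [NormedSpace ℝ E] (f : ℝ → E) :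
    Integrable f (jumpM Y C n) ↔
      IntegrableOn (fun x => (C / n * x ^ (-Y-1)) • f x) (Ioi (jumpEps Y C n)) := by
  rw [jumpM, integrable_withDensity_iff_integrable_smul₀' (jumpM_meas Y C n).aemeasurable (by simp)]
  refine integrable_congr ?_
  filter_upwards [self_mem_ae_restrict measurableSet_Ioi] with x hx
  have hx' : 0 < x := (jumpEps_pos hY hC hn).trans hx
  rw [ENNReal.toReal_ofReal (by positivity)]

lemma ae_jumpM {Y C : ℝ} {n : ℕ} : ∀ᵐ x ∂(jumpM Y C n), jumpEps Y C n < x := by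
  have : jumpM Y C n ≪ volume.restrict (Ioi (jumpEps Y C n)) := withDensity_absolutelyContinuous _ _
  exact this (self_mem_ae_restrict measurableSet_Ioi)

lemma jumpM_Ici {Y C : ℝ} (hY : Y ∈ Ioo (1:ℝ) 2) (hC : 0 < C) {n : ℕ} (hn : 0 < n) {y : ℝ}
    (hy : jumpEps Y C n ≤ y) : jumpM Y C n (Ici y) = ENNReal.ofReal (C / Y / n * y ^ (-Y)) := by
  have hpos := jumpEps_pos hY hC hn
  have hy0 : 0 < y := by linarith
  have h1 : (0:ℝ) < n := by exact_mod_cast hn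
  have h2 : 1 < Y := hY.1
  rw [jumpM, withDensity_apply _ measurableSet_Ici, Measure.restrict_restrict measurableSet_Ici]
  have : (Ici y ∩ Ioi (jumpEps Y C n) : Set ℝ) =ᵐ[volume] Ioi y := by
    have h3 : (Ici y ∩ Ioi (jumpEps Y C n) : Set ℝ) =ᵐ[volume] (Ioi y ∩ Ioi (jumpEps Y C n) : Set ℝ) :=
      Ioi_ae_eq_Ici.symm.inter (ae_eq_refl _)
    rwa [inter_eq_left.2 (Ioi_subset_Ioi hy)] at h3
  rw [Measure.restrict_congr_set this, ← ofReal_integral_eq_lintegral_ofReal]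
  · rw [integral_const_mul, integral_Ioi_rpow_of_lt (by linarith) hy0]
    congr 1
    rw [show -Y - 1 + 1 = -Y by ring]
    field_simp
  · exact (integrableOn_Ioi_rpow_of_lt (by linarith) hy0).const_mul _
  · filter_upwards [self_mem_ae_restrict measurableSet_Ioi] with x hx
    have hx' : 0 < x := hy0.trans hx
    simp only [Pi.zero_apply]
    positivity

lemma jumpM_prob {Y C : ℝ} (hY : Y ∈ Ioo (1:ℝ) 2) (hC : 0 < C) {n : ℕ} (hn : 0 < n) :
    IsProbabilityMeasure (jumpM Y C n) := by
  have h1 : (0:ℝ) < n := by exact_mod_cast hn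
  have h2 : 1 < Y := hY.1
  constructor
  have h := jumpM_Ici hY hC hn le_rfl
  rw [jumpEps_pow hY hC hn] at h
  have h3 : jumpM Y C n univ = jumpM Y C n (Ici (jumpEps Y C n)) := by
    apply measure_congr
    filter_upwards [ae_jumpM (Y := Y) (C := C) (n := n)] with x hx
    exact propext ⟨fun _ => hx.le, fun _ => trivial⟩
  rw [h3, h, show C / Y / n * (Y * n / C) = 1 by field_simp, ENNReal.ofReal_one]

lemma jumpM_integrable_id {Y C : ℝ} (hY : Y ∈ Ioo (1:ℝ) 2) (hC : 0 < C) {n : ℕ} (hn : 0 < n) :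
    Integrable (fun x : ℝ => x) (jumpM Y C n) := by
  rw [integrable_jumpM hY hC hn]
  have hpos := jumpEps_pos hY hC hn
  have h := (integrableOn_Ioi_rpow_of_lt (show -Y < -1 by linarith [hY.1]) hpos).const_mul (C / n)
  refine h.congr ?_
  filter_upwards [self_mem_ae_restrict measurableSet_Ioi] with x hx
  have hx' : 0 < x := hpos.trans hx
  rw [show -Y = (-Y-1) + 1 by ring, Real.rpow_add_one hx'.ne', smul_eq_mul]
  ring_nf

lemma jumpMean_eq {Y C : ℝ} (hY : Y ∈ Ioo (1:ℝ) 2) (hC : 0 < C) {n : ℕ} (hn : 0 < n) :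
    jumpMean Y C n = Y / (Y - 1) * jumpEps Y C n := by
  have hpos := jumpEps_pos hY hC hn
  have h1 : (0:ℝ) < n := by exact_mod_cast hn
  have h2 : 1 < Y := hY.1
  have h3 : Y - 1 ≠ 0 := by linarith
  rw [jumpMean, integral_jumpM hY hC hn]
  have : ∫ x in Ioi (jumpEps Y C n), (C / n * x ^ (-Y-1)) • x
      = ∫ x in Ioi (jumpEps Y C n), C / n * x ^ (-Y) := by
    refine setIntegral_congr_fun measurableSet_Ioi fun x hx => ?_
    have hx' : 0 < x := hpos.trans hx
    rw [show -Y = (-Y-1) + 1 by ring, Real.rpow_add_one hx'.ne', smul_eq_mul]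
    ring_nf
  rw [this, integral_const_mul, integral_Ioi_rpow_of_lt (by linarith) hpos,
    Real.rpow_add_one hpos.ne', jumpEps_pow hY hC hn]
  have h4 : -Y + 1 ≠ 0 := by linarith
  field_simp
  ring

lemma jumpMean_nonneg {Y C : ℝ} (hY : Y ∈ Ioo (1:ℝ) 2) (hC : 0 < C) {n : ℕ} (hn : 0 < n) :
    0 ≤ jumpMean Y C n := by
  rw [jumpMean_eq hY hC hn]
  have := jumpEps_pos hY hC hn
  have h2 : 0 < Y - 1 := by linarith [hY.1]
  have : 0 < Y := by linarith [hY.1]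
  positivity

lemma tendsto_jumpEps {Y C : ℝ} (hY : Y ∈ Ioo (1:ℝ) 2) :
    Tendsto (fun n => jumpEps Y C n) atTop (𝓝 0) := by
  have h0 : 0 < Y := by linarith [hY.1]
  unfold jumpEps
  have h1 : Tendsto (fun n : ℕ => C / (Y * n)) atTop (𝓝 0) := by
    have : Tendsto (fun n : ℕ => C / Y / n) atTop (𝓝 0) := tendsto_const_div_atTop_nhds_zero_nat _
    refine this.congr fun n => by rw [div_div]
  have h2 := h1.rpow_const (p := 1 / Y) (Or.inr (by positivity))
  rwa [Real.zero_rpow (by positivity)] at h2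

lemma tendsto_jumpMean {Y C : ℝ} (hY : Y ∈ Ioo (1:ℝ) 2) (hC : 0 < C) :
    Tendsto (fun n => jumpMean Y C n) atTop (𝓝 0) := by
  have := (tendsto_jumpEps (C := C) hY).const_mul (Y / (Y - 1))
  rw [mul_zero] at this
  refine this.congr' ?_
  filter_upwards [eventually_gt_atTop 0] with n hn
  rw [jumpMean_eq hY hC hn]

lemma tendsto_n_jumpMean_sq {Y C : ℝ} (hY : Y ∈ Ioo (1:ℝ) 2) (hC : 0 < C) :
    Tendsto (fun n : ℕ => (n:ℝ) * (jumpMean Y C n) ^ 2) atTop (𝓝 0) := by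
  have h0 : 0 < Y := by linarith [hY.1]
  have h1 : Tendsto (fun n => (jumpEps Y C n) ^ (2 - Y)) atTop (𝓝 0) := by
    have h2 := (tendsto_jumpEps (C := C) hY).rpow_const (p := 2 - Y) (Or.inr (by linarith [hY.2]))
    rwa [Real.zero_rpow (by linarith [hY.2])] at h2
  have := h1.const_mul ((Y / (Y - 1)) ^ 2 * C / Y)
  rw [mul_zero] at this
  refine this.congr' ?_
  filter_upwards [eventually_gt_atTop 0] with n hn
  have hpos := jumpEps_pos hY hC hn
  rw [jumpMean_eq hY hC hn, show (2 - Y) = 2 + -Y by ring, Real.rpow_add hpos, jumpEps_pow hY hC hn,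
    Real.rpow_two]
  field_simp

/-- Laplace-Fourier transform of one jump. -/
lemma integral_exp_jumpM {Y C : ℝ} (hY : Y ∈ Ioo (1:ℝ) 2) (hC : 0 < C) {n : ℕ} (hn : 0 < n)
    {r : ℂ} (hr : 0 ≤ r.re) :
    ∫ x, Complex.exp (-(r * x)) ∂(jumpM Y C n) = 1 - r * jumpMean Y C n
      + (C / n : ℝ) * ∫ x in Ioi (jumpEps Y C n),
          (Complex.exp (-(r * x)) - 1 + r * x) * ((x ^ (-Y-1) : ℝ) : ℂ) := by
  have hprob := jumpM_prob hY hC hn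
  have hpos := jumpEps_pos hY hC hn
  have hid := jumpM_integrable_id hY hC hn
  have hidc : Integrable (fun x : ℝ => r * (x:ℂ)) (jumpM Y C n) := hid.ofReal.const_mul r
  have hexp : Integrable (fun x : ℝ => Complex.exp (-(r * x))) (jumpM Y C n) := by
    refine Integrable.of_bound (C := 1) (Measurable.aestronglyMeasurable (by fun_prop)) ?_
    filter_upwards [ae_jumpM (Y := Y) (C := C) (n := n)] with x hx
    have hx' : 0 < x := hpos.trans hx
    rw [Complex.norm_exp, Real.exp_le_one_iff]
    simp; positivity
  have e1 : ∫ x, (Complex.exp (-(r * x)) - 1 + r * x) ∂(jumpM Y C n)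
      = (∫ x, Complex.exp (-(r * x)) ∂(jumpM Y C n)) - 1 + r * jumpMean Y C n := by
    have hs : Integrable (fun x : ℝ => Complex.exp (-(r * x)) - 1) (jumpM Y C n) :=
      hexp.sub (integrable_const _)
    rw [integral_add hs hidc, integral_sub hexp (integrable_const _),
      integral_const_mul, jumpMean, integral_complex_ofReal]
    simp
  have e2 : ∫ x, (Complex.exp (-(r * x)) - 1 + r * x) ∂(jumpM Y C n)
      = (C / n : ℝ) * ∫ x in Ioi (jumpEps Y C n),
          (Complex.exp (-(r * x)) - 1 + r * x) * ((x ^ (-Y-1) : ℝ) : ℂ) := by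
    rw [integral_jumpM hY hC hn, ← integral_const_mul]
    congr 1
    ext x
    rw [Complex.real_smul, Complex.ofReal_mul]
    ring
  rw [← e2, e1]; ring



/-- Uniform Laplace exponent bound. -/
noncomputable def lapB (Y C l : ℝ) : ℝ :=
  C * ∫ x in Ioi (0:ℝ), min ((l * x)^2) (2 * (l * x)) * x ^ (-Y-1)

lemma lapB_nonneg {Y C l : ℝ} (hC : 0 < C) (hl : 0 ≤ l) : 0 ≤ lapB Y C l := by
  unfold lapB
  refine mul_nonneg hC.le (setIntegral_nonneg measurableSet_Ioi fun x hx => ?_)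
  have : 0 < x := hx
  positivity

lemma integrable_exp_neg_jumpM {Y C : ℝ} (hY : Y ∈ Ioo (1:ℝ) 2) (hC : 0 < C) {n : ℕ} (hn : 0 < n)
    {l : ℝ} (hl : 0 ≤ l) : Integrable (fun x => Real.exp (-(l * x))) (jumpM Y C n) := by
  have := jumpM_prob hY hC hn
  refine Integrable.of_bound (C := 1) (Measurable.aestronglyMeasurable (by fun_prop)) ?_
  filter_upwards [ae_jumpM (Y := Y) (C := C) (n := n)] with x hx
  have hx' : 0 < x := (jumpEps_pos hY hC hn).trans hx
  rw [Real.norm_of_nonneg (Real.exp_pos _).le, Real.exp_le_one_iff]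
  simp; positivity

lemma laplace_jumpM {Y C : ℝ} (hY : Y ∈ Ioo (1:ℝ) 2) (hC : 0 < C) {n : ℕ} (hn : 0 < n)
    {l : ℝ} (hl : 0 ≤ l) :
    ∫ x, Real.exp (-(l * x)) ∂(jumpM Y C n) ≤ 1 - l * jumpMean Y C n + lapB Y C l / n := by
  have h1 : (0:ℝ) < n := by exact_mod_cast hn
  have hpos := jumpEps_pos hY hC hn
  have hr : 0 ≤ (l:ℂ).re := by simpa using hl
  have h := integral_exp_jumpM hY hC hn hr
  have e1 : ∫ x : ℝ, Complex.exp (-((l:ℂ) * x)) ∂(jumpM Y C n)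
      = ((∫ x, Real.exp (-(l * x)) ∂(jumpM Y C n) : ℝ) : ℂ) := by
    rw [← integral_complex_ofReal]
    congr 1; ext x; push_cast; rfl
  set I := ∫ x in Ioi (jumpEps Y C n),
          (Complex.exp (-((l:ℂ) * x)) - 1 + (l:ℂ) * x) * ((x ^ (-Y-1) : ℝ) : ℂ) with hI
  have hIb : ‖I‖ ≤ ∫ x in Ioi (0:ℝ), min ((l * x)^2) (2 * (l * x)) * x ^ (-Y-1) := by
    have hb := integrableOn_bnd hY hl
    calc ‖I‖ ≤ ∫ x in Ioi (jumpEps Y C n), min ((l * x)^2) (2 * (l * x)) * x ^ (-Y-1) := by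
          refine norm_integral_le_of_norm_le (hb.mono_set (Ioi_subset_Ioi hpos.le)) ?_
          filter_upwards [self_mem_ae_restrict measurableSet_Ioi] with x hx
          exact norm_I_le_bnd hr (by simp [abs_of_nonneg hl]) (hpos.trans hx)
      _ ≤ _ := by
          refine setIntegral_mono_set hb ?_ (Ioi_subset_Ioi hpos.le).eventuallyLE
          filter_upwards [self_mem_ae_restrict measurableSet_Ioi] with x hx
          have : 0 < x := hx
          simp only [Pi.zero_apply]
          positivity
  rw [e1] at h
  have h2 := congrArg Complex.re h
  simp only [Complex.ofReal_re, Complex.add_re, Complex.sub_re, Complex.one_re, Complex.mul_re,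
    Complex.ofReal_im, zero_mul, sub_zero] at h2
  rw [h2, lapB]
  have h3 : I.re ≤ ‖I‖ := Complex.re_le_norm I
  have : C / n * I.re ≤ C * (∫ x in Ioi (0:ℝ), min ((l * x)^2) (2 * (l * x)) * x ^ (-Y-1)) / n := by
    rw [mul_div_right_comm]
    gcongr
    exact h3.trans hIb
  linarith

lemma laplace_jumpM' {Y C : ℝ} (hY : Y ∈ Ioo (1:ℝ) 2) (hC : 0 < C) {n : ℕ} (hn : 0 < n)
    {l : ℝ} (hl : 0 ≤ l) :
    ∫ x, Real.exp (-(l * (x - jumpMean Y C n))) ∂(jumpM Y C n) ≤ Real.exp (lapB Y C l / n) := by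
  have h := laplace_jumpM hY hC hn hl
  have e : ∀ x, Real.exp (-(l * (x - jumpMean Y C n)))
      = Real.exp (l * jumpMean Y C n) * Real.exp (-(l * x)) := fun x => by
    rw [← Real.exp_add]; ring_nf
  simp_rw [e]
  rw [integral_const_mul]
  have h2 := Real.add_one_le_exp (- l * jumpMean Y C n + lapB Y C l / n)
  calc _ ≤ Real.exp (l * jumpMean Y C n) * Real.exp (- l * jumpMean Y C n + lapB Y C l / n) := by
        gcongr; linarith
    _ = _ := by rw [← Real.exp_add]; ring_nf

lemma exp_le_quad {z : ℝ} (hz : 0 ≤ z) : Real.exp z ≤ 1 + z + z^2 * Real.exp z := by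
  have h := Real.add_one_le_exp (-z)
  have h1 : Real.exp z * Real.exp (-z) = 1 := by rw [← Real.exp_add]; simp
  have h2 := Real.exp_pos z
  nlinarith [mul_nonneg hz h2.le, mul_nonneg (mul_nonneg (by linarith : (0:ℝ) ≤ 1 + z) h2.le) (by linarith : 0 ≤ Real.exp (-z) - (1 - z))]

lemma sq_jumpM {Y C : ℝ} (hY : Y ∈ Ioo (1:ℝ) 2) (hC : 0 < C) {n : ℕ} (hn : 0 < n)
    {y : ℝ} (hy : 0 < y) :
    IntegrableOn (fun x : ℝ => x^2) (Iic y) (jumpM Y C n) ∧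
    ∫ x in Iic y, x ^ 2 ∂(jumpM Y C n) ≤ C * y ^ (2 - Y) / (2 - Y) / n := by
  have h1 : (0:ℝ) < n := by exact_mod_cast hn
  have hpos := jumpEps_pos hY hC hn
  have := jumpM_prob hY hC hn
  have hY2 : 0 < 2 - Y := by linarith [hY.2]
  constructor
  · refine Integrable.of_bound (C := y^2) (Measurable.aestronglyMeasurable (by fun_prop)) ?_
    filter_upwards [self_mem_ae_restrict measurableSet_Iic,
      ae_restrict_of_ae (ae_jumpM (Y := Y) (C := C) (n := n))] with x hx hx2
    have hx0 : 0 < x := hpos.trans hx2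
    have hx1 : x ≤ y := hx
    rw [Real.norm_of_nonneg (by positivity)]
    gcongr
  · rw [← integral_indicator measurableSet_Iic, integral_jumpM hY hC hn]
    have hII : IntegrableOn (fun x : ℝ => C / n * x ^ (1 - Y)) (Ioc 0 y) := by
      have := (intervalIntegral.intervalIntegrable_rpow' (a := 0) (b := y) (r := 1 - Y)
        (by linarith)).const_mul (C / n)
      rwa [intervalIntegrable_iff_integrableOn_Ioc_of_le hy.le] at this
    have hval : ∫ x in Ioc 0 y, C / n * x ^ (1 - Y) = C * y ^ (2 - Y) / (2 - Y) / n := by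
      rw [← intervalIntegral.integral_of_le hy.le, intervalIntegral.integral_const_mul,
        integral_rpow (Or.inl (by linarith)), show 1 - Y + 1 = 2 - Y by ring,
        Real.zero_rpow hY2.ne']
      field_simp
      ring
    rw [← hval, ← integral_indicator measurableSet_Ioc, ← integral_indicator measurableSet_Ioi]
    refine integral_mono_of_nonneg ?_ ?_ ?_
    · refine Eventually.of_forall fun x => ?_
      simp only [Pi.zero_apply]
      refine indicator_nonneg (fun x hx => ?_) x
      have : 0 < x := hpos.trans hx
      have : 0 ≤ (Iic y).indicator (fun x : ℝ => x^2) x := indicator_nonneg (fun x _ => by positivity) x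
      rw [smul_eq_mul]; positivity
    · exact hII.integrable_indicator measurableSet_Ioc
    · refine Eventually.of_forall fun x => ?_
      beta_reduce
      by_cases hx : jumpEps Y C n < x
      · have hx0 : 0 < x := hpos.trans hx
        rw [indicator_of_mem (show x ∈ Ioi _ from hx)]
        by_cases hxy : x ≤ y
        · rw [indicator_of_mem (show x ∈ Iic _ from hxy), indicator_of_mem (show x ∈ Ioc _ _ from ⟨hx0, hxy⟩),
            smul_eq_mul, show 1 - Y = -Y - 1 + 2 by ring, Real.rpow_add hx0, Real.rpow_two]
          exact le_of_eq (by ring)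
        · rw [indicator_of_notMem (show x ∉ Iic _ from hxy), indicator_of_notMem (fun h => hxy h.2)]
          simp
      · rw [indicator_of_notMem (show x ∉ Ioi _ from hx)]
        refine indicator_nonneg (fun x hx => ?_) x
        have : 0 < x := hx.1
        positivity

/-- Truncated exponential moment. -/
lemma trunc_jumpM {Y C : ℝ} (hY : Y ∈ Ioo (1:ℝ) 2) (hC : 0 < C) {n : ℕ} (hn : 0 < n)
    {y θ : ℝ} (hy : 0 < y) (hθ : 0 ≤ θ) :
    ∫ x, (Iic y).indicator (fun x => Real.exp (θ * (x - jumpMean Y C n))) x ∂(jumpM Y C n)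
      ≤ Real.exp (θ^2 * Real.exp (θ * y) * (C * y ^ (2 - Y) / (2 - Y)) / n) := by
  have h1 : (0:ℝ) < n := by exact_mod_cast hn
  have hpos := jumpEps_pos hY hC hn
  have hp := jumpM_prob hY hC hn
  have hid := jumpM_integrable_id hY hC hn
  obtain ⟨hs1, hs2⟩ := sq_jumpM hY hC hn hy
  have e : ∀ x, Real.exp (θ * (x - jumpMean Y C n))
      = Real.exp (-(θ * jumpMean Y C n)) * Real.exp (θ * x) := fun x => by
    rw [← Real.exp_add]; ring_nf
  simp_rw [e]
  rw [integral_indicator measurableSet_Iic, integral_const_mul]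
  set D := θ^2 * Real.exp (θ * y) * (C * y ^ (2 - Y) / (2 - Y)) with hD
  have key : ∫ x in Iic y, Real.exp (θ * x) ∂(jumpM Y C n) ≤ 1 + θ * jumpMean Y C n + D / n := by
    have i1 : Integrable (fun x : ℝ => 1 + θ * x) (jumpM Y C n) :=
      (integrable_const _).add (hid.const_mul _)
    calc _ ≤ ∫ x in Iic y, ((1 + θ * x) + θ^2 * Real.exp (θ * y) * x^2) ∂(jumpM Y C n) := by
          refine integral_mono_of_nonneg (Eventually.of_forall fun x => (Real.exp_pos _).le)
            (i1.integrableOn.add (hs1.const_mul _)) ?_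
          filter_upwards [self_mem_ae_restrict measurableSet_Iic,
            ae_restrict_of_ae (ae_jumpM (Y := Y) (C := C) (n := n))] with x hx hx2
          have hx0 : 0 < x := hpos.trans hx2
          have hx1 : x ≤ y := hx
          have := exp_le_quad (mul_nonneg hθ hx0.le)
          have h2 : (θ * x)^2 * Real.exp (θ * x) ≤ (θ * x)^2 * Real.exp (θ * y) := by gcongr
          nlinarith
      _ = (∫ x in Iic y, (1 + θ * x) ∂(jumpM Y C n)) + θ^2 * Real.exp (θ * y) *
            ∫ x in Iic y, x^2 ∂(jumpM Y C n) := by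
          rw [integral_add i1.integrableOn (hs1.const_mul _), integral_const_mul]
      _ ≤ (1 + θ * jumpMean Y C n) + θ^2 * Real.exp (θ * y) * (C * y ^ (2 - Y) / (2 - Y) / n) := by
          gcongr
          calc _ ≤ ∫ x, (1 + θ * x) ∂(jumpM Y C n) := by
                refine setIntegral_le_integral i1 ?_
                filter_upwards [ae_jumpM (Y := Y) (C := C) (n := n)] with x hx
                have hx' : 0 < x := hpos.trans hx
                simp only [Pi.zero_apply]
                positivity
            _ = _ := by
                rw [integral_add (integrable_const _) (hid.const_mul _), integral_const_mul, jumpMean]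
                simp
      _ = _ := by rw [hD]; ring
  have h2 := Real.add_one_le_exp (θ * jumpMean Y C n + D / n)
  calc _ ≤ Real.exp (-(θ * jumpMean Y C n)) * Real.exp (θ * jumpMean Y C n + D / n) := by
        gcongr; linarith
    _ = _ := by rw [← Real.exp_add]; ring_nf


/-- Product law of the jumps. -/
noncomputable def jumpQ (Y C : ℝ) (n : ℕ) : Measure (Fin n → ℝ) :=
  Measure.pi (fun _ => jumpM Y C n)

/-- Centered sum of the jumps. -/
noncomputable def jumpS (Y C : ℝ) (n : ℕ) (ω : Fin n → ℝ) : ℝ :=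
  ∑ i, (ω i - jumpMean Y C n)

lemma measurable_jumpS (Y C : ℝ) (n : ℕ) : Measurable (jumpS Y C n) := by
  unfold jumpS; fun_prop

lemma jumpQ_prob {Y C : ℝ} (hY : Y ∈ Ioo (1:ℝ) 2) (hC : 0 < C) {n : ℕ} (hn : 0 < n) :
    IsProbabilityMeasure (jumpQ Y C n) := by
  have := jumpM_prob hY hC hn
  unfold jumpQ; infer_instance

lemma tendsto_I_jumpEps {Y C : ℝ} (hY : Y ∈ Ioo (1:ℝ) 2) (hC : 0 < C) {r : ℂ} (hr : 0 ≤ r.re) :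
    Tendsto (fun n : ℕ => ∫ x in Ioi (jumpEps Y C n),
          (Complex.exp (-(r * x)) - 1 + r * x) * ((x ^ (-Y-1) : ℝ) : ℂ)) atTop
      (𝓝 (∫ x in Ioi (0:ℝ),
          (Complex.exp (-(r * x)) - 1 + r * x) * ((x ^ (-Y-1) : ℝ) : ℂ))) := by
  set f : ℝ → ℂ := fun x => (Complex.exp (-(r * x)) - 1 + r * x) * ((x ^ (-Y-1) : ℝ) : ℂ) with hf
  have hfm : Measurable f := by fun_prop
  have hI : IntegrableOn f (Ioi 0) := integrableOn_I hY hr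
  have e : ∀ᶠ n : ℕ in atTop, ∫ x in Ioi (0:ℝ), (Ioi (jumpEps Y C n)).indicator f x
      = ∫ x in Ioi (jumpEps Y C n), f x := by
    filter_upwards [eventually_gt_atTop 0] with n hn
    have hpos := jumpEps_pos hY hC hn
    rw [setIntegral_indicator measurableSet_Ioi, inter_eq_right.2 (Ioi_subset_Ioi hpos.le)]
  refine Tendsto.congr' e ?_
  refine tendsto_integral_of_dominated_convergence (fun x => ‖f x‖)
    (fun n => (hfm.indicator measurableSet_Ioi).aestronglyMeasurable) hI.norm
    (fun n => Eventually.of_forall fun x => norm_indicator_le_norm_self _ _) ?_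
  filter_upwards [self_mem_ae_restrict measurableSet_Ioi] with x hx
  refine tendsto_const_nhds.congr' ?_
  filter_upwards [(tendsto_jumpEps (C := C) hY).eventually_lt_const hx] with n hn
  rw [indicator_of_mem]
  exact hn

lemma tendsto_char_jumpS {Y C : ℝ} (hY : Y ∈ Ioo (1:ℝ) 2) (hC : 0 < C) (u : ℝ) :
    Tendsto (fun n : ℕ => ∫ ω, Complex.exp (Complex.I * u * (jumpS Y C n ω)) ∂(jumpQ Y C n)) atTop
      (𝓝 (Complex.exp (((C * Real.Gamma (-Y) * |u| ^ Y : ℝ) : ℂ) *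
        (((Real.cos (Real.pi * Y / 2) : ℝ) : ℂ)
          - Complex.I * ((Real.sign u : ℝ) : ℂ) * ((Real.sin (Real.pi * Y / 2) : ℝ) : ℂ))))) := by
  set r : ℂ := -(Complex.I * u) with hr
  have hre : 0 ≤ r.re := by simp [hr]
  set A : ℕ → ℂ := fun n => ∫ x in Ioi (jumpEps Y C n),
          (Complex.exp (-(r * x)) - 1 + r * x) * ((x ^ (-Y-1) : ℝ) : ℂ) with hA
  set A0 : ℂ := ∫ x in Ioi (0:ℝ),
          (Complex.exp (-(r * x)) - 1 + r * x) * ((x ^ (-Y-1) : ℝ) : ℂ) with hA0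
  have hAt : Tendsto A atTop (𝓝 A0) := tendsto_I_jumpEps hY hC hre
  have hA0v : (C:ℂ) * A0 = ((C * Real.Gamma (-Y) * |u| ^ Y : ℝ) : ℂ) *
        (((Real.cos (Real.pi * Y / 2) : ℝ) : ℂ)
          - Complex.I * ((Real.sign u : ℝ) : ℂ) * ((Real.sin (Real.pi * Y / 2) : ℝ) : ℂ)) := by
    have h := integral_I_imag hY u
    have : A0 = ∫ x in Ioi (0:ℝ), (Complex.exp (Complex.I * u * x) - 1 - Complex.I * u * x)
        * ((x ^ (-Y-1) : ℝ) : ℂ) := by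
      rw [hA0]; congr 1; ext x; rw [hr]; ring_nf
    rw [this, h]; push_cast; ring
  rw [← hA0v]
  set m : ℕ → ℂ := fun n => r * (jumpMean Y C n : ℂ) with hm
  set g : ℕ → ℂ := fun n => Complex.exp (m n) * (1 - m n + (C / n : ℝ) * A n) - 1 with hg
  have e1 : ∀ᶠ n : ℕ in atTop, (1 + g n) ^ n
      = ∫ ω, Complex.exp (Complex.I * u * (jumpS Y C n ω)) ∂(jumpQ Y C n) := by
    filter_upwards [eventually_gt_atTop 0] with n hn
    have hp := jumpM_prob hY hC hn
    have : ∀ ω : Fin n → ℝ, Complex.exp (Complex.I * u * (jumpS Y C n ω))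
        = ∏ i, (fun x : ℝ => Complex.exp (m n) * Complex.exp (-(r * x))) (ω i) := by
      intro ω
      simp only
      simp_rw [← Complex.exp_add]
      rw [← Complex.exp_sum, jumpS, hr]
      congr 1
      push_cast
      rw [Finset.mul_sum]
      refine Finset.sum_congr rfl fun i _ => ?_
      simp only [hm, hr]
      ring
    simp_rw [this]
    rw [jumpQ, integral_fintype_prod_eq_pow (fun x : ℝ => Complex.exp (m n) * Complex.exp (-(r * x))),
      integral_const_mul, integral_exp_jumpM hY hC hn hre, Fintype.card_fin]
    congr 1
    simp only [hg, hm, hA]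
    ring
  refine Tendsto.congr' e1 (Complex.tendsto_one_add_pow_exp_of_tendsto ?_)
  have hm0 : Tendsto m atTop (𝓝 0) := by
    have h1 := (Complex.continuous_ofReal.tendsto 0).comp (tendsto_jumpMean hY hC)
    have := h1.const_mul r
    simpa [hm] using this
  have hexpm : Tendsto (fun n => Complex.exp (m n)) atTop (𝓝 1) := by
    have := (Complex.continuous_exp.tendsto 0).comp hm0
    simpa [Function.comp_def] using this
  have t1 : Tendsto (fun n : ℕ => (n:ℂ) * (Complex.exp (m n) * (1 - m n) - 1)) atTop (𝓝 0) := by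
    rw [tendsto_zero_iff_norm_tendsto_zero]
    have hb : Tendsto (fun n : ℕ => (2 + ‖m n‖) * (‖r‖^2 * ((n:ℝ) * (jumpMean Y C n) ^ 2))) atTop (𝓝 0) := by
      have := (hm0.norm.const_add 2).mul ((tendsto_n_jumpMean_sq hY hC).const_mul (‖r‖^2))
      simpa using this
    refine squeeze_zero (fun n => norm_nonneg _) (fun n => ?_) hb
    have hmre : (m n).re ≤ 0 := by simp [hm, hr]
    have h1 := norm_cexp_sub_one_sub_le hmre
    set δ := Complex.exp (m n) - 1 - m n with hδ
    have h2 : Complex.exp (m n) * (1 - m n) - 1 = -(m n)^2 + δ * (1 - m n) := by rw [hδ]; ring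
    have h3 : ‖Complex.exp (m n) * (1 - m n) - 1‖ ≤ (2 + ‖m n‖) * ‖m n‖^2 := by
      rw [h2]
      calc _ ≤ ‖m n‖^2 + ‖δ‖ * (1 + ‖m n‖) := by
            refine (norm_add_le _ _).trans ?_
            rw [norm_neg, norm_pow, norm_mul δ]
            have h5 : ‖1 - m n‖ ≤ 1 + ‖m n‖ := by
              have := norm_sub_le (1:ℂ) (m n)
              rwa [norm_one] at this
            exact add_le_add le_rfl (mul_le_mul_of_nonneg_left h5 (norm_nonneg _))
        _ ≤ ‖m n‖^2 + ‖m n‖^2 * (1 + ‖m n‖) := by gcongr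
        _ = _ := by ring
    have h4 : ‖m n‖^2 = ‖r‖^2 * (jumpMean Y C n)^2 := by
      simp only [hm]
      rw [norm_mul, Complex.norm_real, mul_pow, Real.norm_eq_abs, sq_abs]
    rw [norm_mul, Complex.norm_natCast]
    calc _ ≤ (n:ℝ) * ((2 + ‖m n‖) * ‖m n‖^2) := by gcongr
      _ = _ := by rw [h4]; ring
  have t2 : Tendsto (fun n : ℕ => Complex.exp (m n) * (C * A n)) atTop (𝓝 (1 * (C * A0))) :=
    hexpm.mul (hAt.const_mul _)
  have t3 := t1.add t2
  rw [zero_add, one_mul] at t3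
  refine t3.congr' ?_
  filter_upwards [eventually_gt_atTop 0] with n hn
  have : (n:ℂ) ≠ 0 := by exact_mod_cast hn.ne'
  simp only [hg]
  push_cast
  field_simp
  ring

lemma laplace_jumpS {Y C : ℝ} (hY : Y ∈ Ioo (1:ℝ) 2) (hC : 0 < C) {n : ℕ} (hn : 0 < n)
    {l : ℝ} (hl : 0 ≤ l) :
    Integrable (fun ω => Real.exp (-(l * jumpS Y C n ω))) (jumpQ Y C n) ∧
    ∫ ω, Real.exp (-(l * jumpS Y C n ω)) ∂(jumpQ Y C n) ≤ Real.exp (lapB Y C l) := by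
  have hp := jumpM_prob hY hC hn
  have h1 : (0:ℝ) < n := by exact_mod_cast hn
  set f : ℝ → ℝ := fun x => Real.exp (-(l * (x - jumpMean Y C n))) with hf
  have e : ∀ ω : Fin n → ℝ, Real.exp (-(l * jumpS Y C n ω)) = ∏ i, f (ω i) := by
    intro ω
    rw [hf, ← Real.exp_sum, jumpS, Finset.sum_neg_distrib, Finset.mul_sum]
  simp_rw [e]
  constructor
  · have hi : Integrable f (jumpM Y C n) := by
      have := (integrable_exp_neg_jumpM hY hC hn hl).const_mul (Real.exp (l * jumpMean Y C n))
      refine this.congr (Eventually.of_forall fun x => ?_)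
      simp only [hf]
      rw [← Real.exp_add]; ring_nf
    exact Integrable.fintype_prod (f := fun _ => f) (fun _ => hi)
  · rw [jumpQ, integral_fintype_prod_eq_pow f, Fintype.card_fin]
    calc _ ≤ (Real.exp (lapB Y C l / n)) ^ n := by
          refine pow_le_pow_left₀ (integral_nonneg fun x => ?_) (laplace_jumpM' hY hC hn hl) n
          exact (Real.exp_pos _).le
      _ = _ := by rw [← Real.exp_nat_mul]; congr 1; field_simp

lemma integrable_eval_jumpQ {Y C : ℝ} (hY : Y ∈ Ioo (1:ℝ) 2) (hC : 0 < C) {n : ℕ} (hn : 0 < n)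
    (i : Fin n) : Integrable (fun ω => ω i - jumpMean Y C n) (jumpQ Y C n) := by
  have hp := jumpM_prob hY hC hn
  exact integrable_comp_eval (μ := fun _ : Fin n => jumpM Y C n) (f := fun x => x - jumpMean Y C n)
    ((jumpM_integrable_id hY hC hn).sub (integrable_const _))

lemma integral_eval_jumpQ {Y C : ℝ} (hY : Y ∈ Ioo (1:ℝ) 2) (hC : 0 < C) {n : ℕ} (hn : 0 < n)
    (i : Fin n) : ∫ ω, (ω i - jumpMean Y C n) ∂(jumpQ Y C n) = 0 := by
  have hp := jumpM_prob hY hC hn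
  rw [jumpQ, integral_comp_eval (μ := fun _ : Fin n => jumpM Y C n) (f := fun x => x - jumpMean Y C n)
    (Measurable.aestronglyMeasurable (by fun_prop)),
    integral_sub (jumpM_integrable_id hY hC hn) (integrable_const _)]
  simp [jumpMean]

lemma abs_jumpS {Y C : ℝ} (hY : Y ∈ Ioo (1:ℝ) 2) (hC : 0 < C) {n : ℕ} (hn : 0 < n) :
    Integrable (jumpS Y C n) (jumpQ Y C n) ∧
    ∫ ω, |jumpS Y C n ω| ∂(jumpQ Y C n) ≤ 2 * Real.exp (lapB Y C 1) := by
  have hp := jumpM_prob hY hC hn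
  have hq := jumpQ_prob hY hC hn
  have hi : Integrable (jumpS Y C n) (jumpQ Y C n) :=
    integrable_finsetSum _ fun i _ => integrable_eval_jumpQ hY hC hn i
  refine ⟨hi, ?_⟩
  obtain ⟨l1, l2⟩ := laplace_jumpS hY hC hn (l := 1) zero_le_one
  have h0 : ∫ ω, jumpS Y C n ω ∂(jumpQ Y C n) = 0 := by
    unfold jumpS
    rw [integral_finsetSum _ fun i _ => integrable_eval_jumpQ hY hC hn i]
    exact Finset.sum_eq_zero fun i _ => integral_eval_jumpQ hY hC hn i
  calc _ ≤ ∫ ω, (jumpS Y C n ω + 2 * Real.exp (-(1 * jumpS Y C n ω))) ∂(jumpQ Y C n) := by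
        refine integral_mono hi.abs (hi.add (l1.const_mul 2)) fun ω => ?_
        have := Real.add_one_le_exp (-(1 * jumpS Y C n ω))
        have := Real.exp_pos (-(1 * jumpS Y C n ω))
        beta_reduce
        rcases abs_cases (jumpS Y C n ω) with h | h <;> linarith
    _ = 2 * ∫ ω, Real.exp (-(1 * jumpS Y C n ω)) ∂(jumpQ Y C n) := by
        rw [integral_add hi (l1.const_mul 2), h0, integral_const_mul, zero_add]
    _ ≤ _ := by gcongr


lemma jumpQ_tail {Y C : ℝ} (hY : Y ∈ Ioo (1:ℝ) 2) (hC : 0 < C) {n : ℕ} (hn : 0 < n) (i : Fin n)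
    {y : ℝ} (hy : jumpEps Y C n ≤ y) :
    (jumpQ Y C n).real {ω | y ≤ ω i} = C / Y / n * y ^ (-Y) := by
  have hp := jumpM_prob hY hC hn
  have hy0 : 0 < y := (jumpEps_pos hY hC hn).trans_le hy
  have hY0 : 0 < Y := by linarith [hY.1]
  have h := (measurePreserving_eval (fun _ : Fin n => jumpM Y C n) i).measure_preimage
    (s := Ici y) measurableSet_Ici.nullMeasurableSet
  rw [Measure.real, show {ω : Fin n → ℝ | y ≤ ω i} = Function.eval i ⁻¹' (Ici y) from rfl, jumpQ, h,
    jumpM_Ici hY hC hn hy, ENNReal.toReal_ofReal (by positivity)]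

lemma jumpQ_indep {Y C : ℝ} (hY : Y ∈ Ioo (1:ℝ) 2) (hC : 0 < C) {n : ℕ} (hn : 0 < n) :
    iIndepFun (fun (i : Fin n) (ω : Fin n → ℝ) => ω i) (jumpQ Y C n) := by
  have hp := jumpM_prob hY hC hn
  exact iIndepFun_pi (μ := fun _ : Fin n => jumpM Y C n) (X := fun _ x => x)
    (fun _ => aemeasurable_id)

lemma jump_one_big {Y C : ℝ} (hY : Y ∈ Ioo (1:ℝ) 2) (hC : 0 < C) {n : ℕ} (hn : 0 < n)
    (he : jumpEps Y C n ≤ 1) (i : Fin n) {x : ℝ} (hx : 2 ≤ x) :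
    |(jumpQ Y C n).real {ω | x/2 ≤ ω i ∧ x ≤ jumpS Y C n ω} - C / Y / n * x ^ (-Y)|
      ≤ C / Y / n * Y * (2 * Real.exp (lapB Y C 1) + Y / (Y - 1)) * (x/2) ^ (-Y-1) := by
  have hp := jumpM_prob hY hC hn
  have hq := jumpQ_prob hY hC hn
  have hpos := jumpEps_pos hY hC hn
  have hY0 : 0 < Y := by linarith [hY.1]
  have hY1 : 0 < Y - 1 := by linarith [hY.1]
  have h1 : (0:ℝ) < n := by exact_mod_cast hn
  obtain ⟨hSi, hSa⟩ := abs_jumpS hY hC hn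
  have hidi : Integrable (fun ω : Fin n → ℝ => ω i) (jumpQ Y C n) :=
    integrable_comp_eval (μ := fun _ : Fin n => jumpM Y C n) (f := fun x => x)
      (jumpM_integrable_id hY hC hn)
  have hBi : Integrable (fun ω => jumpS Y C n ω - ω i) (jumpQ Y C n) := hSi.sub hidi
  have hind : IndepFun (fun ω : Fin n → ℝ => ω i) (fun ω => jumpS Y C n ω - ω i) (jumpQ Y C n) := by
    have h := (jumpQ_indep hY hC hn).indepFun_finsetSum_of_notMem (fun i => measurable_pi_apply i)
      (s := Finset.univ.erase i) (i := i) (Finset.notMem_erase _ _)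
    have h2 := h.symm.comp (φ := id) (ψ := fun z : ℝ => z - n * jumpMean Y C n) measurable_id (by fun_prop)
    have e : (fun ω => jumpS Y C n ω - ω i) = (fun z => z - ↑n * jumpMean Y C n) ∘
        ∑ j ∈ Finset.univ.erase i, fun ω : Fin n → ℝ => ω j := by
      ext ω
      simp only [Function.comp, Finset.sum_apply, jumpS, Finset.sum_sub_distrib]
      rw [← Finset.add_sum_erase _ _ (Finset.mem_univ i)]
      simp
      ring
    rw [e]
    exact h2
  have h := one_big_jump (P := jumpQ Y C n) (measurable_pi_apply i)
    ((measurable_jumpS Y C n).sub (measurable_pi_apply i)) hind hBi (Y := Y) (k := C / Y / n) (K := 0)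
    (p := 1/2) (w := x) hY0 (by positivity) le_rfl (by norm_num) (by norm_num) (by linarith) (by
      intro y hy
      rw [jumpQ_tail hY hC hn i (by linarith)]
      simp)
  have hset : {ω : Fin n → ℝ | 1/2 * x ≤ ω i ∧ x ≤ ω i + (jumpS Y C n - fun a : Fin n → ℝ => a i) ω}
     = {ω | x/2 ≤ ω i ∧ x ≤ jumpS Y C n ω} := by
    ext ω
    simp only [Set.mem_ofPred_eq, Pi.sub_apply]
    rw [show 1/2 * x = x/2 by ring, show ω i + (jumpS Y C n ω - ω i) = jumpS Y C n ω by ring]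
  rw [hset, show 1/2 * x = x/2 by ring, add_zero] at h
  refine h.trans ?_
  have hB : ∫ ω, |(jumpS Y C n - fun a : Fin n → ℝ => a i) ω| ∂(jumpQ Y C n)
      ≤ 2 * Real.exp (lapB Y C 1) + Y / (Y - 1) := by
    calc _ ≤ ∫ ω, (|jumpS Y C n ω| + |ω i|) ∂(jumpQ Y C n) :=
          integral_mono hBi.abs (hSi.abs.add hidi.abs) fun ω => abs_sub _ _
      _ = (∫ ω, |jumpS Y C n ω| ∂(jumpQ Y C n)) + ∫ ω, |ω i| ∂(jumpQ Y C n) :=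
          integral_add hSi.abs hidi.abs
      _ ≤ _ := by
          have e2 : ∫ ω, |ω i| ∂(jumpQ Y C n) = jumpMean Y C n := by
            rw [jumpQ, integral_comp_eval (μ := fun _ : Fin n => jumpM Y C n) (f := fun x => |x|)
              (Measurable.aestronglyMeasurable (by fun_prop)), jumpMean]
            refine integral_congr_ae ?_
            filter_upwards [ae_jumpM (Y := Y) (C := C) (n := n)] with x hx
            exact abs_of_pos (hpos.trans hx)
          rw [e2, jumpMean_eq hY hC hn]
          have : Y / (Y - 1) * jumpEps Y C n ≤ Y / (Y - 1) * 1 := by gcongr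
          linarith
  gcongr

lemma jump_two_big {Y C : ℝ} (hY : Y ∈ Ioo (1:ℝ) 2) (hC : 0 < C) {n : ℕ} (hn : 0 < n)
    (he : jumpEps Y C n ≤ 1) {i j : Fin n} (hij : i ≠ j) {y : ℝ} (hy : 1 ≤ y) :
    (jumpQ Y C n).real ({ω | y ≤ ω i} ∩ {ω | y ≤ ω j}) = (C / Y / n * y ^ (-Y))^2 := by
  have hq := jumpQ_prob hY hC hn
  have h := (jumpQ_indep hY hC hn).indepFun hij
  have h2 := h.measure_inter_preimage_eq_mul (Ici y) (Ici y) measurableSet_Ici measurableSet_Ici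
  have e1 := jumpQ_tail hY hC hn i (he.trans hy)
  have e2 := jumpQ_tail hY hC hn j (he.trans hy)
  simp only [Measure.real] at *
  change (jumpQ Y C n) ({ω | y ≤ ω i} ∩ {ω | y ≤ ω j}) = (jumpQ Y C n) {ω | y ≤ ω i} * (jumpQ Y C n) {ω | y ≤ ω j} at h2
  rw [h2, ENNReal.toReal_mul, e1, e2]
  ring

lemma jump_no_big {Y C : ℝ} (hY : Y ∈ Ioo (1:ℝ) 2) (hC : 0 < C) {n : ℕ} (hn : 0 < n)
    {x : ℝ} (hx : 2 ≤ x) :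
    (jumpQ Y C n).real {ω | (∀ i, ω i < x/2) ∧ x ≤ jumpS Y C n ω}
      ≤ Real.exp (((1+Y)/2)^2 * C / ((2 - Y) * ((Y-1)/4)^2)) * (x/2) ^ (-Y-1) := by
  have hp := jumpM_prob hY hC hn
  have hq := jumpQ_prob hY hC hn
  have hpos := jumpEps_pos hY hC hn
  have hY0 : 0 < Y := by linarith [hY.1]
  have hY1 : 0 < Y - 1 := by linarith [hY.1]
  have hY2 : 0 < 2 - Y := by linarith [hY.2]
  have h1 : (0:ℝ) < n := by exact_mod_cast hn
  set y := x / 2 with hydef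
  have hy1 : 1 ≤ y := by rw [hydef]; linarith
  have hy : 0 < y := by linarith
  have hxy : x = 2 * y := by rw [hydef]; ring
  have hlog : 0 ≤ Real.log y := Real.log_nonneg hy1
  set θ := (1+Y)/2 * Real.log y / y with hθ
  have hθ0 : 0 ≤ θ := by positivity
  set f : ℝ → ℝ := (Iic y).indicator (fun x => Real.exp (θ * (x - jumpMean Y C n))) with hf
  have hf0 : ∀ z, 0 ≤ f z := fun z => indicator_nonneg (fun z _ => (Real.exp_pos _).le) z
  have hfi : Integrable f (jumpM Y C n) := by
    refine Integrable.of_bound (C := Real.exp (θ * (y - jumpMean Y C n)))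
      (Measurable.aestronglyMeasurable (Measurable.indicator (by fun_prop) measurableSet_Iic)) ?_
    refine Eventually.of_forall fun z => ?_
    rw [Real.norm_of_nonneg (hf0 z), hf]
    refine indicator_le' (fun z hz => ?_) (fun z _ => (Real.exp_pos _).le) z
    have : z ≤ y := hz
    gcongr
  have hI : Integrable (fun ω : Fin n → ℝ => ∏ i, f (ω i)) (jumpQ Y C n) :=
    Integrable.fintype_prod (f := fun _ => f) (fun _ => hfi)
  have step1 : (jumpQ Y C n).real {ω | (∀ i, ω i < y) ∧ x ≤ jumpS Y C n ω}
      ≤ Real.exp (-(θ * x)) * ∫ ω, ∏ i, f (ω i) ∂(jumpQ Y C n) := by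
    have hm : MeasurableSet {ω : Fin n → ℝ | (∀ i, ω i < y) ∧ x ≤ jumpS Y C n ω} := by
      refine MeasurableSet.inter ?_ (measurableSet_le measurable_const (measurable_jumpS Y C n))
      have : {ω : Fin n → ℝ | ∀ i, ω i < y} = ⋂ i, {ω : Fin n → ℝ | ω i < y} := by
        ext ω; simp
      change MeasurableSet {ω : Fin n → ℝ | ∀ i, ω i < y}
      rw [this]
      exact MeasurableSet.iInter fun i => measurableSet_lt (measurable_pi_apply i) measurable_const
    rw [← integral_indicator_one hm, ← integral_const_mul]
    refine integral_mono_of_nonneg (Eventually.of_forall fun ω => ?_) (hI.const_mul _)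
      (Eventually.of_forall fun ω => ?_)
    · exact indicator_nonneg (fun _ _ => zero_le_one) _
    · refine indicator_le' (f := (1 : (Fin n → ℝ) → ℝ))
        (g := fun a : Fin n → ℝ => Real.exp (-(θ * x)) * ∏ i, f (a i))
        (fun ω hω => ?_) (fun ω _ => ?_) ω
      · have : ∏ i, f (ω i) = Real.exp (θ * jumpS Y C n ω) := by
          rw [jumpS, Finset.mul_sum, Real.exp_sum]
          refine Finset.prod_congr rfl fun i _ => ?_
          rw [hf, indicator_of_mem]
          exact (hω.1 i).le
        rw [this, ← Real.exp_add, Pi.one_apply]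
        refine Real.one_le_exp ?_
        have := mul_le_mul_of_nonneg_left hω.2 hθ0
        linarith
      · exact mul_nonneg (Real.exp_pos _).le (Finset.prod_nonneg fun i _ => hf0 _)
  refine step1.trans ?_
  set D := θ^2 * Real.exp (θ * y) * (C * y ^ (2 - Y) / (2 - Y)) with hD
  have step2 : ∫ ω, ∏ i, f (ω i) ∂(jumpQ Y C n) ≤ Real.exp D := by
    rw [jumpQ, integral_fintype_prod_eq_pow f, Fintype.card_fin]
    calc _ ≤ (Real.exp (D / n)) ^ n := by
          exact pow_le_pow_left₀ (integral_nonneg hf0) (trunc_jumpM hY hC hn hy hθ0) n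
      _ = _ := by rw [← Real.exp_nat_mul]; congr 1; field_simp
  have e1 : Real.exp (θ * y) = y ^ ((1+Y)/2) := by
    rw [Real.rpow_def_of_pos hy, hθ]; congr 1; field_simp
  have e2 : Real.exp (-(θ * x)) = y ^ (-Y-1) := by
    rw [Real.rpow_def_of_pos hy, hθ, hxy]; congr 1; field_simp; ring
  have hlog2 : Real.log y ≤ y ^ ((Y-1)/4) / ((Y-1)/4) := Real.log_le_rpow_div hy.le (by positivity)
  have step3 : D ≤ ((1+Y)/2)^2 * C / ((2 - Y) * ((Y-1)/4)^2) := by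
    have hA : D = ((1+Y)/2)^2 * C / (2 - Y) * (Real.log y^2 * y ^ (-((Y-1)/2))) := by
      have hz : y ^ (-((Y-1)/2)) = y ^ ((1+Y)/2) * (y ^ (2 - Y) / y ^ 2) := by
        rw [← Real.rpow_two, ← Real.rpow_sub hy, ← Real.rpow_add hy]
        ring_nf
      rw [hz, hD, e1, hθ]
      field_simp
    have hB : Real.log y^2 * y ^ (-((Y-1)/2)) ≤ (1 / ((Y-1)/4))^2 := by
      calc _ ≤ (y ^ ((Y-1)/4) / ((Y-1)/4))^2 * y ^ (-((Y-1)/2)) := by gcongr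
        _ = (1 / ((Y-1)/4))^2 * ((y ^ ((Y-1)/4) * y ^ ((Y-1)/4)) * y ^ (-((Y-1)/2))) := by ring
        _ = _ := by
          rw [← Real.rpow_add hy, ← Real.rpow_add hy]
          ring_nf
          simp
    rw [hA]
    calc _ ≤ ((1+Y)/2)^2 * C / (2 - Y) * (1 / ((Y-1)/4))^2 := by gcongr
      _ = _ := by field_simp
  rw [e2, mul_comm]
  have := step2.trans (Real.exp_le_exp.2 step3)
  gcongr


/-- Bonferroni-type bounds. -/
lemma bonferroni {Ω : Type*} [MeasurableSpace Ω] {P : Measure Ω} [IsProbabilityMeasure P]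
    {n : ℕ} (E : Fin n → Set Ω) (F : Set Ω) (hE : ∀ i, MeasurableSet (E i)) (hF : MeasurableSet F) :
    (∑ i, P.real (E i ∩ F)) - (∑ i, ∑ j, if i = j then 0 else P.real (E i ∩ E j)) ≤ P.real F ∧
    P.real F ≤ (∑ i, P.real (E i ∩ F)) + P.real (F ∩ (⋃ i, E i)ᶜ) := by
  constructor
  · have hi : ∀ i, Integrable ((E i ∩ F).indicator (1 : Ω → ℝ)) P := fun i =>
      (integrable_const (1:ℝ)).indicator ((hE i).inter hF)
    have hij : ∀ i j, Integrable ((E i ∩ E j).indicator (1 : Ω → ℝ)) P := fun i j =>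
      (integrable_const (1:ℝ)).indicator ((hE i).inter (hE j))
    have hij' : ∀ i j, Integrable (fun ω => if i = j then 0 else (E i ∩ E j).indicator (1 : Ω → ℝ) ω) P := by
      intro i j
      split_ifs
      · exact integrable_zero _ _ _
      · exact hij i j
    have e1 : (∑ i, P.real (E i ∩ F)) = ∫ ω, ∑ i, (E i ∩ F).indicator (1 : Ω → ℝ) ω ∂P := by
      rw [integral_finsetSum _ fun i _ => hi i]
      exact Finset.sum_congr rfl fun i _ => (integral_indicator_one ((hE i).inter hF)).symm
    have e2 : (∑ i, ∑ j, if i = j then 0 else P.real (E i ∩ E j))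
        = ∫ ω, ∑ i, ∑ j, (if i = j then 0 else (E i ∩ E j).indicator (1 : Ω → ℝ) ω) ∂P := by
      rw [integral_finsetSum _ fun i _ => integrable_finsetSum _ fun j _ => hij' i j]
      refine Finset.sum_congr rfl fun i _ => ?_
      rw [integral_finsetSum _ fun j _ => hij' i j]
      refine Finset.sum_congr rfl fun j _ => ?_
      split_ifs
      · simp
      · exact (integral_indicator_one ((hE i).inter (hE j))).symm
    rw [e1, e2, ← integral_sub (integrable_finsetSum _ fun i _ => hi i)
      (integrable_finsetSum _ fun i _ => integrable_finsetSum _ fun j _ => hij' i j),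
      ← integral_indicator_one hF]
    refine integral_mono ((integrable_finsetSum _ fun i _ => hi i).sub
      (integrable_finsetSum _ fun i _ => integrable_finsetSum _ fun j _ => hij' i j))
      ((integrable_const (1:ℝ)).indicator hF) fun ω => ?_
    classical
    beta_reduce
    set a : ℕ := (Finset.univ.filter (fun i => ω ∈ E i)).card with ha
    have ha1 : ∑ i, (E i).indicator (1 : Ω → ℝ) ω = a := by
      simp [indicator_apply, ha]
    have s1 : ∑ i, (E i ∩ F).indicator (1 : Ω → ℝ) ω = a * F.indicator (1 : Ω → ℝ) ω := by
      rw [← ha1, Finset.sum_mul]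
      refine Finset.sum_congr rfl fun i _ => ?_
      by_cases h1 : ω ∈ E i <;> by_cases h2 : ω ∈ F <;> simp [h1, h2]
    have s2 : ∑ i, ∑ j, (if i = j then 0 else (E i ∩ E j).indicator (1 : Ω → ℝ) ω) = (a:ℝ) * a - a := by
      have : ∀ i j, (if i = j then 0 else (E i ∩ E j).indicator (1 : Ω → ℝ) ω)
          = (E i).indicator (1 : Ω → ℝ) ω * (E j).indicator (1 : Ω → ℝ) ω
            - if i = j then (E i).indicator (1 : Ω → ℝ) ω else 0 := by
        intro i j
        split_ifs with h
        · subst h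
          by_cases h1 : ω ∈ E i <;> simp [h1]
        · by_cases h1 : ω ∈ E i <;> by_cases h2 : ω ∈ E j <;> simp [h1, h2]
      simp_rw [this, Finset.sum_sub_distrib, ← Finset.sum_mul_sum]
      rw [ha1]
      simp only [Finset.sum_ite_eq, Finset.mem_univ, if_true]
      rw [ha1]
    rw [s1, s2]
    by_cases h2 : ω ∈ F
    · simp only [h2, indicator_of_mem, Pi.one_apply]
      nlinarith [sq_nonneg ((a:ℝ) - 1)]
    · simp only [h2, not_false_eq_true, indicator_of_notMem]
      rcases Nat.eq_zero_or_pos a with h | h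
      · simp [h]
      · have : (1:ℝ) ≤ a := by exact_mod_cast h
        nlinarith
  · have hsub : F ⊆ (⋃ i, (E i ∩ F)) ∪ (F ∩ (⋃ i, E i)ᶜ) := by
      intro ω hω
      by_cases h : ω ∈ ⋃ i, E i
      · left
        obtain ⟨i, hi⟩ := mem_iUnion.1 h
        exact mem_iUnion.2 ⟨i, hi, hω⟩
      · right; exact ⟨hω, h⟩
    calc _ ≤ P.real ((⋃ i, (E i ∩ F)) ∪ (F ∩ (⋃ i, E i)ᶜ)) := measureReal_mono hsub
      _ ≤ P.real (⋃ i, (E i ∩ F)) + P.real (F ∩ (⋃ i, E i)ᶜ) := measureReal_union_le _ _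
      _ ≤ _ := by
        gcongr
        exact measureReal_iUnion_fintype_le _

lemma jump_tail {Y C : ℝ} (hY : Y ∈ Ioo (1:ℝ) 2) (hC : 0 < C) :
    ∃ K : ℝ, 0 ≤ K ∧ ∀ n : ℕ, 0 < n → jumpEps Y C n ≤ 1 → ∀ x : ℝ, 2 ≤ x →
      |(jumpQ Y C n).real {ω | x ≤ jumpS Y C n ω} - C / Y * x ^ (-Y)| ≤ K * (x/2) ^ (-Y-1) := by
  have hY0 : 0 < Y := by linarith [hY.1]
  have hY1 : 0 < Y - 1 := by linarith [hY.1]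
  set b := 2 * Real.exp (lapB Y C 1) + Y / (Y - 1) with hb
  have hb0 : 0 < b := by positivity
  set D := Real.exp (((1+Y)/2)^2 * C / ((2 - Y) * ((Y-1)/4)^2)) with hD
  have hD0 : 0 < D := Real.exp_pos _
  refine ⟨C * b + (C/Y)^2 + D, by positivity, fun n hn he x hx => ?_⟩
  have hq := jumpQ_prob hY hC hn
  have h1 : (0:ℝ) < n := by exact_mod_cast hn
  have hn0 : (n:ℝ) ≠ 0 := h1.ne'
  have hy1 : 1 ≤ x / 2 := by linarith
  have hy0 : 0 < x / 2 := by linarith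
  obtain ⟨b1, b2⟩ := bonferroni (P := jumpQ Y C n) (fun i => {ω | x/2 ≤ ω i}) {ω | x ≤ jumpS Y C n ω}
    (fun i => measurableSet_le measurable_const (measurable_pi_apply i))
    (measurableSet_le measurable_const (measurable_jumpS Y C n))
  set Sg := ∑ i, (jumpQ Y C n).real ({ω | x/2 ≤ ω i} ∩ {ω | x ≤ jumpS Y C n ω}) with hS1
  have c1 : |Sg - C / Y * x ^ (-Y)| ≤ C * b * (x/2) ^ (-Y-1) := by
    have : Sg - C / Y * x ^ (-Y) = ∑ i : Fin n,
        ((jumpQ Y C n).real ({ω | x/2 ≤ ω i} ∩ {ω | x ≤ jumpS Y C n ω}) - C / Y / n * x ^ (-Y)) := by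
      rw [Finset.sum_sub_distrib]
      simp only [Finset.sum_const, Finset.card_univ, Fintype.card_fin, nsmul_eq_mul]
      rw [hS1]
      field_simp
    rw [this]
    refine (Finset.abs_sum_le_sum_abs _ _).trans ?_
    calc _ ≤ ∑ i : Fin n, C / Y / n * Y * b * (x/2) ^ (-Y-1) :=
          Finset.sum_le_sum fun i _ => jump_one_big hY hC hn he i hx
      _ = _ := by
        simp only [Finset.sum_const, Finset.card_univ, Fintype.card_fin, nsmul_eq_mul]
        field_simp
  have c2 : (∑ i : Fin n, ∑ j : Fin n, if i = j then 0 else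
      (jumpQ Y C n).real ({ω | x/2 ≤ ω i} ∩ {ω | x/2 ≤ ω j})) ≤ (C/Y)^2 * (x/2) ^ (-Y-1) := by
    calc _ ≤ ∑ i : Fin n, ∑ j : Fin n, (C / Y / n * (x/2) ^ (-Y))^2 := by
          refine Finset.sum_le_sum fun i _ => Finset.sum_le_sum fun j _ => ?_
          split_ifs with h
          · positivity
          · exact (jump_two_big hY hC hn he h hy1).le
      _ = (C/Y)^2 * (x/2) ^ (-Y-Y) := by
        simp only [Finset.sum_const, Finset.card_univ, Fintype.card_fin, nsmul_eq_mul]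
        rw [show -Y - Y = -Y + -Y by ring, Real.rpow_add hy0]
        field_simp
      _ ≤ _ := by
        gcongr ?_ * ?_
        exact Real.rpow_le_rpow_of_exponent_le hy1 (by linarith)
  have c3 : (jumpQ Y C n).real ({ω | x ≤ jumpS Y C n ω} ∩ (⋃ i, {ω | x/2 ≤ ω i})ᶜ)
      ≤ D * (x/2) ^ (-Y-1) := by
    refine le_trans (measureReal_mono ?_) (jump_no_big hY hC hn hx)
    intro ω hω
    refine ⟨fun i => ?_, hω.1⟩
    by_contra hcon
    exact hω.2 (mem_iUnion.2 ⟨i, not_lt.1 hcon⟩)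
  have hz : 0 < (x/2) ^ (-Y-1) := by positivity
  rw [abs_le] at c1 ⊢
  have p1 : 0 ≤ (C/Y)^2 * (x/2) ^ (-Y-1) := by positivity
  have p2 : 0 ≤ D * (x/2) ^ (-Y-1) := by positivity
  constructor <;> nlinarith [c1.1, c1.2]


lemma stable_props {Ω : Type*} [MeasurableSpace Ω] {P : Measure Ω} [IsProbabilityMeasure P]
    {Y C : ℝ} (hY : Y ∈ Ioo (1:ℝ) 2) (hC : 0 < C) {U : Ω → ℝ} (hU : Measurable U)
    (hUchar : ∀ u : ℝ, (∫ ω, Complex.exp (Complex.I * u * (U ω)) ∂P) =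
      Complex.exp (((C * Real.Gamma (-Y) * |u| ^ Y : ℝ) : ℂ) *
        (((Real.cos (Real.pi * Y / 2) : ℝ) : ℂ)
          - Complex.I * ((Real.sign u : ℝ) : ℂ) * ((Real.sin (Real.pi * Y / 2) : ℝ) : ℂ)))) :
    Integrable U P ∧ (∀ l : ℝ, 0 ≤ l → Integrable (fun ω => Real.exp (-(l * U ω))) P) ∧
    ∃ K : ℝ, 0 ≤ K ∧ ∀ x : ℝ, 3 ≤ x → |P.real {ω | x ≤ U ω} - C / Y * x ^ (-Y)| ≤ K * x ^ (-Y-1) := by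
  have hY0 : 0 < Y := by linarith [hY.1]
  have hQ : ∀ n : ℕ, IsProbabilityMeasure ((jumpQ Y C (n+1)).map (jumpS Y C (n+1))) := fun n => by
    have := jumpQ_prob hY hC (Nat.succ_pos n)
    exact Measure.isProbabilityMeasure_map (measurable_jumpS _ _ _).aemeasurable
  have hP0 : IsProbabilityMeasure (P.map U) := Measure.isProbabilityMeasure_map hU.aemeasurable
  let μ : ℕ → ProbabilityMeasure ℝ := fun n => ⟨(jumpQ Y C (n+1)).map (jumpS Y C (n+1)), hQ n⟩
  let μ0 : ProbabilityMeasure ℝ := ⟨P.map U, hP0⟩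
  have hlim : Tendsto μ atTop (𝓝 μ0) := by
    refine ProbabilityMeasure.tendsto_of_tendsto_charFun fun u => ?_
    have h := (tendsto_char_jumpS hY hC u).comp (tendsto_add_atTop_nat 1)
    rw [← hUchar u] at h
    have e0 : charFun (μ0 : Measure ℝ) u = ∫ ω, Complex.exp (Complex.I * u * (U ω)) ∂P := by
      rw [charFun_apply_real]
      change ∫ x : ℝ, Complex.exp (u * x * Complex.I) ∂(P.map U) = _
      rw [integral_map hU.aemeasurable (Measurable.aestronglyMeasurable (by fun_prop))]
      congr 1; ext ω; ring_nf
    rw [e0]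
    refine h.congr fun n => ?_
    rw [charFun_apply_real]
    change _ = ∫ x : ℝ, Complex.exp (u * x * Complex.I) ∂((jumpQ Y C (n+1)).map (jumpS Y C (n+1)))
    rw [integral_map (measurable_jumpS _ _ _).aemeasurable
      (Measurable.aestronglyMeasurable (by fun_prop))]
    simp only [Function.comp]
    congr 1; ext ω; ring_nf
  have hopen : ∀ G : Set ℝ, IsOpen G → (P.map U) G ≤ atTop.liminf
      (fun n => ((jumpQ Y C (n+1)).map (jumpS Y C (n+1))) G) := fun G hG =>
    ProbabilityMeasure.le_liminf_measure_open_of_tendsto hlim hG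
  have hclosed : ∀ F : Set ℝ, IsClosed F → atTop.limsup
      (fun n => ((jumpQ Y C (n+1)).map (jumpS Y C (n+1))) F) ≤ (P.map U) F := fun F hF =>
    ProbabilityMeasure.limsup_measure_closed_le_of_tendsto hlim hF
  have fatou : ∀ (f : ℝ → ℝ) (B : ℝ), Continuous f → (∀ x, 0 ≤ f x) →
      (∀ n, Integrable (fun ω => f (jumpS Y C (n+1) ω)) (jumpQ Y C (n+1))) →
      (∀ n, ∫ ω, f (jumpS Y C (n+1) ω) ∂(jumpQ Y C (n+1)) ≤ B) →
      Integrable (fun ω => f (U ω)) P := by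
    intro f B hf hf0 hi hB
    have h := lintegral_le_liminf_lintegral_of_forall_isOpen_measure_le_liminf_measure hf hf0 hopen
    rw [lintegral_map (by fun_prop) hU] at h
    have h2 : atTop.liminf (fun n => ∫⁻ x, ENNReal.ofReal (f x)
        ∂((jumpQ Y C (n+1)).map (jumpS Y C (n+1)))) ≤ ENNReal.ofReal B := by
      refine liminf_le_of_frequently_le' (Eventually.frequently (Eventually.of_forall fun n => ?_))
      rw [lintegral_map (by fun_prop) (measurable_jumpS _ _ _),
        ← ofReal_integral_eq_lintegral_ofReal (hi n) (Eventually.of_forall fun ω => hf0 _)]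
      exact ENNReal.ofReal_le_ofReal (hB n)
    refine ⟨(hf.measurable.comp hU).aestronglyMeasurable, ?_⟩
    rw [hasFiniteIntegral_iff_ofReal (Eventually.of_forall fun ω => hf0 _)]
    exact (h.trans h2).trans_lt ENNReal.ofReal_lt_top
  refine ⟨?_, ?_, ?_⟩
  · have := fatou (fun x => |x|) (2 * Real.exp (lapB Y C 1)) (by fun_prop) (fun x => abs_nonneg x)
      (fun n => (abs_jumpS hY hC (Nat.succ_pos n)).1.abs)
      (fun n => (abs_jumpS hY hC (Nat.succ_pos n)).2)
    exact (integrable_norm_iff hU.aestronglyMeasurable).1 this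
  · intro l hl
    exact fatou (fun x => Real.exp (-(l * x))) (Real.exp (lapB Y C l)) (by fun_prop)
      (fun x => (Real.exp_pos _).le)
      (fun n => (laplace_jumpS hY hC (Nat.succ_pos n) hl).1)
      (fun n => (laplace_jumpS hY hC (Nat.succ_pos n) hl).2)
  · obtain ⟨K, hK, hT⟩ := jump_tail hY hC
    have hev : ∀ᶠ n : ℕ in atTop, jumpEps Y C (n+1) ≤ 1 :=
      ((tendsto_jumpEps (C := C) hY).comp (tendsto_add_atTop_nat 1)).eventually_le_const one_pos
    have lower : ∀ x, 3 ≤ x → C / Y * x ^ (-Y) - K * (x/2) ^ (-Y-1) ≤ P.real {ω | x ≤ U ω} := by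
      intro x hx
      have h1 := hclosed (Ici x) isClosed_Ici
      rw [Measure.map_apply hU measurableSet_Ici] at h1
      have h2 : ENNReal.ofReal (C / Y * x ^ (-Y) - K * (x/2) ^ (-Y-1)) ≤ P (U ⁻¹' Ici x) := by
        refine le_trans (le_limsup_of_frequently_le' (Eventually.frequently ?_)) h1
        filter_upwards [hev] with n hn
        rw [Measure.map_apply (measurable_jumpS _ _ _) measurableSet_Ici]
        have := jumpQ_prob hY hC (Nat.succ_pos n)
        rw [ENNReal.ofReal_le_iff_le_toReal (measure_ne_top _ _)]
        have h3 := (abs_le.1 (hT (n+1) (Nat.succ_pos n) hn x (by linarith))).1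
        simp only [Measure.real] at h3
        change _ ≤ (jumpQ Y C (n+1) {ω | x ≤ jumpS Y C (n+1) ω}).toReal
        linarith
      rwa [ENNReal.ofReal_le_iff_le_toReal (measure_ne_top _ _)] at h2
    have upper' : ∀ x, 3 ≤ x → ∀ z, 2 ≤ z → z < x →
        P.real {ω | x ≤ U ω} ≤ C / Y * z ^ (-Y) + K * (z/2) ^ (-Y-1) := by
      intro x hx z hz hzx
      have h1 := hopen (Ioi z) isOpen_Ioi
      rw [Measure.map_apply hU measurableSet_Ioi] at h1
      have hz0 : 0 < z := by linarith
      have h2 : P (U ⁻¹' Ioi z) ≤ ENNReal.ofReal (C / Y * z ^ (-Y) + K * (z/2) ^ (-Y-1)) := by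
        refine le_trans h1 (liminf_le_of_frequently_le' (Eventually.frequently ?_))
        filter_upwards [hev] with n hn
        rw [Measure.map_apply (measurable_jumpS _ _ _) measurableSet_Ioi]
        have := jumpQ_prob hY hC (Nat.succ_pos n)
        rw [ENNReal.le_ofReal_iff_toReal_le (measure_ne_top _ _) (by positivity)]
        have h3 := (abs_le.1 (hT (n+1) (Nat.succ_pos n) hn z hz)).2
        have h4 : (jumpQ Y C (n+1)).real (jumpS Y C (n+1) ⁻¹' Ioi z)
            ≤ (jumpQ Y C (n+1)).real {ω | z ≤ jumpS Y C (n+1) ω} := by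
          refine measureReal_mono ?_
          intro ω hω
          exact le_of_lt (show z < _ from hω)
        simp only [Measure.real] at h3 h4
        linarith
      rw [ENNReal.le_ofReal_iff_toReal_le (measure_ne_top _ _) (by positivity)] at h2
      refine le_trans ?_ h2
      refine measureReal_mono ?_
      intro ω hω
      exact lt_of_lt_of_le hzx hω
    refine ⟨K * (1/2) ^ (-Y-1), by positivity, fun x hx => ?_⟩
    have hx0 : 0 < x := by linarith
    have e : K * (1/2) ^ (-Y-1) * x ^ (-Y-1) = K * (x/2) ^ (-Y-1) := by
      rw [mul_assoc, ← Real.mul_rpow (by norm_num) hx0.le]; ring_nf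
    rw [e, abs_le]
    have hc : Tendsto (fun z : ℝ => C / Y * z ^ (-Y) + K * (z/2) ^ (-Y-1)) (𝓝[<] x)
        (𝓝 (C / Y * x ^ (-Y) + K * (x/2) ^ (-Y-1))) := by
      have : ContinuousAt (fun z : ℝ => C / Y * z ^ (-Y) + K * (z/2) ^ (-Y-1)) x := by
        refine ContinuousAt.add (continuousAt_const.mul ?_) (continuousAt_const.mul ?_)
        · exact continuousAt_id.rpow_const (Or.inl hx0.ne')
        · exact ContinuousAt.rpow_const (by fun_prop) (Or.inl (by positivity))
      exact this.tendsto.mono_left nhdsWithin_le_nhds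
    have hup : P.real {ω | x ≤ U ω} ≤ C / Y * x ^ (-Y) + K * (x/2) ^ (-Y-1) := by
      refine ge_of_tendsto hc ?_
      have : Ioo 2 x ∈ 𝓝[<] x := Ioo_mem_nhdsLT (by linarith)
      filter_upwards [this] with z hz
      exact upper' x hx z hz.1.le hz.2
    have := lower x hx
    constructor <;> linarith


lemma scaled_tail {Ω : Type*} [MeasurableSpace Ω] {P : Measure Ω} {U : Ω → ℝ} {Y k K a : ℝ}
    (ha : 0 < a)
    (hT : ∀ x : ℝ, 3 ≤ x → |P.real {ω | x ≤ U ω} - k * x ^ (-Y)| ≤ K * x ^ (-Y-1)) {y : ℝ}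
    (hy : 3 * a ≤ y) :
    |P.real {ω | y ≤ a * U ω} - k * a ^ Y * y ^ (-Y)| ≤ K * a ^ (Y+1) * y ^ (-Y-1) := by
  have hy0 : 0 < y := by linarith
  have h := hT (y / a) (by rwa [le_div_iff₀ ha])
  have e : {ω | y / a ≤ U ω} = {ω | y ≤ a * U ω} := by
    ext ω; simp only [Set.mem_ofPred_eq]; rw [div_le_iff₀' ha]
  have e1 : (y / a) ^ (-Y) = a ^ Y * y ^ (-Y) := by
    rw [Real.div_rpow hy0.le ha.le, Real.rpow_neg ha.le]; field_simp
  have e2 : (y / a) ^ (-Y-1) = a ^ (Y+1) * y ^ (-Y-1) := by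
    rw [Real.div_rpow hy0.le ha.le, show -Y-1 = -(Y+1) by ring, Real.rpow_neg ha.le]; field_simp
  rwa [e, e1, e2, ← mul_assoc, ← mul_assoc] at h

set_option maxHeartbeats 2000000 in
lemma two_dim_tail {Ω : Type*} [MeasurableSpace Ω] {P : Measure Ω} [IsProbabilityMeasure P]
    {Y k M G : ℝ} (hY : Y ∈ Ioo (1:ℝ) 2) (hk : 0 ≤ k) (hM : 1 < M) (hG : 0 < G)
    {U V : Ω → ℝ} (hU : Measurable U) (hV : Measurable V) (hI : IndepFun U V P)
    (hUi : Integrable U P) (hVi : Integrable V P)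
    {K1 K2 : ℝ} (hK1 : 0 ≤ K1) (hK2 : 0 ≤ K2)
    (hT1 : ∀ x : ℝ, 3 ≤ x → |P.real {ω | x ≤ U ω} - k * x ^ (-Y)| ≤ K1 * x ^ (-Y-1))
    (hT2 : ∀ x : ℝ, 3 ≤ x → |P.real {ω | x ≤ V ω} - k * x ^ (-Y)| ≤ K2 * x ^ (-Y-1)) :
    ∃ K : ℝ, 0 ≤ K ∧ ∀ w : ℝ, 3 * (M + G) ≤ w →
      |P.real {ω | w ≤ max (U ω - V ω) 0 + ((M - 1) * U ω + (G + 1) * V ω)}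
        - k * (M ^ Y + (G+1) ^ Y) * w ^ (-Y)| ≤ K * w ^ (-Y-1) := by
  have hY0 : 0 < Y := by linarith [hY.1]
  have hY1 := hY.1
  have hMG : 0 < M + G := by linarith
  have hM0 : 0 < M := by linarith
  have hM1 : 0 < M - 1 := by linarith
  have hG1 : 0 < G + 1 := by linarith
  set c1 := (k * M^Y * Y * (∫ ω, |G * V ω| ∂P) + K1 * M ^ (Y+1)) with hc1
  set c2 := (k * (G+1)^Y * Y * (∫ ω, |(M-1) * U ω| ∂P) + K2 * (G+1) ^ (Y+1)) with hc2
  have hc10 : 0 ≤ c1 := by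
    have : 0 ≤ ∫ ω, |G * V ω| ∂P := integral_nonneg fun ω => abs_nonneg _
    positivity
  have hc20 : 0 ≤ c2 := by
    have : 0 ≤ ∫ ω, |(M-1) * U ω| ∂P := integral_nonneg fun ω => abs_nonneg _
    positivity
  refine ⟨c1 * (M / (M+G)) ^ (-Y-1) + c2 * ((G+1) / (M+G)) ^ (-Y-1)
    + 2 * ((k + K1) * (k + K2) * (1 / (M+G)) ^ (-Y-1)), by positivity, fun w hw => ?_⟩
  have hw0 : 0 < w := by linarith
  set v := w / (M + G) with hv
  have hv3 : 3 ≤ v := by rw [hv, le_div_iff₀ hMG]; exact hw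
  have hv0 : 0 < v := by linarith
  have hwv : w = (M + G) * v := by rw [hv]; field_simp
  have F1 := one_big_jump (P := P) (hU.const_mul M) (hV.const_mul G)
    (hI.comp (φ := fun x => M * x) (ψ := fun x => G * x) (by fun_prop) (by fun_prop))
    (hVi.const_mul G) (Y := Y) (k := k * M ^ Y) (K := K1 * M ^ (Y+1)) (p := M / (M+G)) (w := w)
    hY0 (by positivity) (by positivity) (by positivity) (by rw [div_le_one hMG]; linarith) hw0
    (fun y hy => scaled_tail hM0 hT1 (by
      have : M / (M+G) * w = M * v := by rw [hv]; ring
      rw [this] at hy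
      nlinarith))
  have F2 := one_big_jump (P := P) (hV.const_mul (G+1)) (hU.const_mul (M-1))
    (hI.symm.comp (φ := fun x => (G+1) * x) (ψ := fun x => (M-1) * x) (by fun_prop) (by fun_prop))
    (hUi.const_mul (M-1)) (Y := Y) (k := k * (G+1) ^ Y) (K := K2 * (G+1) ^ (Y+1)) (p := (G+1) / (M+G))
    (w := w)
    hY0 (by positivity) (by positivity) (by positivity) (by rw [div_le_one hMG]; linarith) hw0
    (fun y hy => scaled_tail hG1 hT2 (by
      have : (G+1) / (M+G) * w = (G+1) * v := by rw [hv]; ring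
      rw [this] at hy
      nlinarith))
  have s1 : {ω | M / (M+G) * w ≤ M * U ω ∧ w ≤ M * U ω + G * V ω}
      = {ω | v ≤ U ω ∧ w ≤ M * U ω + G * V ω} := by
    ext ω
    have : M / (M+G) * w = M * v := by rw [hv]; ring
    simp only [Set.mem_ofPred_eq, this, mul_le_mul_iff_right₀ hM0]
  have s2 : {ω | (G+1) / (M+G) * w ≤ (G+1) * V ω ∧ w ≤ (G+1) * V ω + (M-1) * U ω}
      = {ω | v ≤ V ω ∧ w ≤ (G+1) * V ω + (M-1) * U ω} := by
    ext ω
    have : (G+1) / (M+G) * w = (G+1) * v := by rw [hv]; ring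
    simp only [Set.mem_ofPred_eq, this, mul_le_mul_iff_right₀ hG1]
  rw [s1, Real.mul_rpow (by positivity) hw0.le, ← mul_assoc] at F1
  rw [s2, Real.mul_rpow (by positivity) hw0.le, ← mul_assoc] at F2
  set f1 := P.real {ω | v ≤ U ω ∧ w ≤ M * U ω + G * V ω}
  set f2 := P.real {ω | v ≤ V ω ∧ w ≤ (G+1) * V ω + (M-1) * U ω}
  set d := P.real ({ω | v ≤ U ω} ∩ {ω | v ≤ V ω}) with hd
  set F := {ω | w ≤ max (U ω - V ω) 0 + ((M - 1) * U ω + (G + 1) * V ω)} with hF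
  have hdb : d ≤ (k + K1) * (k + K2) * (1 / (M+G)) ^ (-Y-1) * w ^ (-Y-1) := by
    have h2 := hI.measure_inter_preimage_eq_mul (Ici v) (Ici v) measurableSet_Ici measurableSet_Ici
    have e : d = P.real {ω | v ≤ U ω} * P.real {ω | v ≤ V ω} := by
      rw [hd]
      simp only [Measure.real]
      rw [← ENNReal.toReal_mul]
      exact congrArg _ h2
    have hle : v ^ (-Y-1) ≤ v ^ (-Y) := Real.rpow_le_rpow_of_exponent_le (by linarith) (by linarith)
    have b1 : P.real {ω | v ≤ U ω} ≤ (k + K1) * v ^ (-Y) := by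
      have := (abs_le.1 (hT1 v hv3)).2
      nlinarith
    have b2 : P.real {ω | v ≤ V ω} ≤ (k + K2) * v ^ (-Y) := by
      have := (abs_le.1 (hT2 v hv3)).2
      nlinarith
    calc d ≤ ((k + K1) * v ^ (-Y)) * ((k + K2) * v ^ (-Y)) := by
          rw [e]; gcongr
      _ = (k + K1) * (k + K2) * v ^ (-Y + -Y) := by rw [Real.rpow_add hv0]; ring
      _ ≤ (k + K1) * (k + K2) * v ^ (-Y-1) := by
          gcongr ?_ * ?_
          exact Real.rpow_le_rpow_of_exponent_le (by linarith) (by linarith)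
      _ = _ := by
          rw [mul_assoc (((k + K1) * (k + K2))), ← Real.mul_rpow (by positivity) hw0.le, hv]
          ring_nf
  have up : P.real F ≤ f1 + f2 + d := by
    calc P.real F ≤ P.real (({ω | v ≤ U ω ∧ w ≤ M * U ω + G * V ω} ∪
            {ω | v ≤ V ω ∧ w ≤ (G+1) * V ω + (M-1) * U ω}) ∪ ({ω | v ≤ U ω} ∩ {ω | v ≤ V ω})) := by
          refine measureReal_mono ?_
          intro ω hω
          have hω' : w ≤ max (U ω - V ω) 0 + ((M - 1) * U ω + (G + 1) * V ω) := hω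
          rcases le_or_gt v (U ω) with h1 | h1 <;> rcases le_or_gt v (V ω) with h2 | h2
          · exact Or.inr ⟨h1, h2⟩
          · refine Or.inl (Or.inl ⟨h1, ?_⟩)
            rw [max_eq_left (by linarith)] at hω'
            linarith
          · refine Or.inl (Or.inr ⟨h2, ?_⟩)
            rw [max_eq_right (by linarith)] at hω'
            linarith
          · exfalso
            rw [hwv] at hω'
            rcases max_cases (U ω - V ω) 0 with h | h <;> rw [h.1] at hω' <;> nlinarith
      _ ≤ _ := (measureReal_union_le _ _).trans (add_le_add (measureReal_union_le _ _) le_rfl)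
  have low : f1 + f2 ≤ P.real F + d := by
    have hm1 : MeasurableSet {ω | v ≤ V ω ∧ w ≤ (G+1) * V ω + (M-1) * U ω} :=
      (measurableSet_le measurable_const hV).inter (measurableSet_le measurable_const
        ((hV.const_mul (G+1)).add (hU.const_mul (M-1))))
    have h := measureReal_union_add_inter (μ := P) (s := {ω | v ≤ U ω ∧ w ≤ M * U ω + G * V ω}) hm1
    rw [← h]
    refine add_le_add (measureReal_mono ?_) (measureReal_mono ?_)
    · rintro ω (hω | hω)
      · have h1 : w ≤ M * U ω + G * V ω := hω.2
        change w ≤ max (U ω - V ω) 0 + ((M - 1) * U ω + (G + 1) * V ω)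
        have := le_max_left (U ω - V ω) 0
        linarith
      · have h1 : w ≤ (G+1) * V ω + (M-1) * U ω := hω.2
        change w ≤ max (U ω - V ω) 0 + ((M - 1) * U ω + (G + 1) * V ω)
        have := le_max_right (U ω - V ω) 0
        linarith
    · rintro ω ⟨h1, h2⟩
      exact ⟨h1.1, h2.1⟩
  have hd0 : 0 ≤ d := measureReal_nonneg
  rw [abs_le] at F1 F2 ⊢
  obtain ⟨g1, g2⟩ := F1
  obtain ⟨g3, g4⟩ := F2
  constructor <;> nlinarith


lemma exp_sub_two_bound (y : ℝ) : |Real.exp y - 1 - y| ≤ |y| ^ 2 * Real.exp |y| := by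
  have h := Complex.norm_exp_sub_sum_le_norm_mul_exp (y : ℂ) 2
  simp only [Finset.sum_range_succ, Finset.sum_range_zero, Nat.factorial] at h
  have e : Complex.exp (y:ℂ) - (0 + (y:ℂ) ^ 0 / ((1:ℕ):ℂ) + (y:ℂ) ^ 1 / (((0+1) * 1 : ℕ):ℂ))
      = ((Real.exp y - 1 - y : ℝ) : ℂ) := by
    push_cast; ring
  rw [e, Complex.norm_real, Complex.norm_real] at h
  exact h

lemma exp_sub_three_bound (y : ℝ) : |Real.exp y - 1 - y - y ^ 2 / 2| ≤ |y| ^ 3 * Real.exp |y| := by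
  have h := Complex.norm_exp_sub_sum_le_norm_mul_exp (y : ℂ) 3
  simp only [Finset.sum_range_succ, Finset.sum_range_zero, Nat.factorial] at h
  have e : Complex.exp (y:ℂ) - (0 + (y:ℂ) ^ 0 / ((1:ℕ):ℂ) + (y:ℂ) ^ 1 / (((0+1) * 1 : ℕ):ℂ)
      + (y:ℂ) ^ 2 / (((1+1) * ((0+1) * 1) : ℕ):ℂ))
      = ((Real.exp y - 1 - y - y ^ 2 / 2 : ℝ) : ℂ) := by
    push_cast; ring
  rw [e, Complex.norm_real, Complex.norm_real] at h
  exact h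

lemma g_quad_limit (x : ℝ) : Tendsto (fun s : ℝ => (s ^ 2)⁻¹ * (1 - Real.exp (-(s * x)) - s * x))
    (𝓝[>] 0) (𝓝 (-(1/2) * x ^ 2)) := by
  have hb : Tendsto (fun s : ℝ => s * (|x| ^ 3 * Real.exp (s * |x|))) (𝓝[>] 0) (𝓝 0) := by
    have : Continuous (fun s : ℝ => s * (|x| ^ 3 * Real.exp (s * |x|))) := by fun_prop
    have h := this.tendsto 0
    simp only [zero_mul] at h
    exact h.mono_left nhdsWithin_le_nhds
  rw [tendsto_iff_norm_sub_tendsto_zero]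
  refine squeeze_zero' (Eventually.of_forall fun _ => norm_nonneg _) ?_ hb
  filter_upwards [self_mem_nhdsWithin] with s hs
  have hs0 : (0:ℝ) < s := hs
  have h := exp_sub_three_bound (-(s * x))
  have e : (s ^ 2)⁻¹ * (1 - Real.exp (-(s * x)) - s * x) - -(1/2) * x ^ 2
      = -((s ^ 2)⁻¹ * (Real.exp (-(s * x)) - 1 - -(s * x) - (-(s * x)) ^ 2 / 2)) := by
    field_simp; ring
  rw [e, norm_neg, norm_mul, Real.norm_eq_abs, Real.norm_eq_abs, abs_of_pos (by positivity)]
  rw [abs_neg, abs_mul, abs_of_pos hs0] at h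
  calc (s ^ 2)⁻¹ * |Real.exp (-(s * x)) - 1 - -(s * x) - (-(s * x)) ^ 2 / 2|
      ≤ (s ^ 2)⁻¹ * ((s * |x|) ^ 3 * Real.exp (s * |x|)) := by gcongr
    _ = _ := by field_simp

/-- negative part -/
lemma neg_part_limit {Ω : Type*} [MeasurableSpace Ω] {P : Measure Ω} [IsProbabilityMeasure P]
    {X : Ω → ℝ} (hX : Measurable X)
    (hE : ∀ l : ℝ, 0 ≤ l → Integrable (fun ω => Real.exp (-(l * X ω))) P) :
    Tendsto (fun s : ℝ => ∫ ω, {ω | X ω ≤ 0}.indicator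
        (fun ω => (s ^ 2)⁻¹ * (1 - Real.exp (-(s * X ω)) - s * X ω)) ω ∂P) (𝓝[>] 0)
      (𝓝 (-(1/2) * ∫ ω, {ω | X ω ≤ 0}.indicator (fun ω => X ω ^ 2) ω ∂P)) := by
  rw [← integral_const_mul]
  have hms : MeasurableSet {ω | X ω ≤ 0} := measurableSet_le hX measurable_const
  refine tendsto_integral_filter_of_dominated_convergence
    (fun ω => 2 * Real.exp (-(2 * X ω))) ?_ ?_ ((hE 2 (by norm_num)).const_mul 2) ?_
  · refine Eventually.of_forall fun s => ?_
    exact ((by fun_prop : Measurable fun ω => (s ^ 2)⁻¹ * (1 - Real.exp (-(s * X ω)) - s * X ω)).indicator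
      hms).aestronglyMeasurable
  · filter_upwards [self_mem_nhdsWithin, Ioo_mem_nhdsGT (show (0:ℝ) < 1 by norm_num)] with s _ hs1
    refine Eventually.of_forall fun ω => ?_
    have hs0 : (0:ℝ) < s := hs1.1
    by_cases hω : X ω ≤ 0
    · rw [Set.indicator_of_mem (show ω ∈ {ω | X ω ≤ 0} from hω)]
      have h := exp_sub_two_bound (-(s * X ω))
      rw [abs_neg, abs_mul, abs_of_pos hs0] at h
      rw [show 1 - Real.exp (-(s * X ω)) - s * X ω
        = -(Real.exp (-(s * X ω)) - 1 - -(s * X ω)) by ring, norm_mul, norm_neg, Real.norm_eq_abs,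
        Real.norm_eq_abs, abs_of_pos (show 0 < (s^2)⁻¹ by positivity)]
      have q : |X ω| ^ 2 ≤ 2 * Real.exp |X ω| := by
        have := Real.quadratic_le_exp_of_nonneg (abs_nonneg (X ω))
        nlinarith [abs_nonneg (X ω)]
      have e : Real.exp (-(2 * X ω)) = Real.exp |X ω| * Real.exp |X ω| := by
        rw [← Real.exp_add, abs_of_nonpos hω]; ring_nf
      calc (s ^ 2)⁻¹ * |Real.exp (-(s * X ω)) - 1 - -(s * X ω)|
          ≤ (s ^ 2)⁻¹ * ((s * |X ω|) ^ 2 * Real.exp (s * |X ω|)) := by gcongr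
        _ = |X ω| ^ 2 * Real.exp (s * |X ω|) := by field_simp
        _ ≤ (2 * Real.exp |X ω|) * Real.exp |X ω| := by
            gcongr
            nlinarith [abs_nonneg (X ω), hs1.2]
        _ = _ := by rw [e]; ring
    · rw [Set.indicator_of_notMem (show ω ∉ {ω | X ω ≤ 0} from hω), norm_zero]
      positivity
  · refine Eventually.of_forall fun ω => ?_
    by_cases hω : X ω ≤ 0
    · simp only [Set.indicator_of_mem (show ω ∈ {ω | X ω ≤ 0} from hω)]
      exact g_quad_limit (X ω)
    · simp only [Set.indicator_of_notMem (show ω ∉ {ω | X ω ≤ 0} from hω), mul_zero]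
      exact tendsto_const_nhds

/-- layer cake -/
lemma pos_part_layer {Ω : Type*} [MeasurableSpace Ω] {P : Measure Ω} [IsProbabilityMeasure P]
    {X : Ω → ℝ} (hX : Measurable X) {s : ℝ} (hs : 0 < s) :
    ∫ ω, (Real.exp (-(s * max (X ω) 0)) - 1 + s * max (X ω) 0) ∂P
      = ∫ w in Ioi (0:ℝ), P.real {ω | w ≤ X ω} * (s * (1 - Real.exp (-(s * w)))) := by
  have hIntg : ∀ x : ℝ, ∫ w in (0:ℝ)..x, (s * (1 - Real.exp (-(s * w))))
      = Real.exp (-(s * x)) - 1 + s * x := by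
    intro x
    have hd : ∀ w ∈ Set.uIcc 0 x, HasDerivAt (fun w : ℝ => Real.exp (-(s * w)) - 1 + s * w)
        (s * (1 - Real.exp (-(s * w)))) w := by
      intro w _
      have h1 : HasDerivAt (fun w : ℝ => -(s * w)) (-(s * 1)) w :=
        ((hasDerivAt_id w).const_mul s).neg
      have h2 : HasDerivAt (fun w : ℝ => Real.exp (-(s * w)) - 1 + s * w)
          (Real.exp (-(s * w)) * (-(s * 1)) + s * 1) w :=
        ((h1.exp).sub_const 1).add ((hasDerivAt_id w).const_mul s)
      exact h2.congr_deriv (by ring)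
    rw [intervalIntegral.integral_eq_sub_of_hasDerivAt hd
      (Continuous.intervalIntegrable (by fun_prop) _ _)]
    simp
  have hg0 : ∀ x : ℝ, 0 ≤ x → 0 ≤ s * (1 - Real.exp (-(s * x))) := by
    intro x hx
    have : Real.exp (-(s * x)) ≤ 1 := by
      rw [Real.exp_le_one_iff]; nlinarith
    nlinarith
  have hL := lintegral_comp_eq_lintegral_meas_le_mul P (f := fun ω => max (X ω) 0)
    (g := fun w => s * (1 - Real.exp (-(s * w))))
    (Eventually.of_forall fun ω => le_max_right _ _) (hX.max measurable_const).aemeasurable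
    (fun t ht => Continuous.intervalIntegrable (by fun_prop) _ _)
    (by filter_upwards [ae_restrict_mem measurableSet_Ioi] with x hx using hg0 x (le_of_lt hx))
  rw [integral_eq_lintegral_of_nonneg_ae, integral_eq_lintegral_of_nonneg_ae]
  · congr 1
    simp only [hIntg] at hL
    rw [hL]
    refine setLIntegral_congr_fun measurableSet_Ioi fun w hw => ?_
    have hw0 : (0:ℝ) < w := hw
    have e : {ω | w ≤ max (X ω) 0} = {ω | w ≤ X ω} := by
      ext ω
      simp only [Set.mem_ofPred_eq, le_max_iff]
      constructor
      · rintro (h | h)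
        · exact h
        · linarith
      · exact Or.inl
    simp only [e]
    rw [ENNReal.ofReal_mul measureReal_nonneg, Measure.real, ENNReal.ofReal_toReal (measure_ne_top _ _)]
  · filter_upwards [ae_restrict_mem measurableSet_Ioi] with x hx
    exact mul_nonneg measureReal_nonneg (hg0 x (le_of_lt hx))
  · have ha : Antitone fun w : ℝ => P.real {ω | w ≤ X ω} := by
      intro a b hab
      refine measureReal_mono ?_
      intro ω hω
      exact le_trans hab (show b ≤ X ω from hω)
    have := ha.measurable
    exact (by fun_prop : Measurable fun w : ℝ => P.real {ω | w ≤ X ω} * (s * (1 - Real.exp (-(s * w))))).aestronglyMeasurable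
  · refine Eventually.of_forall fun ω => ?_
    have := Real.add_one_le_exp (-(s * max (X ω) 0))
    simp only [Pi.zero_apply]
    linarith
  · exact (by fun_prop : Measurable fun ω => (Real.exp (-(s * max (X ω) 0)) - 1 + s * max (X ω) 0)).aestronglyMeasurable


lemma real_integral_J {Y : ℝ} (hY : Y ∈ Ioo (1:ℝ) 2) {s : ℝ} (hs : 0 < s) :
    IntegrableOn (fun x : ℝ => (1 - Real.exp (-(s * x))) * x ^ (-Y)) (Ioi 0) ∧
    ∫ x in Ioi (0:ℝ), (1 - Real.exp (-(s * x))) * x ^ (-Y) = - (Real.Gamma (1-Y) * s ^ (Y-1)) := by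
  have e : ∀ x : ℝ, (Complex.exp (-((s:ℂ) * x)) - 1) * ((x ^ (-Y) : ℝ) : ℂ)
      = ((-((1 - Real.exp (-(s * x))) * x ^ (-Y)) : ℝ) : ℂ) := by
    intro x; push_cast; ring
  have h1 := integrableOn_J hY (r := (s:ℂ)) (by simpa using hs.le)
  have h2 := integral_J hY (r := (s:ℂ)) (by simpa using hs)
  simp only [e] at h1 h2
  constructor
  · have h3 : IntegrableOn (fun x : ℝ => RCLike.re
        (((-((1 - Real.exp (-(s * x))) * x ^ (-Y)) : ℝ) : ℂ))) (Ioi 0) := h1.re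
    have h4 := h3.neg
    refine h4.congr (Eventually.of_forall fun x => ?_)
    change -(Complex.re (((-((1 - Real.exp (-(s * x))) * x ^ (-Y)) : ℝ) : ℂ))) = _
    rw [Complex.ofReal_re, neg_neg]
  · rw [integral_complex_ofReal, integral_neg, ← Complex.ofReal_cpow hs.le, ← Complex.ofReal_mul] at h2
    have := Complex.ofReal_injective h2
    linarith

lemma pos_part_limit {Ω : Type*} [MeasurableSpace Ω] {P : Measure Ω} [IsProbabilityMeasure P]
    {X : Ω → ℝ} (hX : Measurable X) {Y K0 K w0 : ℝ} (hY : Y ∈ Ioo (1:ℝ) 2) (hK0 : 0 ≤ K0)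
    (hw0 : 0 < w0)
    (hT : ∀ w : ℝ, w0 ≤ w → |P.real {ω | w ≤ X ω} - K0 * w ^ (-Y)| ≤ K * w ^ (-Y-1)) :
    Tendsto (fun s : ℝ => (s ^ 2)⁻¹ *
        (-(∫ ω, (Real.exp (-(s * max (X ω) 0)) - 1 + s * max (X ω) 0) ∂P)
          - K0 * Real.Gamma (1-Y) * s ^ Y)) (𝓝[>] 0)
      (𝓝 (- ∫ w in Ioi (0:ℝ), w * (P.real {ω | w ≤ X ω} - K0 * w ^ (-Y)))) := by
  have ha : Antitone fun w : ℝ => P.real {ω | w ≤ X ω} := by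
    intro a b hab
    refine measureReal_mono ?_
    intro ω hω
    exact le_trans hab (show b ≤ X ω from hω)
  have hmP := ha.measurable
  set R : ℝ → ℝ := fun w => P.real {ω | w ≤ X ω} - K0 * w ^ (-Y) with hR
  have hmR : Measurable R := by rw [hR]; fun_prop
  have hY1 := hY.1
  have hY2 := hY.2
  have hRi : IntegrableOn (fun w => w * R w) (Ioi 0) := by
    refine integrableOn_of_pow_bounds (A := w0 ^ Y + K0) (B := K) (p := 1 - Y) (q := -Y) (c := w0)
      (by fun_prop) hw0 (by linarith) (by linarith) ?_ ?_
    · intro x hx hxw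
      have h1 : |R x| ≤ 1 + K0 * x ^ (-Y) := by
        rw [hR]
        refine (abs_sub _ _).trans ?_
        rw [abs_of_nonneg measureReal_nonneg, abs_of_nonneg (by positivity)]
        gcongr
        exact measureReal_le_one
      have h2 : 1 ≤ w0 ^ Y * x ^ (-Y) := by
        rw [Real.rpow_neg hx.le, ← div_eq_mul_inv, le_div_iff₀ (by positivity), one_mul]
        exact Real.rpow_le_rpow hx.le hxw (by linarith)
      rw [norm_mul, Real.norm_eq_abs, Real.norm_eq_abs, abs_of_pos hx, Real.rpow_sub hx,
        Real.rpow_one, div_eq_mul_inv, ← Real.rpow_neg hx.le]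
      calc x * |R x| ≤ x * (w0 ^ Y * x ^ (-Y) + K0 * x ^ (-Y)) := by gcongr; linarith
        _ = _ := by ring
    · intro x hx
      have hx0 : 0 < x := hw0.trans hx
      rw [norm_mul, Real.norm_eq_abs, Real.norm_eq_abs, abs_of_pos hx0]
      calc x * |R x| ≤ x * (K * x ^ (-Y-1)) := by gcongr; exact hT x hx.le
        _ = K * x ^ (-Y) := by rw [Real.rpow_sub hx0, Real.rpow_one]; field_simp
  have hlim : Tendsto (fun s : ℝ => ∫ w in Ioi (0:ℝ), s⁻¹ * (1 - Real.exp (-(s * w))) * R w)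
      (𝓝[>] 0) (𝓝 (∫ w in Ioi (0:ℝ), w * R w)) := by
    refine tendsto_integral_filter_of_dominated_convergence (fun w => ‖w * R w‖) ?_ ?_ hRi.norm ?_
    · exact Eventually.of_forall fun s => (by fun_prop : Measurable fun w =>
        s⁻¹ * (1 - Real.exp (-(s * w))) * R w).aestronglyMeasurable
    · filter_upwards [self_mem_nhdsWithin] with s hs
      have hs0 : (0:ℝ) < s := hs
      filter_upwards [ae_restrict_mem measurableSet_Ioi] with w hw
      have hw0 : (0:ℝ) < w := hw
      rw [norm_mul, norm_mul w (R w)]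
      gcongr
      have h1 : Real.exp (-(s * w)) ≤ 1 := by rw [Real.exp_le_one_iff]; nlinarith
      have h2 := Real.add_one_le_exp (-(s * w))
      rw [Real.norm_eq_abs, Real.norm_eq_abs, abs_of_pos hw0, abs_of_nonneg
        (mul_nonneg (by positivity) (by linarith)), inv_mul_le_iff₀ hs0]
      linarith
    · refine Eventually.of_forall fun w => ?_
      refine Tendsto.mul_const _ ?_
      have hd : HasDerivAt (fun s : ℝ => 1 - Real.exp (-(s * w))) w 0 := by
        have h1 : HasDerivAt (fun s : ℝ => -(s * w)) (-(1 * w)) 0 :=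
          ((hasDerivAt_id (0:ℝ)).mul_const w).neg
        have h2 := (h1.exp).const_sub 1
        refine h2.congr_deriv ?_
        simp
      have := hd.tendsto_slope_zero_right
      simpa using this
  refine (hlim.neg).congr' ?_
  filter_upwards [self_mem_nhdsWithin] with s hs
  have hs0 : (0:ℝ) < s := hs
  obtain ⟨hJ1, hJ2⟩ := real_integral_J hY hs0
  have hRs : IntegrableOn (fun w => (1 - Real.exp (-(s * w))) * R w) (Ioi 0) := by
    refine (hRi.norm.const_mul s).mono' (by fun_prop) ?_
    filter_upwards [ae_restrict_mem measurableSet_Ioi] with w hw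
    have hw0 : (0:ℝ) < w := hw
    rw [norm_mul, norm_mul w (R w), ← mul_assoc]
    gcongr
    have h1 : Real.exp (-(s * w)) ≤ 1 := by rw [Real.exp_le_one_iff]; nlinarith
    have h2 := Real.add_one_le_exp (-(s * w))
    rw [Real.norm_eq_abs, Real.norm_eq_abs, abs_of_pos hw0, abs_of_nonneg (by linarith)]
    linarith
  have hsplit : ∫ w in Ioi (0:ℝ), P.real {ω | w ≤ X ω} * (s * (1 - Real.exp (-(s * w))))
      = s * (∫ w in Ioi (0:ℝ), (1 - Real.exp (-(s * w))) * R w)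
        + s * K0 * -(Real.Gamma (1-Y) * s ^ (Y-1)) := by
    rw [← hJ2, ← integral_const_mul, ← integral_const_mul,
      ← integral_add (hRs.const_mul s) (hJ1.const_mul (s * K0))]
    refine integral_congr_ae (Eventually.of_forall fun w => ?_)
    simp only [hR]
    ring
  rw [pos_part_layer hX hs0, hsplit]
  have e1 : ∫ w in Ioi (0:ℝ), s⁻¹ * (1 - Real.exp (-(s * w))) * R w
      = s⁻¹ * ∫ w in Ioi (0:ℝ), (1 - Real.exp (-(s * w))) * R w := by
    rw [← integral_const_mul]
    refine integral_congr_ae (Eventually.of_forall fun w => ?_)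
    simp only [mul_assoc]
  rw [e1]
  have e2 : s ^ Y = s * s ^ (Y-1) := by
    rw [Real.rpow_sub hs0, Real.rpow_one]; field_simp
  rw [e2]
  generalize (∫ w in Ioi (0:ℝ), (1 - Real.exp (-(s * w))) * R w) = I
  rw [show -(s * I + s * K0 * -(Real.Gamma (1 - Y) * s ^ (Y - 1)))
    - K0 * Real.Gamma (1 - Y) * (s * s ^ (Y - 1)) = -(s * I) by ring]
  field_simp

lemma X_limit {Ω : Type*} [MeasurableSpace Ω] {P : Measure Ω} [IsProbabilityMeasure P]
    {X : Ω → ℝ} (hX : Measurable X) (hXi : Integrable X P)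
    (hE : ∀ l : ℝ, 0 ≤ l → Integrable (fun ω => Real.exp (-(l * X ω))) P)
    {Y K0 K w0 : ℝ} (hY : Y ∈ Ioo (1:ℝ) 2) (hK0 : 0 ≤ K0) (hw0 : 0 < w0)
    (hT : ∀ w : ℝ, w0 ≤ w → |P.real {ω | w ≤ X ω} - K0 * w ^ (-Y)| ≤ K * w ^ (-Y-1)) :
    Tendsto (fun s : ℝ => (s ^ 2)⁻¹ *
        ((∫ ω, (1 - Real.exp (-(s * X ω)) - s * X ω) ∂P) - K0 * Real.Gamma (1-Y) * s ^ Y)) (𝓝[>] 0)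
      (𝓝 (-(1/2) * (∫ ω, {ω | X ω ≤ 0}.indicator (fun ω => X ω ^ 2) ω ∂P)
        - ∫ w in Ioi (0:ℝ), w * (P.real {ω | w ≤ X ω} - K0 * w ^ (-Y)))) := by
  rw [sub_eq_add_neg]
  refine ((neg_part_limit hX hE).add (pos_part_limit hX hY hK0 hw0 hT)).congr' ?_
  filter_upwards [self_mem_nhdsWithin] with s hs
  have hs0 : (0:ℝ) < s := hs
  have hgi : Integrable (fun ω => 1 - Real.exp (-(s * X ω)) - s * X ω) P :=
    ((integrable_const 1).sub (hE s hs0.le)).sub (hXi.const_mul s)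
  have hms : MeasurableSet {ω | X ω ≤ 0} := measurableSet_le hX measurable_const
  have hni := (hgi.const_mul ((s^2)⁻¹)).indicator hms
  have hpe : ∀ ω, Real.exp (-(s * max (X ω) 0)) - 1 + s * max (X ω) 0
      = -({ω | X ω ≤ 0}ᶜ.indicator (fun ω => 1 - Real.exp (-(s * X ω)) - s * X ω) ω) := by
    intro ω
    by_cases hω : X ω ≤ 0
    · rw [Set.indicator_of_notMem (by simpa using hω), max_eq_right hω]; simp
    · rw [Set.indicator_of_mem (by simpa using hω), max_eq_left (le_of_not_ge hω)]; ring
  have hpi := hgi.indicator hms.compl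
  simp only [hpe]
  rw [integral_neg, neg_neg]
  have h1 : ∫ ω, {ω | X ω ≤ 0}.indicator
        (fun ω => (s ^ 2)⁻¹ * (1 - Real.exp (-(s * X ω)) - s * X ω)) ω ∂P
      = (s ^ 2)⁻¹ * ∫ ω, {ω | X ω ≤ 0}.indicator
        (fun ω => (1 - Real.exp (-(s * X ω)) - s * X ω)) ω ∂P := by
    rw [← integral_const_mul]
    refine integral_congr_ae (Eventually.of_forall fun ω => ?_)
    simp only [Set.indicator_apply]
    split_ifs <;> simp
  have h2 : ∫ ω, (1 - Real.exp (-(s * X ω)) - s * X ω) ∂P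
      = (∫ ω, {ω | X ω ≤ 0}.indicator (fun ω => (1 - Real.exp (-(s * X ω)) - s * X ω)) ω ∂P)
      + ∫ ω, {ω | X ω ≤ 0}ᶜ.indicator (fun ω => (1 - Real.exp (-(s * X ω)) - s * X ω)) ω ∂P := by
    rw [integral_indicator hms, integral_indicator hms.compl, integral_add_compl hms hgi]
  rw [h1, h2]
  ring

lemma g_perturb {s x y c : ℝ} (hs0 : 0 < s) (hs1 : s ≤ 1) (hc : |y - x| ≤ c) (hc1 : c ≤ 1) :
    |(1 - Real.exp (-(s * y)) - s * y) - (1 - Real.exp (-(s * x)) - s * x)|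
      ≤ s ^ 2 * c * ((|x| + 1) * (1 + Real.exp 1) + Real.exp 1 * (|x| + Real.exp (-(2 * x)) + Real.exp (-(1 * x)))) := by
  have hc0 : 0 ≤ c := (abs_nonneg _).trans hc
  set B := ((|x| + 1) * (1 + Real.exp 1) + Real.exp 1 * (|x| + Real.exp (-(2 * x)) + Real.exp (-(1 * x))))
    with hB
  have hder : ∀ z ∈ Set.uIcc x y, HasDerivWithinAt (fun z : ℝ => 1 - Real.exp (-(s * z)) - s * z)
      (s * (Real.exp (-(s * z)) - 1)) (Set.uIcc x y) z := by
    intro z _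
    have h1 : HasDerivAt (fun w : ℝ => -(s * w)) (-(s * 1)) z := ((hasDerivAt_id z).const_mul s).neg
    have h2 : HasDerivAt (fun z : ℝ => 1 - Real.exp (-(s * z)) - s * z)
        (-(Real.exp (-(s * z)) * (-(s * 1))) - s * 1) z :=
      ((h1.exp).const_sub 1).sub ((hasDerivAt_id z).const_mul s)
    exact (h2.congr_deriv (by ring)).hasDerivWithinAt
  have hbd : ∀ z ∈ Set.uIcc x y, ‖s * (Real.exp (-(s * z)) - 1)‖ ≤ s ^ 2 * B := by
    intro z hz
    have hzx : |z - x| ≤ 1 := by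
      have := Set.abs_sub_left_of_mem_uIcc hz
      linarith
    have hz1 : |z| ≤ |x| + 1 := by
      have := abs_sub_abs_le_abs_sub z x
      linarith
    have h1 : |Real.exp (-(s * z)) - 1| ≤ s * |z| * (1 + Real.exp (-(s * z))) := by
      have a1 := Real.add_one_le_exp (-(s * z))
      have a2 := Real.add_one_le_exp (s * z)
      have a3 : Real.exp (s * z) * Real.exp (-(s * z)) = 1 := by rw [← Real.exp_add]; simp
      have a4 := Real.exp_pos (-(s * z))
      have b1 : s * z ≤ s * |z| := by gcongr; exact le_abs_self z
      have b2 : -(s * z) ≤ s * |z| := by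
        have := neg_abs_le z
        nlinarith
      have b3 : 0 ≤ s * |z| := by positivity
      rw [abs_le]
      constructor
      · nlinarith
      · nlinarith
    have h2 : Real.exp (-(s * z)) ≤ Real.exp 1 * (1 + Real.exp (-(1 * x))) := by
      have hz' : -(s * z) ≤ 1 + -(s * x) := by
        have := (abs_le.1 hzx).1
        nlinarith
      calc Real.exp (-(s * z)) ≤ Real.exp (1 + -(s * x)) := Real.exp_le_exp.2 hz'
        _ = Real.exp 1 * Real.exp (-(s * x)) := Real.exp_add _ _
        _ ≤ _ := by
            gcongr
            rcases le_total 0 x with hx | hx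
            · have : Real.exp (-(s * x)) ≤ 1 := by rw [Real.exp_le_one_iff]; nlinarith
              have := Real.exp_pos (-(1 * x))
              linarith
            · have : Real.exp (-(s * x)) ≤ Real.exp (-(1 * x)) := Real.exp_le_exp.2 (by nlinarith)
              linarith
    have h3 : |x| * Real.exp (-(1 * x)) ≤ |x| + Real.exp (-(2 * x)) := by
      rcases le_total 0 x with hx | hx
      · have : Real.exp (-(1 * x)) ≤ 1 := by rw [Real.exp_le_one_iff]; linarith
        have := Real.exp_pos (-(2 * x))
        nlinarith [abs_nonneg x]
      · have e : Real.exp (-(2 * x)) = Real.exp (-(1 * x)) * Real.exp (-(1 * x)) := by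
          rw [← Real.exp_add]; ring_nf
        have := Real.add_one_le_exp (-(1 * x))
        have := Real.exp_pos (-(1 * x))
        rw [abs_of_nonpos hx, e]
        nlinarith
    have h4 : |z| * (1 + Real.exp (-(s * z))) ≤ B := by
      calc |z| * (1 + Real.exp (-(s * z)))
          ≤ (|x| + 1) * (1 + Real.exp 1 * (1 + Real.exp (-(1 * x)))) := by gcongr
        _ = (|x| + 1) * (1 + Real.exp 1)
            + Real.exp 1 * (|x| * Real.exp (-(1 * x)) + Real.exp (-(1 * x))) := by ring
        _ ≤ B := by rw [hB]; gcongr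
    rw [norm_mul, Real.norm_eq_abs, Real.norm_eq_abs, abs_of_pos hs0]
    calc s * |Real.exp (-(s * z)) - 1| ≤ s * (s * |z| * (1 + Real.exp (-(s * z)))) := by gcongr
      _ = s ^ 2 * (|z| * (1 + Real.exp (-(s * z)))) := by ring
      _ ≤ _ := by gcongr
  have h := (convex_uIcc x y).norm_image_sub_le_of_norm_hasDerivWithin_le hder hbd
    Set.left_mem_uIcc Set.right_mem_uIcc
  have hB0 : 0 ≤ B := by rw [hB]; positivity
  calc _ ≤ s ^ 2 * B * ‖y - x‖ := h
    _ ≤ s ^ 2 * B * c := by gcongr; exact hc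
    _ = _ := by ring


lemma gamma_t_limit {Y : ℝ} (hY : Y ∈ Ioo (1:ℝ) 2) {κ : ℝ → ℝ} {e₁ e₂ γ' : ℝ}
    (hκ : (fun t => κ t - (e₁ * t + e₂ * t ^ (2 - 1/Y))) =o[𝓝[>] (0:ℝ)] fun t => t ^ (2 - 1/Y)) :
    Tendsto (fun t : ℝ => t ^ (1 - 1/Y) * (γ' - κ t / t)) (𝓝[>] 0) (𝓝 0) := by
  have hY1 := hY.1
  have ha : 0 < 1 - 1/Y := by
    have : 1 / Y < 1 := by rw [div_lt_one (by linarith)]; exact hY1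
    linarith
  have hpow : Tendsto (fun t : ℝ => t ^ (1 - 1/Y)) (𝓝[>] 0) (𝓝 0) := by
    have := (Real.continuousAt_rpow_const 0 (1 - 1/Y) (Or.inr ha.le)).tendsto
    rw [Real.zero_rpow ha.ne'] at this
    exact this.mono_left nhdsWithin_le_nhds
  have hq := hκ.tendsto_div_nhds_zero
  have h1 : Tendsto (fun t : ℝ => γ' - (e₁ + e₂ * t ^ (1 - 1/Y)
      + (κ t - (e₁ * t + e₂ * t ^ (2 - 1/Y))) / t ^ (2 - 1/Y) * t ^ (1 - 1/Y))) (𝓝[>] 0)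
      (𝓝 (γ' - (e₁ + e₂ * 0 + 0 * 0))) :=
    tendsto_const_nhds.sub ((tendsto_const_nhds.add (hpow.const_mul e₂)).add (hq.mul hpow))
  have h2 := hpow.mul h1
  rw [zero_mul] at h2
  refine h2.congr' ?_
  filter_upwards [self_mem_nhdsWithin] with t ht
  have ht0 : (0:ℝ) < t := ht
  have e : t ^ (2 - 1/Y) = t * t ^ (1 - 1/Y) := by
    rw [show 2 - 1/Y = 1 + (1 - 1/Y) by ring, Real.rpow_add ht0, Real.rpow_one]
  have hp : 0 < t ^ (1 - 1/Y) := Real.rpow_pos_of_pos ht0 _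
  rw [e]
  generalize t ^ (1 - 1/Y) = q at *
  congr 2
  field_simp
  ring


/-- Step-1 limit in the proof of Theorem 3.1 (display (ConclStep1)). -/
theorem stmt7
    {Ω : Type} [MeasurableSpace Ω] (P : Measure Ω) [IsProbabilityMeasure P]
    (Y C M G : ℝ) (hY : Y ∈ Set.Ioo (1:ℝ) 2) (hC : 0 < C) (hM : 1 < M) (hG : 0 < G)
    (U V : Ω → ℝ) (hU : Measurable U) (hV : Measurable V)
    (hIndep : IndepFun U V P)
    (hUchar : ∀ u : ℝ, (∫ ω, Complex.exp (Complex.I * u * (U ω)) ∂P) =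
      Complex.exp (((C * Real.Gamma (-Y) * |u| ^ Y : ℝ) : ℂ) *
        (((Real.cos (Real.pi * Y / 2) : ℝ) : ℂ)
          - Complex.I * ((Real.sign u : ℝ) : ℂ) * ((Real.sin (Real.pi * Y / 2) : ℝ) : ℂ))))
    (hVchar : ∀ u : ℝ, (∫ ω, Complex.exp (Complex.I * u * (V ω)) ∂P) =
      Complex.exp (((C * Real.Gamma (-Y) * |u| ^ Y : ℝ) : ℂ) *
        (((Real.cos (Real.pi * Y / 2) : ℝ) : ℂ)
          - Complex.I * ((Real.sign u : ℝ) : ℂ) * ((Real.sin (Real.pi * Y / 2) : ℝ) : ℂ))))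
    (Z Ut : Ω → ℝ)
    (hZ : Z = fun ω => U ω - V ω)
    (hUt : Ut = fun ω => (M - 1) * U ω + (G + 1) * V ω)
    (κ : ℝ → ℝ) (e₁ e₂ : ℝ)
    (hκ : (fun t => κ t - (e₁ * t + e₂ * t ^ (2 - 1/Y))) =o[𝓝[>] (0:ℝ)]
      fun t => t ^ (2 - 1/Y))
    (γ' : ℝ)
    (hγ' : γ' = -C * Real.Gamma (-Y) * ((M-1) ^ Y + (G+1) ^ Y - M ^ Y - G ^ Y))
    (γt : ℝ → ℝ)
    (hγt : ∀ t, γt t = t ^ (1 - 1/Y) * (γ' - κ t / t))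
    (ϑ d₃₂ : ℝ)
    (hϑ : ϑ = -C * Real.Gamma (-Y) * (M ^ Y + (G+1) ^ Y))
    (hd₃₂ : d₃₂ = -(1/2) * (∫ ω, Set.indicator {ω | max (Z ω) 0 + Ut ω ≤ 0}
        (fun ω => (max (Z ω) 0 + Ut ω) ^ 2) ω ∂P)
      - ∫ w in Set.Ioi (0:ℝ), w * ((P {ω | w ≤ max (Z ω) 0 + Ut ω}).toReal
          - C * M ^ Y / (Y * w ^ Y) - C * (G+1) ^ Y / (Y * w ^ Y))) :
    Filter.Tendsto
      (fun t => t ^ (1 - 2/Y) *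
        (t⁻¹ * (∫ ω, (1 - Real.exp (-(t ^ (1/Y) * (Ut ω + max (Z ω + γt t) 0)))
            - t ^ (1/Y) * (Ut ω + max (Z ω + γt t) 0)) ∂P) - ϑ))
      (𝓝[>] (0:ℝ)) (𝓝 d₃₂) := by

  have hY1 := hY.1
  have hY0 : 0 < Y := by linarith
  have hM1 : 0 < M - 1 := by linarith
  have hG1 : 0 < G + 1 := by linarith
  obtain ⟨hUi, hUe, K1, hK1, hT1⟩ := stable_props hY hC hU hUchar
  obtain ⟨hVi, hVe, K2, hK2, hT2⟩ := stable_props hY hC hV hVchar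
  have hk : 0 ≤ C / Y := by positivity
  obtain ⟨K, hK, hT⟩ := two_dim_tail hY hk hM hG hU hV hIndep hUi hVi hK1 hK2 hT1 hT2
  set K0 := C / Y * (M ^ Y + (G+1) ^ Y) with hK0d
  have hM0 : 0 < M := by linarith
  have hK0 : 0 ≤ K0 := by positivity
  have hZm : Measurable Z := by rw [hZ]; exact hU.sub hV
  have hUtm : Measurable Ut := by rw [hUt]; exact (hU.const_mul _).add (hV.const_mul _)
  have hZi : Integrable Z P := by rw [hZ]; exact hUi.sub hVi
  have hUti : Integrable Ut P := by rw [hUt]; exact (hUi.const_mul _).add (hVi.const_mul _)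
  set X : Ω → ℝ := fun ω => max (Z ω) 0 + Ut ω with hXd
  have hXm : Measurable X := (hZm.max measurable_const).add hUtm
  have hXi : Integrable X P := hZi.pos_part.add hUti
  have hXT : ∀ w : ℝ, 3 * (M + G) ≤ w →
      |P.real {ω | w ≤ X ω} - K0 * w ^ (-Y)| ≤ K * w ^ (-Y-1) := by
    intro w hw
    have h := hT w hw
    simp only [hXd, hZ, hUt]
    exact h
  have hE : ∀ l : ℝ, 0 ≤ l → Integrable (fun ω => Real.exp (-(l * X ω))) P := by
    intro l hl
    have hi : IndepFun (fun ω => Real.exp (-((l * (M-1)) * U ω)))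
        (fun ω => Real.exp (-((l * (G+1)) * V ω))) P :=
      hIndep.comp (φ := fun x => Real.exp (-((l * (M-1)) * x)))
        (ψ := fun x => Real.exp (-((l * (G+1)) * x))) (by fun_prop) (by fun_prop)
    have hp := hi.integrable_mul (hUe (l * (M-1)) (by positivity)) (hVe (l * (G+1)) (by positivity))
    refine hp.mono' (by fun_prop) (Eventually.of_forall fun ω => ?_)
    rw [Real.norm_eq_abs, abs_of_pos (Real.exp_pos _)]
    simp only [Pi.mul_apply]
    rw [← Real.exp_add, Real.exp_le_exp]
    have h0 := le_max_right (Z ω) 0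
    have e : X ω = max (Z ω) 0 + ((M - 1) * U ω + (G + 1) * V ω) := by
      simp only [hXd, hUt]
    rw [e]
    nlinarith [mul_nonneg hl h0]
  have hL := X_limit hXm hXi hE hY hK0 (show 0 < 3 * (M + G) by linarith) hXT
  have hGam : K0 * Real.Gamma (1 - Y) = ϑ := by
    have h := Real.Gamma_add_one (show -Y ≠ 0 by linarith)
    rw [show 1 - Y = -Y + 1 by ring, h, hϑ, hK0d]
    field_simp
  have hd : -(1/2) * (∫ ω, {ω | X ω ≤ 0}.indicator (fun ω => X ω ^ 2) ω ∂P)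
        - ∫ w in Ioi (0:ℝ), w * (P.real {ω | w ≤ X ω} - K0 * w ^ (-Y)) = d₃₂ := by
    rw [hd₃₂]
    congr 1
    refine setIntegral_congr_fun measurableSet_Ioi fun w hw => ?_
    have hw0 : (0:ℝ) < w := hw
    have hp : 0 < w ^ Y := Real.rpow_pos_of_pos hw0 _
    simp only [Measure.real, hK0d, Real.rpow_neg hw0.le]
    field_simp
    ring
  rw [hd] at hL
  have hs : Tendsto (fun t : ℝ => t ^ (1/Y)) (𝓝[>] 0) (𝓝[>] 0) := by
    have ha : 0 < 1 / Y := by positivity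
    refine tendsto_nhdsWithin_iff.2 ⟨?_, ?_⟩
    · have := (Real.continuousAt_rpow_const 0 (1/Y) (Or.inr ha.le)).tendsto
      rw [Real.zero_rpow ha.ne'] at this
      exact this.mono_left nhdsWithin_le_nhds
    · filter_upwards [self_mem_nhdsWithin] with t ht
      exact Real.rpow_pos_of_pos ht _
  have hg : Tendsto γt (𝓝[>] 0) (𝓝 0) :=
    (gamma_t_limit hY (γ' := γ') hκ).congr fun t => (hγt t).symm
  have hga : Tendsto (fun t => |γt t|) (𝓝[>] 0) (𝓝 0) := by simpa using hg.abs
  set B : Ω → ℝ := fun ω => (|X ω| + 1) * (1 + Real.exp 1)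
    + Real.exp 1 * (|X ω| + Real.exp (-(2 * X ω)) + Real.exp (-(1 * X ω))) with hB
  have hBi : Integrable B P :=
    ((hXi.abs.add (integrable_const 1)).mul_const _).add
      (((hXi.abs.add (hE 2 (by norm_num))).add (hE 1 (by norm_num))).const_mul _)
  have herr : Tendsto (fun t : ℝ => ((t ^ (1/Y)) ^ 2)⁻¹ *
      ((∫ ω, (1 - Real.exp (-(t ^ (1/Y) * (Ut ω + max (Z ω + γt t) 0)))
            - t ^ (1/Y) * (Ut ω + max (Z ω + γt t) 0)) ∂P)
        - ∫ ω, (1 - Real.exp (-(t ^ (1/Y) * X ω)) - t ^ (1/Y) * X ω) ∂P)) (𝓝[>] 0) (𝓝 0) := by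
    have hb : Tendsto (fun t => |γt t| * ∫ ω, B ω ∂P) (𝓝[>] 0) (𝓝 0) := by
      simpa using hga.mul_const (∫ ω, B ω ∂P)
    refine squeeze_zero_norm' ?_ hb
    have hs1 : ∀ᶠ t : ℝ in 𝓝[>] 0, t ^ (1/Y) ∈ Ioo (0:ℝ) 1 :=
      hs.eventually (Ioo_mem_nhdsGT (by norm_num))
    have hg1 : ∀ᶠ t : ℝ in 𝓝[>] 0, |γt t| < 1 := hga.eventually (gt_mem_nhds (by norm_num))
    filter_upwards [hs1, hg1] with t hs1 hg1
    generalize t ^ (1/Y) = s at hs1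
    generalize γt t = γ at hg1
    have hs0 : 0 < s := hs1.1
    have hpt : ∀ ω, |(1 - Real.exp (-(s * (Ut ω + max (Z ω + γ) 0))) - s * (Ut ω + max (Z ω + γ) 0))
        - (1 - Real.exp (-(s * X ω)) - s * X ω)| ≤ s ^ 2 * |γ| * B ω := by
      intro ω
      refine g_perturb hs0 hs1.2.le ?_ hg1.le
      have e : Ut ω + max (Z ω + γ) 0 - X ω = max (Z ω + γ) 0 - max (Z ω) 0 := by
        simp only [hXd]; ring
      rw [e]
      refine (abs_max_sub_max_le_abs _ _ _).trans ?_
      simp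
    have hXgi : Integrable (fun ω => 1 - Real.exp (-(s * X ω)) - s * X ω) P :=
      ((integrable_const 1).sub (hE s hs0.le)).sub (hXi.const_mul s)
    have hdi : Integrable (fun ω => (1 - Real.exp (-(s * (Ut ω + max (Z ω + γ) 0)))
        - s * (Ut ω + max (Z ω + γ) 0)) - (1 - Real.exp (-(s * X ω)) - s * X ω)) P := by
      refine (hBi.const_mul (s ^ 2 * |γ|)).mono' (by fun_prop) (Eventually.of_forall hpt)
    have hXtgi : Integrable (fun ω => (1 - Real.exp (-(s * (Ut ω + max (Z ω + γ) 0)))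
        - s * (Ut ω + max (Z ω + γ) 0))) P := by
      refine (hdi.add hXgi).congr (Eventually.of_forall fun ω => ?_)
      simp only [Pi.add_apply]
      ring
    rw [← integral_sub hXtgi hXgi, norm_mul, Real.norm_eq_abs, abs_of_pos
      (show 0 < (s ^ 2)⁻¹ by positivity), inv_mul_le_iff₀ (by positivity), ← mul_assoc,
      ← integral_const_mul]
    exact norm_integral_le_of_norm_le (hBi.const_mul _) (Eventually.of_forall hpt)
  have hfin := (hL.comp hs).add herr
  rw [add_zero] at hfin
  refine hfin.congr' ?_
  filter_upwards [self_mem_nhdsWithin] with t ht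
  have ht0 : (0:ℝ) < t := ht
  have hsY : (t ^ (1/Y)) ^ Y = t := by
    rw [← Real.rpow_mul ht0.le, one_div_mul_cancel hY0.ne', Real.rpow_one]
  have hs2 : t ^ (1 - 2/Y) = t * ((t ^ (1/Y)) ^ 2)⁻¹ := by
    rw [← Real.rpow_natCast, ← Real.rpow_mul ht0.le, Real.rpow_sub ht0, Real.rpow_one,
      div_eq_mul_inv]
    congr 3
    push_cast
    ring
  simp only [Function.comp_apply]
  rw [hsY, hGam, hs2]
  field_simp
  ring
end

section
/- Second-order shift expansion for the positive part of a symmetric stable variable (Step 2 in the proof of Theorem 3.1): if Z is a random variable with law μ, then E[(Z+ε)⁺] − E[Z⁺] = ε/2 + (p(0)/2)·ε² + o(ε²) as ε → 0 in ℝ, where a⁺ := max(a,0). -/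
open MeasureTheory Filter Topology Asymptotics Set

lemma aux_cos_int (μ : Measure ℝ) [IsProbabilityMeasure μ] (Y c : ℝ) 
    (hchar : ∀ u : ℝ, (∫ x, Complex.exp (Complex.I * u * x) ∂μ)
      = (Real.exp (-(c * |u| ^ Y)) : ℂ)) (u : ℝ) :
    ∫ x, Real.cos (u * x) ∂μ = Real.exp (-(c * |u| ^ Y)) := by
  have h := congrArg Complex.re (hchar u)
  rw [Complex.ofReal_re] at h
  rw [← h]
  have hi : Integrable (fun x : ℝ => Complex.exp (Complex.I * u * x)) μ := by
    refine Integrable.of_bound (C := 1) (by fun_prop) (Eventually.of_forall fun x => ?_)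
    rw [show Complex.I * u * x = ((u * x : ℝ) : ℂ) * Complex.I by push_cast; ring,
      Complex.norm_exp_ofReal_mul_I]
  have := integral_re hi
  simp only [RCLike.re_eq_complex_re] at this
  rw [← this]
  congr 1
  ext x
  rw [show Complex.I * u * x = ((u * x : ℝ) : ℂ) * Complex.I by push_cast; ring,
      Complex.exp_ofReal_mul_I_re]

lemma aux_bound (x : ℝ) : ENNReal.ofReal |x| ≤ 1 + ENNReal.ofReal (Real.pi ^ 2 / 2) *
    ∫⁻ u in Ioc (0:ℝ) 1, ENNReal.ofReal ((1 - Real.cos (u * x)) / u ^ 2) := by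
  rcases le_or_gt |x| 1 with hx | hx
  · exact (ENNReal.ofReal_le_one.2 hx).trans le_self_add
  refine le_trans ?_ le_add_self
  have hx0 : 0 < |x| := by linarith
  have h1 : ∫⁻ u in Ioc (0:ℝ) (1/|x|), ENNReal.ofReal (2 / Real.pi ^ 2 * x ^ 2) ≤
      ∫⁻ u in Ioc (0:ℝ) 1, ENNReal.ofReal ((1 - Real.cos (u * x)) / u ^ 2) := by
    refine le_trans (setLIntegral_mono' measurableSet_Ioc fun u hu => ?_)
      (lintegral_mono_set (Ioc_subset_Ioc_right ?_))
    · apply ENNReal.ofReal_le_ofReal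
      have hu0 : 0 < u := hu.1
      rw [le_div_iff₀ (by positivity)]
      have := Real.cos_le_one_sub_mul_cos_sq (x := u * x) (by
        rw [abs_mul, abs_of_pos hu0]
        have := (le_div_iff₀ hx0).1 hu.2
        linarith [Real.pi_gt_three])
      nlinarith
    · rw [div_le_one hx0]; exact hx.le
  refine le_trans ?_ (mul_le_mul_right h1 _)
  rw [setLIntegral_const, Real.volume_Ioc, ← ENNReal.ofReal_mul (by positivity),
    ← ENNReal.ofReal_mul (by positivity)]
  apply ENNReal.ofReal_le_ofReal
  apply le_of_eq
  have := Real.pi_pos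
  rw [← sq_abs x]
  field_simp
  simp

lemma aux_integrable (μ : Measure ℝ) [IsProbabilityMeasure μ] (Y c : ℝ) (hY : Y ∈ Set.Ioo (1:ℝ) 2)
    (hchar : ∀ u : ℝ, (∫ x, Complex.exp (Complex.I * u * x) ∂μ)
      = (Real.exp (-(c * |u| ^ Y)) : ℂ)) : Integrable (fun x : ℝ => x) μ := by
  refine ⟨by fun_prop, ?_⟩
  rw [hasFiniteIntegral_iff_norm]
  simp only [Real.norm_eq_abs]
  refine lt_of_le_of_lt (lintegral_mono aux_bound) ?_
  rw [lintegral_add_left (by fun_prop), lintegral_const_mul' _ _ ENNReal.ofReal_ne_top]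
  simp only [lintegral_one, measure_univ]
  refine ENNReal.add_lt_top.2 ⟨by simp, ENNReal.mul_lt_top ENNReal.ofReal_lt_top ?_⟩
  rw [lintegral_lintegral_swap (by 
    apply Measurable.aemeasurable
    unfold Function.uncurry
    fun_prop)]
  have hint : IntegrableOn (fun u : ℝ => c * u ^ (Y - 2)) (Ioc 0 1) := by
    have := (intervalIntegral.intervalIntegrable_rpow' (a := 0) (b := 1) (r := Y - 2) 
      (by linarith [hY.1])).const_mul c
    rwa [intervalIntegrable_iff_integrableOn_Ioc_of_le zero_le_one] at this
  refine lt_of_le_of_lt (setLIntegral_mono' measurableSet_Ioc (g := fun u => ENNReal.ofReal (c * u ^ (Y - 2))) fun u hu => ?_) ?_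
  · have hu0 : 0 < u := hu.1
    have hci : Integrable (fun x : ℝ => Real.cos (u * x)) μ := 
      Integrable.of_bound (C := 1) (by fun_prop) (Eventually.of_forall fun x => by 
        simpa using Real.abs_cos_le_one _)
    rw [← ofReal_integral_eq_lintegral_ofReal]
    · apply ENNReal.ofReal_le_ofReal
      rw [integral_div, integral_sub (integrable_const _) hci, aux_cos_int μ Y c hchar]
      simp only [integral_const, probReal_univ, smul_eq_mul, mul_one]
      rw [abs_of_pos hu0, Real.rpow_sub hu0, Real.rpow_two, ← mul_div_assoc]
      gcongr
      linarith [Real.add_one_le_exp (-(c * u ^ Y))]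
    · exact ((integrable_const _).sub hci).div_const _
    · exact Eventually.of_forall fun x => div_nonneg (by linarith [Real.cos_le_one (u * x)]) (by positivity)
  · exact hint.lintegral_lt_top

lemma aux_symm (μ : Measure ℝ) [IsProbabilityMeasure μ] (Y c : ℝ) 
    (hchar : ∀ u : ℝ, (∫ x, Complex.exp (Complex.I * u * x) ∂μ)
      = (Real.exp (-(c * |u| ^ Y)) : ℂ)) (h0 : μ {0} = 0) : μ.real (Ioi 0) = 1 / 2 := by
  have hcf : ∀ t, charFun μ t = (Real.exp (-(c * |t| ^ Y)) : ℂ) := by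
    intro t
    rw [charFun_apply_real, ← hchar]
    congr 1; ext x; congr 1; ring
  have hm : Measure.map (fun x : ℝ => -x) μ = μ := by
    have : IsProbabilityMeasure (Measure.map (fun x : ℝ => -x) μ) := 
      Measure.isProbabilityMeasure_map (by fun_prop)
    apply Measure.ext_of_charFun
    ext t
    rw [charFun_apply_real, integral_map (by fun_prop) (by fun_prop), hcf t]
    have := hcf (-t)
    rw [charFun_apply_real, abs_neg] at this
    rw [← this]
    congr 1; ext x; congr 1; push_cast; ring
  have h1 : μ.real (Iio 0) = μ.real (Ioi 0) := by
    conv_rhs => rw [← hm]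
    rw [map_measureReal_apply (by fun_prop) measurableSet_Ioi]
    congr 1; ext x; simp
  have h2 : μ.real (Iic 0) = μ.real (Iio 0) := by
    rw [← Iio_union_right, measureReal_union (by simp) (by simp)]
    simp [measureReal_def, h0]
  have h3 := measureReal_compl (μ := μ) (s := Iic (0:ℝ)) measurableSet_Iic
  rw [compl_Iic, probReal_univ] at h3
  linarith

lemma aux_expint (Y c : ℝ) (hY : Y ∈ Set.Ioo (1:ℝ) 2) (hc : 0 < c) :
    Integrable (fun u : ℝ => Real.exp (-(c * |u| ^ Y))) := by
  have h : IntegrableOn (fun u : ℝ => Real.exp (-(c * |u| ^ Y))) (Ioi 0) := by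
    refine (integrableOn_rpow_mul_exp_neg_mul_rpow (s := 0) (p := Y) (b := c) (by norm_num) (by linarith [hY.1]) hc).congr_fun (fun x hx => ?_) measurableSet_Ioi
    have hx : (0:ℝ) < x := hx
    simp [abs_of_pos hx]
  have h2 : IntegrableOn (fun u : ℝ => Real.exp (-(c * |u| ^ Y))) (Iic 0) := by
    rw [← Measure.map_neg_eq_self (volume : Measure ℝ)]
    let m : MeasurableEmbedding fun x : ℝ => -x := (Homeomorph.neg ℝ).measurableEmbedding
    rw [m.integrableOn_map_iff]
    simp_rw [Function.comp_def, abs_neg, neg_preimage, neg_Iic, neg_zero]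
    exact Iff.mpr integrableOn_Ici_iff_integrableOn_Ioi h
  rw [← integrableOn_univ, ← Iic_union_Ioi (a := (0:ℝ))]
  exact h2.union h

open FourierTransform in
lemma aux_pos (μ : Measure ℝ) [IsProbabilityMeasure μ] (Y c : ℝ) (hY : Y ∈ Set.Ioo (1:ℝ) 2) 
    (hc : 0 < c) (hchar : ∀ u : ℝ, (∫ x, Complex.exp (Complex.I * u * x) ∂μ)
      = (Real.exp (-(c * |u| ^ Y)) : ℂ)) 
    (p : ℝ → ℝ) (hp : Continuous p)
    (hdens : μ = MeasureTheory.volume.withDensity (fun x => ENNReal.ofReal (p x))) : 0 < p 0 := by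
  have hm : Measurable (fun x => (p x).toNNReal) := by fun_prop
  have hd : μ = volume.withDensity (fun x => (((p x).toNNReal : NNReal) : ENNReal)) := hdens
  set f : ℝ → ℂ := fun x => (((p x).toNNReal : ℝ) : ℂ) with hf
  have hfc : Continuous f := by fun_prop
  have hfi : Integrable f := by
    have h1 : Integrable (fun _ : ℝ => (1:ℂ)) μ := integrable_const _
    rw [hd, integrable_withDensity_iff_integrable_smul hm] at h1
    refine h1.congr (Eventually.of_forall fun x => ?_)
    simp [hf, NNReal.smul_def]
  have hF : ∀ w, 𝓕 f w = (Real.exp (-(c * |2 * Real.pi * w| ^ Y)) : ℂ) := by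
    intro w
    rw [Real.fourier_real_eq_integral_exp_smul]
    have := hchar (-(2 * Real.pi * w))
    rw [abs_neg] at this
    rw [← this, hd, integral_withDensity_eq_integral_smul hm]
    congr 1; ext x
    rw [NNReal.smul_def, hf, smul_eq_mul, Complex.real_smul, mul_comm]
    congr 2
    push_cast; ring
  have hFi0 : Integrable (fun w : ℝ => Real.exp (-(c * |2 * Real.pi * w| ^ Y))) :=
    (aux_expint Y c hY hc).comp_mul_left' (R := 2 * Real.pi) (by positivity)
  have hFi : Integrable (𝓕 f) := by
    rw [show 𝓕 f = _ from funext hF]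
    exact hFi0.ofReal
  have hinv := congrFun (hfc.fourierInv_fourier_eq hfi hFi) 0
  rw [Real.fourierInv_eq] at hinv
  simp only [inner_zero_right, AddChar.map_zero_eq_one, one_smul, hF] at hinv
  rw [integral_complex_ofReal, hf] at hinv
  have h := Complex.ofReal_injective hinv
  have hpos : 0 < ∫ w : ℝ, Real.exp (-(c * |2 * Real.pi * w| ^ Y)) := by
    rw [integral_pos_iff_support_of_nonneg (fun _ => (Real.exp_pos _).le) hFi0]
    rw [Function.support_eq_univ (fun x => (Real.exp_pos _).ne')] 
    simp
  rw [h] at hpos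
  exact Real.toNNReal_pos.1 (by exact_mod_cast hpos)

lemma aux_remainder (q : ℝ → ℝ) (hq : Continuous q) :
    (fun ε : ℝ => (∫ x in (-ε)..0, q x * (x + ε)) - q 0 / 2 * ε ^ 2) =o[𝓝 (0:ℝ)] fun ε => ε ^ 2 := by
  rw [isLittleO_iff]
  intro η hη
  obtain ⟨δ, hδ, hqδ⟩ := Metric.continuousAt_iff.1 (hq.continuousAt (x := 0)) η hη
  filter_upwards [Metric.ball_mem_nhds (0:ℝ) hδ] with ε hε
  have hε' : |ε| < δ := by simpa using hε
  have h1 : q 0 / 2 * ε ^ 2 = ∫ x in (-ε)..0, q 0 * (x + ε) := by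
    rw [intervalIntegral.integral_const_mul, intervalIntegral.integral_add (by simp) (by simp)]
    simp
    ring
  rw [h1, ← intervalIntegral.integral_sub (Continuous.intervalIntegrable (by fun_prop) _ _)
    (Continuous.intervalIntegrable (by fun_prop) _ _)]
  have h2 := intervalIntegral.norm_integral_le_of_norm_le_const (a := -ε) (b := 0) (C := η * |ε|)
    (f := fun x => q x * (x + ε) - q 0 * (x + ε)) (fun x hx => by
      have hx' : |x| ≤ |ε| ∧ |x + ε| ≤ |ε| := by
        rcases le_total 0 ε with h | h
        · rw [uIoc_of_le (by linarith)] at hx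
          rw [abs_of_nonneg h, abs_le, abs_le]
          constructor <;> constructor <;> linarith [hx.1, hx.2]
        · rw [uIoc_of_ge (by linarith)] at hx
          rw [abs_of_nonpos h, abs_le, abs_le]
          constructor <;> constructor <;> linarith [hx.1, hx.2]
      have h3 := hqδ (x := x) (by simpa using hx'.1.trans_lt hε')
      rw [Real.dist_eq] at h3
      rw [← sub_mul, norm_mul, Real.norm_eq_abs, Real.norm_eq_abs]
      exact mul_le_mul h3.le hx'.2 (abs_nonneg _) hη.le)
  refine h2.trans (le_of_eq ?_)
  rw [Real.norm_eq_abs, abs_pow, zero_sub, neg_neg]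
  ring

lemma aux_pointwise (q : ℝ → ℝ) (ε : ℝ) :
    ∫ x, q x * (max (x + ε) 0 - max x 0 - ε * (Ioi (0:ℝ)).indicator 1 x)
      = ∫ x in (-ε)..0, q x * (x + ε) := by
  rcases le_total 0 ε with h | h
  · rw [intervalIntegral.integral_of_le (by linarith), ← integral_indicator measurableSet_Ioc]
    congr 1; ext x
    simp only [indicator_apply, mem_Ioc, mem_Ioi, Pi.one_apply]
    by_cases h1 : 0 < x
    · simp [h1, h1.le, not_le.2 h1, max_eq_left (show 0 ≤ x + ε by linarith)]
    · push Not at h1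
      by_cases h2 : -ε < x
      · simp [h1, h2, not_lt.2 h1, max_eq_left (show 0 ≤ x + ε by linarith)]
      · simp [h1, h2, not_lt.2 h1, max_eq_right (show x + ε ≤ 0 by linarith)]
  · rw [intervalIntegral.integral_of_ge (by linarith), ← integral_indicator measurableSet_Ioc,
      ← integral_neg]
    congr 1; ext x
    simp only [indicator_apply, mem_Ioc, mem_Ioi, Pi.one_apply]
    by_cases h1 : 0 < x
    · by_cases h2 : x ≤ -ε
      · simp [h1, h2, h1.le, max_eq_right (show x + ε ≤ 0 by linarith)]
        ring
      · simp [h1, h2, h1.le, max_eq_left (show 0 ≤ x + ε by linarith)]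
    · push Not at h1
      simp [h1, not_lt.2 h1, max_eq_right (show x + ε ≤ 0 by linarith)]

/-- Second-order shift expansion for the positive part of a symmetric stable variable:
`E[(Z+ε)⁺] − E[Z⁺] = ε/2 + (p(0)/2)·ε² + o(ε²)` as `ε → 0`. -/
theorem stmt8
    {Ω : Type} [MeasurableSpace Ω] (P : Measure Ω) [IsProbabilityMeasure P]
    (Y c : ℝ) (hY : Y ∈ Set.Ioo (1:ℝ) 2) (hc : 0 < c)
    (μ : Measure ℝ) [IsProbabilityMeasure μ]
    (hchar : ∀ u : ℝ, (∫ x, Complex.exp (Complex.I * u * x) ∂μ)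
      = (Real.exp (-(c * |u| ^ Y)) : ℂ))
    (p : ℝ → ℝ) (hp : Continuous p)
    (hdens : μ = MeasureTheory.volume.withDensity (fun x => ENNReal.ofReal (p x)))
    (Z : Ω → ℝ) (hZmeas : Measurable Z) (hZlaw : Measure.map Z P = μ) :
    (fun ε => (∫ ω, max (Z ω + ε) 0 ∂P) - (∫ ω, max (Z ω) 0 ∂P)
        - (ε / 2 + (p 0 / 2) * ε ^ 2))
      =o[𝓝 (0:ℝ)] fun ε => ε ^ 2 := by
  have hpos := aux_pos μ Y c hY hc hchar p hp hdens
  have hid := aux_integrable μ Y c hY hchar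
  have hhalf : μ.real (Ioi 0) = 1 / 2 := by
    refine aux_symm μ Y c hchar ?_
    have hac : μ ≪ volume := hdens ▸ withDensity_absolutelyContinuous _ _
    exact hac (by simp)
  have hm : Measurable (fun x => (p x).toNNReal) := by fun_prop
  have hd : μ = volume.withDensity (fun x => (((p x).toNNReal : NNReal) : ENNReal)) := hdens
  have key : ∀ ε : ℝ, (∫ ω, max (Z ω + ε) 0 ∂P) - (∫ ω, max (Z ω) 0 ∂P) - ε / 2
      = ∫ x in (-ε)..0, max (p x) 0 * (x + ε) := by
    intro ε
    have e1 : ∀ ε : ℝ, ∫ ω, max (Z ω + ε) 0 ∂P = ∫ x, max (x + ε) 0 ∂μ := by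
      intro ε
      rw [← hZlaw, integral_map hZmeas.aemeasurable (by fun_prop)]
    have e2 := e1 0
    simp only [add_zero] at e2
    have i1 : Integrable (fun x : ℝ => max (x + ε) 0) μ := (hid.add (integrable_const ε)).pos_part
    have i2 : Integrable (fun x : ℝ => max x 0) μ := hid.pos_part
    have i3 : Integrable (fun x : ℝ => ε * (Ioi (0:ℝ)).indicator 1 x) μ :=
      ((integrable_const (1:ℝ)).indicator measurableSet_Ioi).const_mul ε
    have i12 : Integrable (fun x : ℝ => max (x + ε) 0 - max x 0) μ := i1.sub i2
    have e3 : ε / 2 = ∫ x, ε * (Ioi (0:ℝ)).indicator 1 x ∂μ := by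
      rw [integral_const_mul, integral_indicator_one measurableSet_Ioi, hhalf]
      ring
    rw [e1, e2, e3, ← integral_sub i1 i2, ← integral_sub i12 i3, ← aux_pointwise]
    conv_lhs => rw [hd]
    rw [integral_withDensity_eq_integral_smul hm]
    rfl
  have hr := aux_remainder (fun x => max (p x) 0) (by fun_prop)
  simp only [max_eq_left hpos.le] at hr
  refine hr.congr_left fun ε => ?_
  rw [← key]
  ring
end

section
/- Expected positive part of a symmetric stable variable: if Z is a random variable with law μ, then E[Z⁺] = (1/π)·Γ(1 − 1/Y)·c^{1/Y}, where a⁺ := max(a,0). (In particular, for c = 2·C·Γ(−Y)·|cos(πY/2)| this gives the leading coefficient d₁ of Theorem 3.1.) -/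
open MeasureTheory Filter Topology Set

/-- The constant `∫₀^∞ (1 - cos u) / u² du`. -/
noncomputable def kConst : ENNReal :=
  ∫⁻ u in Ioi (0:ℝ), ENNReal.ofReal ((1 - Real.cos u) / u ^ 2)

lemma scale_pos (x : ℝ) (hx : 0 < x) :
    ∫⁻ u in Ioi (0:ℝ), ENNReal.ofReal ((1 - Real.cos (u * x)) / u ^ 2)
      = ENNReal.ofReal x * kConst := by
  have him : (fun u : ℝ => u * x) '' Ioi 0 = Ioi 0 := by
    ext v
    constructor
    · rintro ⟨u, hu, rfl⟩
      exact mul_pos hu hx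
    · intro hv
      exact ⟨v / x, div_pos hv hx, div_mul_cancel₀ v hx.ne'⟩
  have h := lintegral_image_eq_lintegral_abs_deriv_mul (s := Ioi (0:ℝ)) (f := fun u => u * x)
    (f' := fun _ => x) measurableSet_Ioi
    (fun u _ => by simpa using ((hasDerivAt_id u).mul_const x).hasDerivWithinAt)
    (fun a _ b _ hab => mul_right_cancel₀ hx.ne' hab)
    (fun u => ENNReal.ofReal ((1 - Real.cos u) / u ^ 2))
  rw [him] at h
  rw [kConst, h, ← lintegral_const_mul' _ _ ENNReal.ofReal_ne_top]
  refine setLIntegral_congr_fun measurableSet_Ioi fun u hu => ?_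
  have hu : 0 < u := hu
  rw [abs_of_pos hx, ← ENNReal.ofReal_mul hx.le, ← ENNReal.ofReal_mul hx.le]
  congr 1
  field_simp

lemma scale (x : ℝ) :
    ∫⁻ u in Ioi (0:ℝ), ENNReal.ofReal ((1 - Real.cos (u * x)) / u ^ 2)
      = ENNReal.ofReal |x| * kConst := by
  rcases lt_trichotomy x 0 with h | h | h
  · rw [← scale_pos |x| (abs_pos.2 h.ne)]
    simp only [abs_of_neg h, mul_neg, Real.cos_neg]
  · simp [h]
  · rw [abs_of_pos h, scale_pos x h]

lemma inner_eq (a c : ℝ) (ha : 0 < a) (hc : 0 < c) :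
    ∫⁻ s in Ioc 0 c, ENNReal.ofReal (a * Real.exp (-s * a))
      = ENNReal.ofReal (1 - Real.exp (-(c * a))) := by
  rw [← ofReal_integral_eq_lintegral_ofReal]
  · congr 1
    rw [← intervalIntegral.integral_of_le hc.le]
    rw [intervalIntegral.integral_eq_sub_of_hasDerivAt (f := fun s => -Real.exp (-s * a))]
    · simp; ring
    · intro s _
      have := (((hasDerivAt_id s).neg.mul_const a).exp).neg
      convert! this using 1
      simp; ring
    · exact Continuous.intervalIntegrable (by fun_prop) _ _
  · exact Continuous.integrableOn_Ioc (by fun_prop)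
  · exact ae_of_all _ fun s => by positivity

lemma gamma_int (Y c : ℝ) (hY : 1 < Y) (hc : 0 < c) :
    ∫⁻ u in Ioi (0:ℝ), ENNReal.ofReal ((1 - Real.exp (-(c * u ^ Y))) / u ^ 2)
      = ENNReal.ofReal (Real.Gamma (1 - 1/Y) * c ^ (1/Y)) := by
  have hY0 : 0 < Y := by linarith
  have hinv : 1 / Y < 1 := by rw [div_lt_one hY0]; exact hY
  have hG : 0 < Real.Gamma (1 - 1/Y) := Real.Gamma_pos_of_pos (by linarith)
  have h1 : ∫⁻ u in Ioi (0:ℝ), ENNReal.ofReal ((1 - Real.exp (-(c * u ^ Y))) / u ^ 2)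
      = ∫⁻ u in Ioi (0:ℝ), ∫⁻ s in Ioc 0 c,
          ENNReal.ofReal (u ^ (Y - 2) * Real.exp (-s * u ^ Y)) := by
    refine setLIntegral_congr_fun measurableSet_Ioi fun u hu => ?_
    have hu : 0 < u := hu
    rw [div_eq_inv_mul, ENNReal.ofReal_mul (by positivity),
      ← inner_eq _ _ (Real.rpow_pos_of_pos hu Y) hc,
      ← lintegral_const_mul' _ _ ENNReal.ofReal_ne_top]
    refine lintegral_congr fun s => ?_
    rw [← ENNReal.ofReal_mul (by positivity), Real.rpow_sub hu, Real.rpow_two]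
    congr 1
    field_simp
  rw [h1, lintegral_lintegral_swap (by
    apply Measurable.aemeasurable
    unfold Function.uncurry
    fun_prop)]
  have h2 : ∀ s ∈ Ioc 0 c, ∫⁻ u in Ioi (0:ℝ),
      ENNReal.ofReal (u ^ (Y - 2) * Real.exp (-s * u ^ Y))
      = ENNReal.ofReal (s ^ (1/Y - 1) * ((1/Y) * Real.Gamma (1 - 1/Y))) := by
    intro s hs
    rw [← ofReal_integral_eq_lintegral_ofReal]
    · rw [integral_rpow_mul_exp_neg_mul_rpow hY0 (by linarith) hs.1, mul_assoc]
      congr 3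
      · congr 1; field_simp; ring
      · congr 1; field_simp; ring
    · exact integrableOn_rpow_mul_exp_neg_mul_rpow (by linarith) hY0 hs.1
    · filter_upwards [self_mem_ae_restrict measurableSet_Ioi] with u hu
      have hu : 0 < u := hu
      simp only [Pi.zero_apply]
      positivity
  rw [setLIntegral_congr_fun measurableSet_Ioc h2, ← ofReal_integral_eq_lintegral_ofReal]
  · congr 1
    rw [integral_mul_const, ← intervalIntegral.integral_of_le hc.le,
      integral_rpow (Or.inl (by linarith [one_div_pos.2 hY0]))]
    rw [sub_add_cancel, Real.zero_rpow (one_div_pos.2 hY0).ne']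
    field_simp
    simp
  · apply Integrable.mul_const
    exact (intervalIntegrable_iff_integrableOn_Ioc_of_le hc.le).1
      (intervalIntegral.intervalIntegrable_rpow' (by linarith [one_div_pos.2 hY0]))
  · filter_upwards [self_mem_ae_restrict measurableSet_Ioc] with s hs
    have hs0 : 0 < s := hs.1
    simp only [Pi.zero_apply]
    positivity

lemma abs_moment (Y c : ℝ) (hY : 1 < Y) (hc : 0 < c)
    (μ : Measure ℝ) [IsProbabilityMeasure μ]
    (hchar : ∀ u : ℝ, (∫ x, Complex.exp (Complex.I * u * x) ∂μ)
      = (Real.exp (-(c * |u| ^ Y)) : ℂ)) :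
    (∫⁻ x, ENNReal.ofReal |x| ∂μ) * kConst
      = ENNReal.ofReal (Real.Gamma (1 - 1/Y) * c ^ (1/Y)) := by
  have hcosint : ∀ u : ℝ, Integrable (fun x => Real.cos (u * x)) μ := fun u =>
    Integrable.of_bound (by fun_prop) 1 (ae_of_all _ fun x => Real.abs_cos_le_one _)
  have hcos : ∀ u : ℝ, ∫ x, Real.cos (u * x) ∂μ = Real.exp (-(c * |u| ^ Y)) := by
    intro u
    have h := congrArg Complex.re (hchar u)
    rw [Complex.ofReal_re] at h
    rw [← h, ← RCLike.re_eq_complex_re, ← integral_re]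
    · refine integral_congr_ae (ae_of_all _ fun x => ?_)
      simp [Complex.exp_re]
    · refine Integrable.of_bound (by fun_prop) 1 (ae_of_all _ fun x => ?_)
      rw [Complex.norm_exp]; simp
  rw [← gamma_int Y c hY hc, ← lintegral_mul_const _ (by fun_prop)]
  simp_rw [← scale]
  rw [lintegral_lintegral_swap (by
    apply Measurable.aemeasurable
    unfold Function.uncurry
    fun_prop)]
  refine setLIntegral_congr_fun measurableSet_Ioi fun u hu => ?_
  have hu : 0 < u := hu
  rw [← ofReal_integral_eq_lintegral_ofReal]
  · rw [integral_div, integral_sub (integrable_const _) (hcosint u), hcos, abs_of_pos hu]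
    simp
  · exact ((integrable_const _).sub (hcosint u)).div_const _
  · exact ae_of_all _ fun x => div_nonneg (by linarith [Real.cos_le_one (u * x)]) (by positivity)

open ProbabilityTheory in
lemma gauss_abs : ∫⁻ x, ENNReal.ofReal |x| ∂(gaussianReal 0 1)
    = ENNReal.ofReal (2 / √(2 * Real.pi)) := by
  rw [← ofReal_integral_eq_lintegral_ofReal]
  · rw [integral_gaussianReal_eq_integral_smul one_ne_zero]
    congr 1
    have h1 : ∀ x : ℝ, gaussianPDFReal 0 1 x • |x|
        = (fun y => (√(2 * Real.pi))⁻¹ * (y ^ (1:ℝ) * Real.exp (-(1/2) * y ^ (2:ℝ)))) |x| := by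
      intro x
      simp only [gaussianPDFReal, smul_eq_mul, Real.rpow_one, Real.rpow_two, sq_abs]
      simp
      ring_nf
    simp_rw [h1]
    rw [integral_comp_abs (f := fun y => (√(2 * Real.pi))⁻¹ *
      (y ^ (1:ℝ) * Real.exp (-(1/2) * y ^ (2:ℝ)))), integral_const_mul,
      integral_rpow_mul_exp_neg_mul_rpow two_pos (by norm_num) (by norm_num)]
    norm_num
    field_simp
  · exact ((memLp_id_gaussianReal 1).integrable le_rfl).abs
  · exact ae_of_all _ fun x => abs_nonneg x

open ProbabilityTheory in
lemma kConst_eq : kConst = ENNReal.ofReal (Real.pi / 2) := by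
  have h := abs_moment 2 (1/2) one_lt_two (by norm_num) (gaussianReal 0 1) (by
    intro u
    have := charFun_gaussianReal (μ := 0) (v := 1) u
    rw [charFun_apply_real] at this
    rw [Real.rpow_two, sq_abs]
    convert this using 1
    · refine integral_congr_ae (ae_of_all _ fun x => ?_)
      simp only
      congr 1
      ring
    · push_cast
      congr 1
      simp
      ring)
  rw [gauss_abs, mul_comm] at h
  have hpos : 0 < 2 / √(2 * Real.pi) := by positivity
  rw [← ENNReal.mul_left_inj (c := ENNReal.ofReal (2 / √(2 * Real.pi)))
    (by simpa using hpos) ENNReal.ofReal_ne_top, h, ← ENNReal.ofReal_mul (by positivity)]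
  congr 1
  rw [show (1:ℝ) - 1/2 = 1/2 by norm_num, Real.Gamma_one_half_eq, ← Real.sqrt_eq_rpow,
    Real.sqrt_mul two_pos.le, Real.sqrt_div one_pos.le, Real.sqrt_one]
  have h2 : 0 < √Real.pi := by positivity
  field_simp
  rw [Real.sq_sqrt Real.pi_pos.le]

/-- Expected positive part of a symmetric `Y`-stable variable:
if `Z` has law `μ` with characteristic function `exp(−c·|u|^Y)`, then
`E[Z⁺] = (1/π)·Γ(1 − 1/Y)·c^(1/Y)`. -/
theorem stmt10
    {Ω : Type} [MeasurableSpace Ω] (P : Measure Ω) [IsProbabilityMeasure P]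
    (Y c : ℝ) (hY : Y ∈ Set.Ioo (1:ℝ) 2) (hc : 0 < c)
    (μ : Measure ℝ) [IsProbabilityMeasure μ]
    (hchar : ∀ u : ℝ, (∫ x, Complex.exp (Complex.I * u * x) ∂μ)
      = (Real.exp (-(c * |u| ^ Y)) : ℂ))
    (Z : Ω → ℝ) (hZmeas : Measurable Z) (hZlaw : Measure.map Z P = μ) :
    (∫ ω, max (Z ω) 0 ∂P) = (1 / Real.pi) * Real.Gamma (1 - 1/Y) * c ^ (1/Y) := by
  have hY0 : 0 < Y := by linarith [hY.1]
  have hinv : 1 / Y < 1 := by rw [div_lt_one hY0]; exact hY.1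
  have hG : 0 < Real.Gamma (1 - 1/Y) := Real.Gamma_pos_of_pos (by linarith)
  have hm := abs_moment Y c hY.1 hc μ hchar
  have hk0 : kConst ≠ 0 := by
    rw [kConst_eq]; simpa using Real.pi_pos
  have hfin : ∫⁻ x, ENNReal.ofReal |x| ∂μ ≠ ⊤ := by
    intro h
    rw [h, ENNReal.top_mul hk0] at hm
    exact ENNReal.ofReal_ne_top hm.symm
  have hint : Integrable (fun x : ℝ => |x|) μ :=
    ⟨by fun_prop, by
      rw [hasFiniteIntegral_iff_ofReal (ae_of_all _ fun x => abs_nonneg x)]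
      exact hfin.lt_top⟩
  rw [← ofReal_integral_eq_lintegral_ofReal hint (ae_of_all _ fun x => abs_nonneg x), kConst_eq,
    ← ENNReal.ofReal_mul (integral_nonneg fun x => abs_nonneg x),
    ENNReal.ofReal_eq_ofReal_iff
      (mul_nonneg (integral_nonneg fun x => abs_nonneg x) (by positivity)) (by positivity)] at hm
  have hid : Integrable (fun x : ℝ => x) μ := by
    refine hint.mono (by fun_prop) (ae_of_all _ fun x => by simp)
  have hsymm : Measure.map (fun x : ℝ => -x) μ = μ := by
    have : IsProbabilityMeasure (Measure.map (fun x : ℝ => -x) μ) :=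
      Measure.isProbabilityMeasure_map (by fun_prop)
    have hcf : ∀ t, charFun μ t = (Real.exp (-(c * |t| ^ Y)) : ℂ) := by
      intro t
      rw [← hchar, charFun_apply_real]
      refine integral_congr_ae (ae_of_all _ fun x => ?_)
      simp only
      congr 1
      ring
    refine Measure.ext_of_charFun (funext fun t => ?_)
    rw [hcf t, ← abs_neg, ← hcf (-t), charFun_apply_real, charFun_apply_real,
      integral_map (by fun_prop) (by fun_prop)]
    simp
  have hzero : ∫ x, x ∂μ = 0 := by
    have h : ∫ x, x ∂(Measure.map (fun x : ℝ => -x) μ) = ∫ x, -x ∂μ :=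
      integral_map (by fun_prop) (by fun_prop)
    rw [hsymm, integral_neg] at h
    linarith
  have hpos : ∫ ω, max (Z ω) 0 ∂P = ∫ x, max x 0 ∂μ := by
    rw [← hZlaw, integral_map hZmeas.aemeasurable (by fun_prop)]
  have hsplit : ∫ x, max x 0 ∂μ = (∫ x, |x| ∂μ + ∫ x, x ∂μ) / 2 := by
    rw [← integral_add hint hid, ← integral_div]
    refine integral_congr_ae (ae_of_all _ fun x => ?_)
    simp only
    rcases le_total x 0 with h | h
    · rw [max_eq_right h, abs_of_nonpos h]; ring
    · rw [max_eq_left h, abs_of_nonneg h]; ring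
  rw [hpos, hsplit, hzero, add_zero, mul_assoc, ← hm]
  have := Real.pi_pos
  field_simp
end
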